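/- For all integers k ≥ 1 and t ≥ 1, every (even hole, pyramid, K_t, S_{k,k,k})-free graph G has treewidth at most (t−1)·(R(t, 4k−1))^3 − 1, where R(t, 4k−1) is the Ramsey number. -/

import Mathlib

open SimpleGraph

variable {V : Type} [Fintype V] [DecidableEq V]

/-- `p` is a chordless (induced) path in `G`: a path such that the only edges of `G`
between its vertices are the edges of the path. -/
def IsInducedPathW (G : SimpleGraph V) {a b : V} (p : G.Walk a b) : Prop :=
  p.IsPath ∧ ∀ u v : V, u ∈ p.support → v ∈ p.support → G.Adj u v → p.toSubgraph.Adj u v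

/-- A hole of length `n` in `G`: an induced (chordless) cycle of length `n ≥ 4`,
given by an injection of `ZMod n` into `G` whose adjacencies are exactly the consecutive ones. -/
def IsHoleEmb (G : SimpleGraph V) (n : ℕ) (f : ZMod n → V) : Prop :=
  4 ≤ n ∧ Function.Injective f ∧
    ∀ i j : ZMod n, G.Adj (f i) (f j) ↔ (j = i + 1 ∨ i = j + 1)

/-- `G` contains an even hole (induced even cycle of length at least 4). -/
def ContainsEvenHole (G : SimpleGraph V) : Prop :=
  ∃ (n : ℕ) (f : ZMod n → V), IsHoleEmb G n f ∧ Even n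

/-- `G` contains a square (hole of length 4). -/
def ContainsSquare (G : SimpleGraph V) : Prop :=
  ∃ f : ZMod 4 → V, IsHoleEmb G 4 f

/-- `G` contains a theta as an induced subgraph: three internally vertex-disjoint chordless
paths from `a` to `b`, each of length at least 2, with no edges between the paths other than
those incident to `a` or `b` specified by the paths. -/
def ContainsTheta (G : SimpleGraph V) : Prop :=
  ∃ (a b : V) (p₁ p₂ p₃ : G.Walk a b),
    (IsInducedPathW G p₁ ∧ IsInducedPathW G p₂ ∧ IsInducedPathW G p₃) ∧
    (2 ≤ p₁.length ∧ 2 ≤ p₂.length ∧ 2 ≤ p₃.length) ∧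
    (∀ w : V, ((w ∈ p₁.support ∧ w ∈ p₂.support) ∨ (w ∈ p₁.support ∧ w ∈ p₃.support) ∨
          (w ∈ p₂.support ∧ w ∈ p₃.support)) → (w = a ∨ w = b)) ∧
    (∀ u w : V, u ≠ a → u ≠ b → w ≠ a → w ≠ b →
      ((u ∈ p₁.support ∧ w ∈ p₂.support) ∨ (u ∈ p₁.support ∧ w ∈ p₃.support) ∨
       (u ∈ p₂.support ∧ w ∈ p₃.support)) → ¬G.Adj u w)

/-- `G` contains a prism as an induced subgraph. -/
def ContainsPrism (G : SimpleGraph V) : Prop :=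
  ∃ (a₁ b₁ a₂ b₂ a₃ b₃ : V) (p₁ : G.Walk a₁ b₁) (p₂ : G.Walk a₂ b₂) (p₃ : G.Walk a₃ b₃),
    (IsInducedPathW G p₁ ∧ IsInducedPathW G p₂ ∧ IsInducedPathW G p₃) ∧
    (1 ≤ p₁.length ∧ 1 ≤ p₂.length ∧ 1 ≤ p₃.length) ∧
    (G.Adj a₁ a₂ ∧ G.Adj a₂ a₃ ∧ G.Adj a₁ a₃) ∧
    (G.Adj b₁ b₂ ∧ G.Adj b₂ b₃ ∧ G.Adj b₁ b₃) ∧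
    (∀ w : V, ¬(w ∈ p₁.support ∧ w ∈ p₂.support) ∧ ¬(w ∈ p₁.support ∧ w ∈ p₃.support) ∧
          ¬(w ∈ p₂.support ∧ w ∈ p₃.support)) ∧
    (∀ u w : V, u ∈ p₁.support → w ∈ p₂.support → G.Adj u w →
      (u = a₁ ∧ w = a₂) ∨ (u = b₁ ∧ w = b₂)) ∧
    (∀ u w : V, u ∈ p₁.support → w ∈ p₃.support → G.Adj u w →
      (u = a₁ ∧ w = a₃) ∨ (u = b₁ ∧ w = b₃)) ∧
    (∀ u w : V, u ∈ p₂.support → w ∈ p₃.support → G.Adj u w →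
      (u = a₂ ∧ w = a₃) ∨ (u = b₂ ∧ w = b₃))

/-- `G` contains a pyramid as an induced subgraph. -/
def ContainsPyramid (G : SimpleGraph V) : Prop :=
  ∃ (a b₁ b₂ b₃ : V) (p₁ : G.Walk a b₁) (p₂ : G.Walk a b₂) (p₃ : G.Walk a b₃),
    (IsInducedPathW G p₁ ∧ IsInducedPathW G p₂ ∧ IsInducedPathW G p₃) ∧
    (1 ≤ p₁.length ∧ 1 ≤ p₂.length ∧ 1 ≤ p₃.length) ∧
    ((2 ≤ p₁.length ∧ 2 ≤ p₂.length) ∨ (2 ≤ p₁.length ∧ 2 ≤ p₃.length) ∨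
     (2 ≤ p₂.length ∧ 2 ≤ p₃.length)) ∧
    (G.Adj b₁ b₂ ∧ G.Adj b₂ b₃ ∧ G.Adj b₁ b₃) ∧
    (∀ w : V, ((w ∈ p₁.support ∧ w ∈ p₂.support) ∨ (w ∈ p₁.support ∧ w ∈ p₃.support) ∨
          (w ∈ p₂.support ∧ w ∈ p₃.support)) → w = a) ∧
    (∀ u w : V, u ∈ p₁.support → w ∈ p₂.support → u ≠ a → w ≠ a → G.Adj u w →
      u = b₁ ∧ w = b₂) ∧
    (∀ u w : V, u ∈ p₁.support → w ∈ p₃.support → u ≠ a → w ≠ a → G.Adj u w →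
      u = b₁ ∧ w = b₃) ∧
    (∀ u w : V, u ∈ p₂.support → w ∈ p₃.support → u ≠ a → w ≠ a → G.Adj u w →
      u = b₂ ∧ w = b₃)

/-- `G` contains the cube as an induced subgraph: a hole of length 6 together with
two non-adjacent vertices `u, v` outside it, `u` adjacent to the even positions and
`v` adjacent to the odd positions. -/
def ContainsCube (G : SimpleGraph V) : Prop :=
  ∃ (f : ZMod 6 → V) (u v : V), IsHoleEmb G 6 f ∧
    u ∉ Set.range f ∧ v ∉ Set.range f ∧ ¬G.Adj u v ∧
    (∀ m : ZMod 6, G.Adj u (f m) ↔ (m = 0 ∨ m = 2 ∨ m = 4)) ∧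
    (∀ m : ZMod 6, G.Adj v (f m) ↔ (m = 1 ∨ m = 3 ∨ m = 5))

/-- `G` contains an even wheel: a hole plus a vertex outside it having at least 3 and
an even number of neighbors on the hole. -/
def ContainsEvenWheel (G : SimpleGraph V) : Prop :=
  ∃ (n : ℕ) (f : ZMod n → V) (u : V), IsHoleEmb G n f ∧ u ∉ Set.range f ∧
    3 ≤ {m : ZMod n | G.Adj u (f m)}.ncard ∧ Even {m : ZMod n | G.Adj u (f m)}.ncard

/-- `G` contains a butterfly: a wheel `(H,v)` with `N_H(v) = {a,b,c,d}`,
`ab, cd ∈ E(G)` and `bc, da ∉ E(G)`. -/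
def ContainsButterfly (G : SimpleGraph V) : Prop :=
  ∃ (n : ℕ) (f : ZMod n → V) (u : V), IsHoleEmb G n f ∧ u ∉ Set.range f ∧
    ∃ i j : ZMod n, i ≠ j ∧ i ≠ j + 1 ∧ i + 1 ≠ j ∧ i + 1 ≠ j + 1 ∧
      ¬G.Adj (f (i + 1)) (f j) ∧ ¬G.Adj (f (j + 1)) (f i) ∧
      (∀ m : ZMod n, G.Adj u (f m) ↔ (m = i ∨ m = i + 1 ∨ m = j ∨ m = j + 1))

/-- A 2-wheel in `G`: a hole `f` together with two distinct centers `u, v` outside the hole,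
each having at least three neighbors on the hole. -/
def Is2WheelCfg (G : SimpleGraph V) (n : ℕ) (f : ZMod n → V) (u v : V) : Prop :=
  IsHoleEmb G n f ∧ u ≠ v ∧ u ∉ Set.range f ∧ v ∉ Set.range f ∧
  3 ≤ {m : ZMod n | G.Adj u (f m)}.ncard ∧ 3 ≤ {m : ZMod n | G.Adj v (f m)}.ncard

/-- The 2-wheel `(f, {u,v})` is nested: the hole splits at `f i` and `f (i+d)` into two arcs,
with all neighbors of `u` on one arc and all neighbors of `v` on the other. -/
def NestedCfg (G : SimpleGraph V) (n : ℕ) (f : ZMod n → V) (u v : V) : Prop :=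
  ∃ (i : ZMod n) (d : ℕ), 1 ≤ d ∧ d < n ∧
    (∀ m : ZMod n, G.Adj u (f m) → ∃ e : ℕ, e ≤ d ∧ m = i + (e : ZMod n)) ∧
    (∀ m : ZMod n, G.Adj v (f m) → ∃ e : ℕ, e ≤ n - d ∧ m = i + (d : ZMod n) + (e : ZMod n))

/-- The 2-wheel `(f, {u,v})` is the cube. -/
def CubeCfg (G : SimpleGraph V) (n : ℕ) (f : ZMod n → V) (u v : V) : Prop :=
  n = 6 ∧ ∃ i : ZMod n,
    (∀ m : ZMod n, G.Adj u (f m) ↔ (m = i ∨ m = i + 2 ∨ m = i + 4)) ∧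
    (∀ m : ZMod n, G.Adj v (f m) ↔ (m = i + 1 ∨ m = i + 3 ∨ m = i + 5))

/-- The 2-wheel `(f, {u,v})` is a cousin wheel: `N_H(u) = {h₁,h₂,h₃}` and
`N_H(v) = {h₂,h₃,h₄}` for four consecutive vertices of the hole (or with `u, v` swapped). -/
def CousinCfg (G : SimpleGraph V) (n : ℕ) (f : ZMod n → V) (u v : V) : Prop :=
  (∃ i : ZMod n,
    (∀ m : ZMod n, G.Adj u (f m) ↔ (m = i ∨ m = i + 1 ∨ m = i + 2)) ∧
    (∀ m : ZMod n, G.Adj v (f m) ↔ (m = i + 1 ∨ m = i + 2 ∨ m = i + 3))) ∨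
  (∃ i : ZMod n,
    (∀ m : ZMod n, G.Adj v (f m) ↔ (m = i ∨ m = i + 1 ∨ m = i + 2)) ∧
    (∀ m : ZMod n, G.Adj u (f m) ↔ (m = i + 1 ∨ m = i + 2 ∨ m = i + 3)))

/-- A `u`-sector of the hole `f`: a subpath from `f i` to `f (i+d)` (`1 ≤ d < n`)
whose two ends are adjacent to `u` and whose internal vertices are not. -/
def IsSector (G : SimpleGraph V) (n : ℕ) (f : ZMod n → V) (u : V) (i : ZMod n) (d : ℕ) : Prop :=
  1 ≤ d ∧ d < n ∧ G.Adj u (f i) ∧ G.Adj u (f (i + (d : ZMod n))) ∧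
    ∀ m : ℕ, 0 < m → m < d → ¬G.Adj u (f (i + (m : ZMod n)))

/-- The class 𝒞: (theta, prism, pyramid, butterfly)-free graphs in which every 2-wheel
with non-adjacent centers is a nested wheel or a cousin wheel. -/
def InClassC (G : SimpleGraph V) : Prop :=
  ¬ContainsTheta G ∧ ¬ContainsPrism G ∧ ¬ContainsPyramid G ∧ ¬ContainsButterfly G ∧
  ∀ (n : ℕ) (f : ZMod n → V) (u v : V), Is2WheelCfg G n f u v → ¬G.Adj u v →
    (NestedCfg G n f u v ∨ CousinCfg G n f u v)

/-- `G` contains `S_{k,k,k}` as an induced subgraph: a root `r` and three legs of `k` edges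
each, with no other adjacencies among these vertices. -/
def ContainsSpider (G : SimpleGraph V) (k : ℕ) : Prop :=
  ∃ (r : V) (f : Fin 3 → Fin k → V),
    (∀ (j : Fin 3) (m : Fin k), f j m ≠ r) ∧
    (∀ (j₁ : Fin 3) (m₁ : Fin k) (j₂ : Fin 3) (m₂ : Fin k),
      f j₁ m₁ = f j₂ m₂ → j₁ = j₂ ∧ m₁ = m₂) ∧
    (∀ (j : Fin 3) (m : Fin k), G.Adj r (f j m) ↔ (m : ℕ) = 0) ∧
    (∀ (j₁ : Fin 3) (m₁ : Fin k) (j₂ : Fin 3) (m₂ : Fin k),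
      G.Adj (f j₁ m₁) (f j₂ m₂) ↔
        (j₁ = j₂ ∧ ((m₁ : ℕ) + 1 = (m₂ : ℕ) ∨ (m₂ : ℕ) + 1 = (m₁ : ℕ))))

/-- A `k`-span-wheel in `G`: a hole `f` of length `n`, with `x = f 0` and `y = f p`
non-adjacent, the two paths `P_A = f 0, f 1, …, f p` and `P_B = f 0, f (n-1), …, f p`,
and centers `c 0, …, c (k-1)` outside the hole such that `{c i} ∪ {x,y}` is independent,
every center has at least three neighbors on the hole and neighbors in the interiors of
both `P_A` and `P_B`, and the neighbors of the centers appear along both `P_A` and `P_B`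
(from `x` to `y`) in the order of the centers. -/
def IsSpanWheel (G : SimpleGraph V) (k n p : ℕ) (f : ZMod n → V) (c : Fin k → V) : Prop :=
  IsHoleEmb G n f ∧
  2 ≤ p ∧ p ≤ n - 2 ∧
  ¬G.Adj (f 0) (f (p : ZMod n)) ∧
  Function.Injective c ∧
  (∀ i : Fin k, c i ∉ Set.range f) ∧
  (∀ i j : Fin k, i ≠ j → ¬G.Adj (c i) (c j)) ∧
  (∀ i : Fin k, ¬G.Adj (c i) (f 0)) ∧
  (∀ i : Fin k, ¬G.Adj (c i) (f (p : ZMod n))) ∧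
  (∀ i : Fin k, 3 ≤ {m : ZMod n | G.Adj (c i) (f m)}.ncard) ∧
  (∀ i : Fin k, ∃ a : ℕ, 0 < a ∧ a < p ∧ G.Adj (c i) (f (a : ZMod n))) ∧
  (∀ i : Fin k, ∃ b : ℕ, p < b ∧ b < n ∧ G.Adj (c i) (f (b : ZMod n))) ∧
  (∀ i j : Fin k, i < j → ∀ a₁ a₂ : ℕ, a₁ ≤ p → a₂ ≤ p →
    G.Adj (c i) (f (a₁ : ZMod n)) → G.Adj (c j) (f (a₂ : ZMod n)) → a₁ ≤ a₂) ∧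
  (∀ i j : Fin k, i < j → ∀ b₁ b₂ : ℕ, p ≤ b₁ → b₁ ≤ n → p ≤ b₂ → b₂ ≤ n →
    G.Adj (c i) (f (b₁ : ZMod n)) → G.Adj (c j) (f (b₂ : ZMod n)) → b₂ ≤ b₁)

/-- `X` separates `s` from `t` in `G`: neither is in `X` and every walk from `s` to `t`
meets `X`. -/
def Separates (G : SimpleGraph V) (X : Set V) (s t : V) : Prop :=
  s ∉ X ∧ t ∉ X ∧ ∀ p : G.Walk s t, ∃ w ∈ p.support, w ∈ X

/-- `X` is a minimal separator of `G`: for some pair `s, t` it is an inclusion-wise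
minimal `st`-separator. -/
def MinSeparator (G : SimpleGraph V) (X : Set V) : Prop :=
  ∃ s t : V, Separates G X s t ∧ ∀ Y ⊆ X, Separates G Y s t → Y = X

/-- `A` is a connected component of `G ∖ C` that is full to `C`. -/
def IsFullComponent (G : SimpleGraph V) (C A : Set V) : Prop :=
  A.Nonempty ∧ Disjoint A C ∧ (G.induce A).Connected ∧
  (∀ a ∈ A, ∀ w : V, G.Adj a w → w ∈ A ∪ C) ∧
  (∀ x ∈ C, ∃ a ∈ A, G.Adj x a)

/-- A tree decomposition of `G` with tree `T` and bags `B`. -/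
def IsTreeDecomp (G : SimpleGraph V) {ι : Type} (T : SimpleGraph ι) (B : ι → Finset V) : Prop :=
  T.IsTree ∧
  (∀ v : V, ∃ i, v ∈ B i) ∧
  (∀ u v : V, G.Adj u v → ∃ i, u ∈ B i ∧ v ∈ B i) ∧
  (∀ (v : V) (i j : ι), v ∈ B i → v ∈ B j →
    ∀ (p : T.Walk i j), p.IsPath → ∀ x ∈ p.support, v ∈ B x)

/-- The treewidth of a finite graph: the least `w` such that `G` has a tree decomposition
all of whose bags have size at most `w + 1`. -/
noncomputable def treewidth (G : SimpleGraph V) : ℕ :=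
  sInf {w : ℕ | ∃ (m : ℕ) (T : SimpleGraph (Fin m)) (B : Fin m → Finset V),
    IsTreeDecomp G T B ∧ ∀ i, (B i).card ≤ w + 1}

/-- A graph is chordal iff it has no hole. -/
def IsChordal (G : SimpleGraph V) : Prop :=
  ¬∃ (n : ℕ) (f : ZMod n → V), IsHoleEmb G n f

/-- `H` is obtained from `G` by a minimal fill-in (minimal chordal completion). -/
def IsMinimalChordalCompletion (G H : SimpleGraph V) : Prop :=
  G ≤ H ∧ IsChordal H ∧ ∀ H' : SimpleGraph V, G ≤ H' → H' ≤ H → IsChordal H' → H' = H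

/-- `Ω` is a potential maximal clique of `G`: a maximal clique of some minimal chordal
completion of `G`. -/
def IsPMC (G : SimpleGraph V) (Ω : Set V) : Prop :=
  ∃ H : SimpleGraph V, IsMinimalChordalCompletion G H ∧ H.IsClique Ω ∧
    ∀ Ω' : Set V, H.IsClique Ω' → Ω ⊆ Ω' → Ω' = Ω

/-- `n` satisfies the Ramsey property for `(t, k)`: every graph on `n` vertices has a
clique of size `t` or an independent set of size `k`. -/
def RamseyProp (n t k : ℕ) : Prop :=
  ∀ G : SimpleGraph (Fin n),
    (∃ S : Finset (Fin n), G.IsNClique t S) ∨ (∃ S : Finset (Fin n), Gᶜ.IsNClique k S)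

/-- The Ramsey number `R(t, k)`. -/
noncomputable def ramseyNumber (t k : ℕ) : ℕ := sInf {n : ℕ | RamseyProp n t k}

/-!
Let `A`, `B` be anticomplete connected sets and `S` an independent set all of whose vertices attach
to both. Each of `A`, `B` may be shrunk to an induced path, its spine, whose ends are private
neighbors of vertices of `S`. As there are no even holes and pyramids, all but at most two vertices
of `S` have two nonadjacent neighbors on one of the spines, and the vertices that do so on a given
spine have consecutive contact ranges along it. If there are `2k - 1` of these, then the middle one
roots an `S_{k,k,k}`, so `|S| < 4k - 1`; by Ramsey's theorem any set attached to both `A` and `B`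
has fewer than `R := R(t, 4k - 1)` vertices.

A tree decomposition with the fewest pairs of vertices sharing a bag has bags `Ω` that behave like
potential maximal cliques: two nonadjacent vertices `u`, `v` of `Ω` attach to a common component of
`G ∖ Ω`, and no component sees all of a largest bag. By the bound above, each component sees fewer
than `R` vertices of `Ω`, and fewer than `R` vertices hit every component attached to both `u` and
`v` and contain the vertices of `Ω` that attach to none of these, so `|Ω| ≤ R (R - 1)` unless `Ω`
is a clique.
-/

section Connectivity

variable {W : Type*} {G : SimpleGraph W} {A X Y X' Y' P : Set W} {b c x : W}

/-- The vertex set `A` is nonempty and induces a connected subgraph of `G`. -/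
def ConnectedOn (G : SimpleGraph W) (A : Set W) : Prop := (G.induce A).Connected

/-- `X` and `Y` are disjoint and no edge of `G` joins them. -/
def Anticomplete (G : SimpleGraph W) (X Y : Set W) : Prop :=
  ∀ x ∈ X, ∀ y ∈ Y, x ≠ y ∧ ¬G.Adj x y

/-- The vertex `x` attaches to `X`, that is, has at least one neighbor in it. -/
def HasNeighborIn (G : SimpleGraph W) (x : W) (X : Set W) : Prop := ∃ a ∈ X, G.Adj x a

/-- `X` and `Y` are disjoint, and `bc` is the only edge that may join them. -/
def OnlyCrossEdge (G : SimpleGraph W) (X Y : Set W) (b c : W) : Prop :=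
  ∀ u ∈ X, ∀ v ∈ Y, u ≠ v ∧ (G.Adj u v → u = b ∧ v = c)

theorem Anticomplete.symm (h : Anticomplete G X Y) : Anticomplete G Y X :=
  fun y hy x hx => ⟨(h x hx y hy).1.symm, fun e => (h x hx y hy).2 e.symm⟩

theorem Anticomplete.mono (h : Anticomplete G X Y) (hX : X' ⊆ X) (hY : Y' ⊆ Y) :
    Anticomplete G X' Y' :=
  fun x hx y hy => h x (hX hx) y (hY hy)

theorem Anticomplete.not_hasNeighborIn (h : Anticomplete G X Y) (hx : x ∈ X) :
    ¬HasNeighborIn G x Y :=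
  fun ⟨y, hy, e⟩ => (h x hx y hy).2 e

theorem OnlyCrossEdge.symm (h : OnlyCrossEdge G X Y b c) : OnlyCrossEdge G Y X c b :=
  fun v hv u hu => ⟨(h u hu v hv).1.symm, fun e => ((h u hu v hv).2 e.symm).symm⟩

theorem HasNeighborIn.mono (h : HasNeighborIn G x X) (hXY : X ⊆ Y) : HasNeighborIn G x Y :=
  let ⟨a, ha, e⟩ := h
  ⟨a, hXY ha, e⟩

theorem connectedOn_singleton (a : W) : ConnectedOn G {a} :=
  { preconnected := Preconnected.of_subsingleton, nonempty := ⟨⟨a, rfl⟩⟩ }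

theorem ConnectedOn.nonempty (h : ConnectedOn G A) : A.Nonempty :=
  Set.nonempty_coe_sort.1 (SimpleGraph.Connected.nonempty h)

theorem ConnectedOn.union_of_mem (hX : ConnectedOn G X) (hY : ConnectedOn G Y) (hxX : x ∈ X)
    (hxY : x ∈ Y) : ConnectedOn G (X ∪ Y) :=
  induce_union_connected hX.preconnected hY.preconnected ⟨x, hxX, hxY⟩

theorem ConnectedOn.insert (hA : ConnectedOn G A) (h : HasNeighborIn G x A) :
    ConnectedOn G (insert x A) :=
  let ⟨_, ha, e⟩ := h
  connected_induce_union (connectedOn_singleton x).preconnected hA.preconnected rfl ha e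

theorem connectedOn_insert_sUnion {F : Set (Set W)}
    (h : ∀ D ∈ F, ConnectedOn G D ∧ HasNeighborIn G x D) :
    ConnectedOn G (insert x (⋃₀ F)) := by
  refine induce_connected_of_patches x (Or.inl rfl) ?_
  rintro v (rfl | ⟨D, hD, hv⟩)
  · exact ⟨{v}, Set.singleton_subset_iff.2 (Or.inl rfl), rfl, rfl, .rfl⟩
  · exact ⟨insert x D, Set.insert_subset_insert (Set.subset_sUnion_of_mem hD), Or.inl rfl,
      Or.inr hv, ((h D hD).1.insert (h D hD).2).preconnected _ _⟩

theorem ConnectedOn.exists_boundary_adj (hA : ConnectedOn G A) (hP : (A ∩ P).Nonempty)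
    (hAP : ¬A ⊆ P) : ∃ a ∈ A, a ∈ P ∧ ∃ b ∈ A, b ∉ P ∧ G.Adj a b := by
  obtain ⟨u, hu, huP⟩ := hP
  obtain ⟨v, hv, hvP⟩ := Set.not_subset.1 hAP
  obtain ⟨p⟩ := hA.preconnected ⟨u, hu⟩ ⟨v, hv⟩
  obtain ⟨d, -, hd, hd'⟩ := p.exists_boundary_dart (Subtype.val ⁻¹' P) huP hvP
  exact ⟨d.fst, d.fst.2, hd, d.snd, d.snd.2, hd', d.adj⟩

theorem ConnectedOn.subset_of_closed (hA : ConnectedOn G A) (hP : (A ∩ P).Nonempty)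
    (hclosed : ∀ a ∈ P, ∀ b ∈ A, G.Adj a b → b ∈ P) : A ⊆ P := by
  by_contra hAP
  obtain ⟨a, -, haP, b, hbA, hbP, e⟩ := hA.exists_boundary_adj hP hAP
  exact hbP (hclosed a haP b hbA e)

theorem ConnectedOn.exists_component_superset [Finite W] (hA : ConnectedOn G A) (hAX : A ⊆ X) :
    ∃ C, A ⊆ C ∧ C ⊆ X ∧ ConnectedOn G C ∧ ∀ c ∈ C, ∀ x ∈ X, G.Adj c x → x ∈ C := by
  obtain ⟨C, hAC, hC⟩ :=
    (Set.toFinite {C | C ⊆ X ∧ ConnectedOn G C}).exists_le_maximal ⟨hAX, hA⟩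
  refine ⟨C, hAC, hC.1.1, hC.1.2, fun c hc x hx e => ?_⟩
  exact hC.2 ⟨Set.insert_subset hx hC.1.1, hC.1.2.insert ⟨c, hc, e.symm⟩⟩
    (Set.subset_insert _ _) (Set.mem_insert _ _)

theorem ConnectedOn.exists_notMem_diff_singleton [Finite W] (hA : ConnectedOn G A)
    (hP : ConnectedOn G P) (hPA : P ⊂ A) : ∃ w ∈ A, w ∉ P ∧ ConnectedOn G (A \ {w}) := by
  obtain ⟨C, hPC, ⟨hCA, hCc⟩, hmax⟩ :=
    (Set.toFinite {C | C ⊂ A ∧ ConnectedOn G C}).exists_le_maximal ⟨hPA, hP⟩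
  obtain ⟨c, hc⟩ := hCc.nonempty
  obtain ⟨a, -, haC, b, hb, hbC, e⟩ := hA.exists_boundary_adj ⟨c, hCA.1 hc, hc⟩ hCA.2
  have hinsert : Insert.insert b C = A := by
    by_contra hne
    exact hbC (hmax ⟨(Set.insert_subset hb hCA.1).ssubset_of_ne hne,
      hCc.insert ⟨a, haC, e.symm⟩⟩ (Set.subset_insert _ _) (Set.mem_insert _ _))
  refine ⟨b, hb, fun h => hbC (hPC h), ?_⟩
  rwa [← hinsert, Set.insert_sdiff_self_of_notMem hbC]

end Connectivity

section InducedPaths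

variable {W : Type*} {G : SimpleGraph W} {A X P : Set W} {p q r : ℕ → W} {n m s i j : ℕ}
  {u v x y : W}

/-- `p 0, p 1, …, p n` is a chordless path of `G` with `n` edges. The values of `p` beyond `n` are
irrelevant; indexing by all of `ℕ` makes subpaths and reversals easy to write down. -/
structure IsInducedPath (G : SimpleGraph W) (p : ℕ → W) (n : ℕ) : Prop where
  inj : ∀ i j, i ≤ n → j ≤ n → p i = p j → i = j
  adj : ∀ i j, i ≤ n → j ≤ n → (G.Adj (p i) (p j) ↔ j = i + 1 ∨ i = j + 1)

theorem apply_mem_image_Icc {t : ℕ} (hi : i ≤ t) (hj : t ≤ j) : p t ∈ p '' Set.Icc i j :=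
  Set.mem_image_of_mem p ⟨hi, hj⟩

theorem connectedOn_image_Icc (hij : i ≤ j) (h : ∀ t, i ≤ t → t < j → G.Adj (p t) (p (t + 1))) :
    ConnectedOn G (p '' Set.Icc i j) := by
  induction j, hij using Nat.le_induction with
  | base => simpa only [Set.Icc_self, Set.image_singleton] using connectedOn_singleton (p i)
  | succ j hij ih =>
    rw [← Order.succ_eq_add_one, Order.Icc_succ_right (hij.trans (Order.le_succ j)),
      Set.image_insert_eq]
    exact (ih fun t hi hj => h t hi (by omega)).insert
      ⟨p j, apply_mem_image_Icc hij le_rfl, (h j hij (by omega)).symm⟩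

theorem exists_first_last {Q : ℕ → Prop} (h : ∃ i ≤ n, Q i) :
    ∃ f l, f ≤ l ∧ l ≤ n ∧ Q f ∧ Q l ∧ ∀ i ≤ n, Q i → f ≤ i ∧ i ≤ l := by
  classical
  obtain ⟨i, hi, hQ⟩ := h
  have hex : ∃ i, i ≤ n ∧ Q i := ⟨i, hi, hQ⟩
  have hl := Nat.findGreatest_spec (P := Q) hi hQ
  exact ⟨Nat.find hex, Nat.findGreatest Q n, Nat.find_min' hex ⟨Nat.findGreatest_le n, hl⟩,
    Nat.findGreatest_le n, (Nat.find_spec hex).2, hl, fun j hj hQj =>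
    ⟨Nat.find_min' hex ⟨hj, hQj⟩, Nat.le_findGreatest hj hQj⟩⟩

namespace IsInducedPath

theorem mono (hp : IsInducedPath G p n) (hm : m ≤ n) : IsInducedPath G p m :=
  ⟨fun i j hi hj => hp.inj i j (hi.trans hm) (hj.trans hm),
    fun i j hi hj => hp.adj i j (hi.trans hm) (hj.trans hm)⟩

theorem shift (hp : IsInducedPath G p n) (i m : ℕ) (hm : i + m ≤ n) :
    IsInducedPath G (fun t => p (i + t)) m :=
  ⟨fun a b ha hb e => by have := hp.inj (i + a) (i + b) (by omega) (by omega) e; omega,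
    fun a b ha hb => by rw [hp.adj (i + a) (i + b) (by omega) (by omega)]; omega⟩

theorem rev (hp : IsInducedPath G p n) (i : ℕ) (hi : i ≤ n) :
    IsInducedPath G (fun t => p (i - t)) i :=
  ⟨fun a b ha hb e => by have := hp.inj (i - a) (i - b) (by omega) (by omega) e; omega,
    fun a b ha hb => by rw [hp.adj (i - a) (i - b) (by omega) (by omega)]; omega⟩

theorem adj_succ (hp : IsInducedPath G p n) (hi : i + 1 ≤ n) : G.Adj (p i) (p (i + 1)) :=
  (hp.adj _ _ (by omega) hi).2 (Or.inl rfl)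

theorem one_le (hp0 : p 0 = u) (hpn : p n = v) (huv : u ≠ v) : 1 ≤ n :=
  Nat.one_le_iff_ne_zero.2 fun h => huv (hp0 ▸ hpn ▸ h ▸ rfl)

theorem two_le (hp : IsInducedPath G p n) (hp0 : p 0 = u) (hpn : p n = v) (huv : u ≠ v)
    (hnuv : ¬G.Adj u v) : 2 ≤ n := by
  have := one_le hp0 hpn huv
  by_contra h
  obtain rfl : n = 1 := by omega
  exact hnuv (hp0 ▸ hpn ▸ hp.adj_succ le_rfl)

theorem connectedOn_image (hp : IsInducedPath G p n) (hij : i ≤ j) (hj : j ≤ n) :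
    ConnectedOn G (p '' Set.Icc i j) :=
  connectedOn_image_Icc hij fun _ _ ht => hp.adj_succ (by omega)

theorem notMem_image (hp : IsInducedPath G p n) {t : ℕ} (hj : j ≤ n) (ht : t ≤ n)
    (h : t < i ∨ j < t) : p t ∉ p '' Set.Icc i j := by
  rintro ⟨s, ⟨his, hsj⟩, e⟩
  have := hp.inj _ _ (by omega) (by omega) e
  omega

theorem anticomplete_image (hp : IsInducedPath G p n) {i' j' : ℕ} (h : j + 2 ≤ i') (hj' : j' ≤ n) :
    Anticomplete G (p '' Set.Icc i j) (p '' Set.Icc i' j') := by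
  rintro _ ⟨a, ⟨-, haj⟩, rfl⟩ _ ⟨b, ⟨hib, hbj⟩, rfl⟩
  refine ⟨fun e => ?_, fun e => ?_⟩
  · have := hp.inj _ _ (by omega) (by omega) e
    omega
  · have := (hp.adj _ _ (by omega) (by omega)).1 e
    omega

theorem onlyCrossEdge_image (hp : IsInducedPath G p n) {j' : ℕ} (hj' : j' ≤ n) :
    OnlyCrossEdge G (p '' Set.Icc i j) (p '' Set.Icc (j + 1) j') (p j) (p (j + 1)) := by
  rintro _ ⟨a, ⟨-, haj⟩, rfl⟩ _ ⟨b, ⟨hib, hbj⟩, rfl⟩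
  refine ⟨fun e => ?_, fun e => ?_⟩
  · have := hp.inj _ _ (by omega) (by omega) e
    omega
  · have := (hp.adj _ _ (by omega) (by omega)).1 e
    obtain ⟨rfl, rfl⟩ : a = j ∧ b = j + 1 := by omega
    exact ⟨rfl, rfl⟩

theorem le_card [Finite W] (hp : IsInducedPath G p n) : n ≤ Nat.card W := by
  have hinj : Function.Injective fun i : Fin (n + 1) => p i := fun i j e =>
    Fin.ext (hp.inj i j (by omega) (by omega) e)
  have hcard := Nat.card_le_card_of_injective _ hinj
  rw [Nat.card_fin] at hcard
  omega

theorem concat (hr : IsInducedPath G r s) (hp : IsInducedPath G p n)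
    (hne : ∀ i ≤ s, ∀ j ≤ n, r i ≠ p j)
    (hadj : ∀ i ≤ s, ∀ j ≤ n, (G.Adj (r i) (p j) ↔ i = s ∧ j = 0)) :
    IsInducedPath G (fun t => if t ≤ s then r t else p (t - s - 1)) (s + n + 1) := by
  constructor
  · intro i j hi hj e
    split_ifs at e with h1 h2 h2
    · exact hr.inj i j h1 h2 e
    · exact (hne i h1 _ (by omega) e).elim
    · exact (hne j h2 _ (by omega) e.symm).elim
    · have := hp.inj _ _ (by omega) (by omega) e
      omega
  · intro i j hi hj
    split_ifs with h1 h2 h2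
    · exact hr.adj i j h1 h2
    · rw [hadj i h1 _ (by omega)]
      omega
    · rw [G.adj_comm, hadj j h2 _ (by omega)]
      omega
    · rw [hp.adj _ _ (by omega) (by omega)]
      omega

theorem refl (x : W) : IsInducedPath G (fun _ => x) 0 :=
  ⟨fun _ _ _ _ _ => by omega, fun _ _ _ _ => by simp only [G.irrefl, false_iff]; omega⟩

theorem exists_cons (hp : IsInducedPath G p n) (hne : ∀ i ≤ n, x ≠ p i)
    (hadj : ∀ i ≤ n, (G.Adj x (p i) ↔ i = 0)) :
    ∃ q, IsInducedPath G q (n + 1) ∧ q 0 = x ∧ ∀ i, q (i + 1) = p i := by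
  have hq := (refl x).concat hp (fun _ _ j hj => hne j hj) fun i hi j hj => by
    rw [hadj j hj]
    omega
  rw [Nat.zero_add] at hq
  exact ⟨_, hq, if_pos le_rfl, fun i => if_neg (by omega)⟩

theorem exists_snoc (hp : IsInducedPath G p n) (hne : ∀ i ≤ n, y ≠ p i)
    (hadj : ∀ i ≤ n, (G.Adj y (p i) ↔ i = n)) :
    ∃ q, IsInducedPath G q (n + 1) ∧ q (n + 1) = y ∧ ∀ i ≤ n, q i = p i := by
  have hq := hp.concat (refl y) (fun i hi _ _ => (hne i hi).symm) fun i hi j hj => by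
    rw [G.adj_comm, hadj i hi]
    omega
  exact ⟨_, hq, if_neg (by omega), fun i hi => if_pos hi⟩

theorem exists_extend (hp : IsInducedPath G p n) (hx : ∀ i ≤ n, x ≠ p i) (hy : ∀ i ≤ n, y ≠ p i)
    (hxy : x ≠ y) (hnxy : ¬G.Adj x y) (hxadj : ∀ i ≤ n, (G.Adj x (p i) ↔ i = 0))
    (hyadj : ∀ i ≤ n, (G.Adj y (p i) ↔ i = n)) :
    ∃ q, IsInducedPath G q (n + 2) ∧ q 0 = x ∧ (∀ i ≤ n, q (i + 1) = p i) ∧ q (n + 2) = y := by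
  obtain ⟨q, hq, q0, hqp⟩ := hp.exists_cons hx hxadj
  obtain ⟨r, hr, hrlast, hrq⟩ := hq.exists_snoc (y := y)
    (fun i hi => by
      rcases i with _ | i
      · exact q0 ▸ hxy.symm
      · exact hqp i ▸ hy i (by omega))
    (fun i hi => by
      rcases i with _ | i
      · rw [q0, G.adj_comm]
        exact iff_of_false hnxy (by omega)
      · rw [hqp i, hyadj i (by omega)]
        omega)
  exact ⟨r, hr, (hrq 0 (by omega)).trans q0,
    fun i hi => (hrq (i + 1) (by omega)).trans (hqp i), hrlast⟩

theorem exists_of_adj_of_adj {a b c : W} (hab : G.Adj a b) (hbc : G.Adj b c) (hac : a ≠ c)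
    (hnac : ¬G.Adj a c) : ∃ q, IsInducedPath G q 2 ∧ q 0 = a ∧ q 1 = b ∧ q 2 = c := by
  obtain ⟨q, hq, q0, hq1, q2⟩ := (refl b).exists_extend (x := a) (y := c)
    (fun _ _ => hab.ne) (fun _ _ => hbc.ne.symm) hac hnac
    (fun i hi => iff_of_true hab (by omega)) (fun i hi => iff_of_true hbc.symm (by omega))
  exact ⟨q, hq, q0, hq1 0 le_rfl, q2⟩

end IsInducedPath

theorem le_add_dist_getVert (hG : G.Connected) {w : G.Walk u v} (hw : w.length = G.dist u v)
    (hj : j ≤ w.length) : j ≤ i + G.dist (w.getVert i) (w.getVert j) := by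
  have hfst := dist_le (w.take i)
  have hsnd := dist_le (w.drop j)
  rw [Walk.take_length] at hfst
  rw [Walk.drop_length] at hsnd
  have hi := hG.dist_triangle (u := u) (v := w.getVert i) (w := v)
  have hj := hG.dist_triangle (u := w.getVert i) (v := w.getVert j) (w := v)
  omega

theorem ConnectedOn.exists_isInducedPath (hA : ConnectedOn G A) (hu : u ∈ A) (hv : v ∈ A) :
    ∃ n p, IsInducedPath G p n ∧ p 0 = u ∧ p n = v ∧ ∀ i ≤ n, p i ∈ A := by
  obtain ⟨w, hw⟩ := SimpleGraph.Connected.exists_walk_length_eq_dist hA ⟨u, hu⟩ ⟨v, hv⟩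
  have hdist := fun i j => le_add_dist_getVert hA hw (i := i) (j := j)
  refine ⟨w.length, fun i => w.getVert i,
    ⟨fun i j hi hj e => ?_, fun i j hi hj => ⟨fun e => ?_, ?_⟩⟩,
    by simp, by simp, fun i _ => (w.getVert i).2⟩
  · have hij := hdist i j hj
    have hji := hdist j i hi
    rw [Subtype.ext e, dist_self] at hij hji
    omega
  · have hij := hdist i j hj
    have hji := hdist j i hi
    rw [dist_eq_one_iff_adj.2 (show (G.induce A).Adj _ _ from e)] at hij
    rw [dist_eq_one_iff_adj.2 (show (G.induce A).Adj _ _ from e.symm)] at hji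
    have : i ≠ j := fun hij => G.ne_of_adj e (hij ▸ rfl)
    omega
  · rintro (rfl | rfl)
    · exact w.adj_getVert_succ (by omega)
    · exact (w.adj_getVert_succ (i := j) (by omega)).symm

theorem ConnectedOn.exists_isInducedPath_through (hX : ConnectedOn G X) (hu : HasNeighborIn G u X)
    (hv : HasNeighborIn G v X) (huv : u ≠ v) (hnuv : ¬G.Adj u v) :
    ∃ n p, 2 ≤ n ∧ IsInducedPath G p n ∧ p 0 = u ∧ p n = v ∧ ∀ i, 0 < i → i < n → p i ∈ X := by
  have hc : ConnectedOn G (Insert.insert u (Insert.insert v X)) :=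
    (hX.insert hv).insert (hu.mono (Set.subset_insert _ _))
  obtain ⟨n, p, hp, h0, hn, hA⟩ := hc.exists_isInducedPath (u := u) (v := v) (by simp) (by simp)
  refine ⟨n, p, hp.two_le h0 hn huv hnuv, hp, h0, hn, fun i hi hin => ?_⟩
  rcases hA i hin.le with h | h | h
  · have := hp.inj i 0 hin.le (by omega) (h.trans h0.symm)
    omega
  · have := hp.inj i n hin.le le_rfl (h.trans hn.symm)
    omega
  · exact h

theorem ConnectedOn.exists_first_contact (hX : ConnectedOn G X) (hx : x ∈ X) (hxP : x ∉ P)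
    (hP : (X ∩ P).Nonempty) :
    ∃ s r, IsInducedPath G r s ∧ r 0 = x ∧ (∀ i ≤ s, r i ∈ X ∧ r i ∉ P) ∧
      HasNeighborIn G (r s) P ∧ ∀ i < s, ¬HasNeighborIn G (r i) P := by
  obtain ⟨a, ha, haP⟩ := hP
  obtain ⟨m, r, hr, h0, hm, hrX⟩ := hX.exists_isInducedPath hx ha
  have hprev : ∀ e ≤ m, r e ∈ P → 0 < e ∧ HasNeighborIn G (r (e - 1)) P := by
    intro e he heP
    have : e ≠ 0 := fun h => hxP (h0 ▸ h ▸ heP)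
    exact ⟨by omega, r e, heP, (hr.adj _ _ (by omega) he).2 (by omega)⟩
  have hcontact : ∃ s ≤ m, HasNeighborIn G (r s) P :=
    ⟨m - 1, Nat.sub_le .., (hprev m le_rfl (hm ▸ haP)).2⟩
  obtain ⟨s, l, hsl, hlm, hs, -, hmin⟩ := exists_first_last hcontact
  refine ⟨s, r, hr.mono (hsl.trans hlm), h0, fun i hi => ⟨hrX i (by omega), fun hiP => ?_⟩, hs,
    fun i hi h => ?_⟩
  · obtain ⟨hi0, hi1⟩ := hprev i (by omega) hiP
    have := (hmin (i - 1) (by omega) hi1).1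
    omega
  · have := (hmin i (by omega) h).1
    omega

end InducedPaths

section Obstructions

variable {W : Type} {G : SimpleGraph W} {p q : ℕ → W} {n m : ℕ} {X Y Z X₁ X₂ X₃ : Set W}
  {a b c u v b₁ b₂ b₃ c₁ c₂ c₃ : W}

theorem zmod_eq_add_one_iff_val (n : ℕ) (x y : ZMod (n + 2)) :
    y = x + 1 ↔ y.val = x.val + 1 ∨ (x.val = n + 1 ∧ y.val = 0) := by
  have hx := ZMod.val_lt x
  have hy := ZMod.val_lt y
  have hval : (x + 1).val = (x.val + 1) % (n + 2) := by
    rw [ZMod.val_add, ZMod.val_one'' (by omega)]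
  rw [← (ZMod.val_injective _).eq_iff, hval]
  rcases Nat.lt_or_ge (x.val + 1) (n + 2) with h | h
  · rw [Nat.mod_eq_of_lt h]
    omega
  · rw [show x.val + 1 = n + 2 by omega, Nat.mod_self]
    omega

theorem odd_add_of_joined_paths (hEH : ¬ContainsEvenHole G) (hp : IsInducedPath G p n)
    (hq : IsInducedPath G q m) (hne : ∀ i ≤ n, ∀ j ≤ m, p i ≠ q j)
    (hadj : ∀ i ≤ n, ∀ j ≤ m, G.Adj (p i) (q j) ↔ (i = 0 ∧ j = 0) ∨ (i = n ∧ j = m))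
    (hnm : 2 ≤ n + m) : Odd (n + m) := by
  by_contra hodd
  refine hEH ⟨n + m + 2, fun x => if x.val ≤ n then p x.val else q (n + m + 1 - x.val),
    ⟨by omega, fun x y e => ZMod.val_injective _ ?_, fun x y => ?_⟩,
    (Nat.not_odd_iff_even.1 hodd).add (by decide)⟩ <;>
  have hx := ZMod.val_lt x <;> have hy := ZMod.val_lt y
  · dsimp only at e
    split_ifs at e with h1 h2 h2
    · exact hp.inj _ _ h1 h2 e
    · exact (hne _ h1 _ (by omega) e).elim
    · exact (hne _ h2 _ (by omega) e.symm).elim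
    · have := hq.inj _ _ (by omega) (by omega) e
      omega
  · rw [zmod_eq_add_one_iff_val, zmod_eq_add_one_iff_val]
    dsimp only
    split_ifs with h1 h2 h2
    · rw [hp.adj _ _ h1 h2]
      omega
    · rw [hadj _ h1 _ (by omega)]
      omega
    · rw [G.adj_comm, hadj _ h2 _ (by omega)]
      omega
    · rw [hq.adj _ _ (by omega) (by omega)]
      omega

theorem odd_add_of_common_ends (hEH : ¬ContainsEvenHole G) (hp : IsInducedPath G p n)
    (hq : IsInducedPath G q m) (hn : 2 ≤ n) (hm : 2 ≤ m) (hstart : p 0 = q 0) (hend : p n = q m)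
    (hanti : ∀ i, 0 < i → i < n → ∀ j, 0 < j → j < m → p i ≠ q j ∧ ¬G.Adj (p i) (q j)) :
    Odd (n + m) := by
  have hcases : ∀ i ≤ n, i = 0 ∨ i = n ∨ 0 < i ∧ i < n := fun i hi => by omega
  have hodd : Odd (n + (m - 2)) := by
    refine odd_add_of_joined_paths hEH hp (hq.shift 1 (m - 2) (by omega)) (fun i hi j hj e => ?_)
      (fun i hi j hj => ?_) (by omega)
    · rcases hcases i hi with rfl | rfl | ⟨hi0, hin⟩
      · have := hq.inj _ _ (by omega) (by omega) (hstart.symm.trans e)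
        omega
      · have := hq.inj _ _ (by omega) (by omega) (hend.symm.trans e)
        omega
      · exact (hanti i hi0 hin (1 + j) (by omega) (by omega)).1 e
    · rcases hcases i hi with rfl | rfl | ⟨hi0, hin⟩
      · rw [hstart, hq.adj _ _ (by omega) (by omega)]
        omega
      · rw [hend, hq.adj _ _ (by omega) (by omega)]
        omega
      · exact iff_of_false (hanti i hi0 hin (1 + j) (by omega) (by omega)).2 (by omega)
  rw [Nat.odd_iff] at *
  omega

-- Two of the three path lengths have the same parity.
theorem false_of_theta (hEH : ¬ContainsEvenHole G) (huv : u ≠ v)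
    (hnuv : ¬G.Adj u v) (hX : ConnectedOn G X) (hY : ConnectedOn G Y) (hZ : ConnectedOn G Z)
    (hXY : Anticomplete G X Y) (hXZ : Anticomplete G X Z) (hYZ : Anticomplete G Y Z)
    (uX : HasNeighborIn G u X) (uY : HasNeighborIn G u Y) (uZ : HasNeighborIn G u Z)
    (vX : HasNeighborIn G v X) (vY : HasNeighborIn G v Y) (vZ : HasNeighborIn G v Z) : False := by
  obtain ⟨n₁, p₁, hn₁, hp₁, h10, h1n, hA₁⟩ := hX.exists_isInducedPath_through uX vX huv hnuv
  obtain ⟨n₂, p₂, hn₂, hp₂, h20, h2n, hA₂⟩ := hY.exists_isInducedPath_through uY vY huv hnuv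
  obtain ⟨n₃, p₃, hn₃, hp₃, h30, h3n, hA₃⟩ := hZ.exists_isInducedPath_through uZ vZ huv hnuv
  have h12 := odd_add_of_common_ends hEH hp₁ hp₂ hn₁ hn₂ (by rw [h10, h20]) (by rw [h1n, h2n])
    fun i a b j c d => hXY _ (hA₁ i a b) _ (hA₂ j c d)
  have h13 := odd_add_of_common_ends hEH hp₁ hp₃ hn₁ hn₃ (by rw [h10, h30]) (by rw [h1n, h3n])
    fun i a b j c d => hXZ _ (hA₁ i a b) _ (hA₃ j c d)
  have h23 := odd_add_of_common_ends hEH hp₂ hp₃ hn₂ hn₃ (by rw [h20, h30]) (by rw [h2n, h3n])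
    fun i a b j c d => hYZ _ (hA₂ i a b) _ (hA₃ j c d)
  rw [Nat.odd_iff] at *
  omega

theorem false_of_square (hEH : ¬ContainsEvenHole G) (huv : u ≠ v) (hnuv : ¬G.Adj u v) (hab : a ≠ b)
    (hnab : ¬G.Adj a b) (ua : G.Adj u a) (ub : G.Adj u b) (va : G.Adj v a) (vb : G.Adj v b) :
    False := by
  obtain ⟨q, hq, q0, q1, q2⟩ := IsInducedPath.exists_of_adj_of_adj ua va.symm huv hnuv
  obtain ⟨r, hr, r0, r1, r2⟩ := IsInducedPath.exists_of_adj_of_adj ub vb.symm huv hnuv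
  have hodd : Odd (2 + 2) := odd_add_of_common_ends hEH hq hr le_rfl le_rfl (q0.trans r0.symm)
    (q2.trans r2.symm) fun i h1 h2 j h3 h4 => by
      rw [show i = 1 by omega, show j = 1 by omega, q1, r1]
      exact ⟨hab, hnab⟩
  exact absurd hodd (by decide)

theorem IsInducedPath.exists_walk (hp : IsInducedPath G p n) (m : ℕ) (hm : m ≤ n) :
    ∃ w : G.Walk (p 0) (p m), w.length = m ∧ w.support = (List.range (m + 1)).map p ∧
      ∀ i < m, s(p i, p (i + 1)) ∈ w.edges := by
  induction m with
  | zero => exact ⟨Walk.nil, rfl, by simp, by simp⟩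
  | succ m ih =>
    obtain ⟨w, hlen, hsupp, hedges⟩ := ih (by omega)
    refine ⟨w.concat (hp.adj_succ hm), by simp [hlen], ?_, fun i hi => ?_⟩
    · rw [Walk.support_concat, hsupp, List.range_succ (n := m + 1)]
      simp
    · rw [Walk.edges_concat]
      rcases Nat.lt_or_ge i m with h | h
      · simp [hedges i h]
      · simp [show i = m by omega]

theorem IsInducedPath.exists_isInducedPathW (hp : IsInducedPath G p n) (ha : p 0 = a)
    (hb : p n = b) : ∃ w : G.Walk a b, IsInducedPathW G w ∧ w.length = n ∧
      ∀ v ∈ w.support, ∃ i ≤ n, p i = v := by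
  subst ha hb
  obtain ⟨w, hlen, hsupp, hedges⟩ := hp.exists_walk n le_rfl
  have hmem : ∀ v ∈ w.support, ∃ i ≤ n, p i = v := by
    simp [hsupp]
  refine ⟨w, ⟨?_, fun u v hu hv e => ?_⟩, hlen, hmem⟩
  · rw [Walk.isPath_def, hsupp]
    refine List.Nodup.map_on (fun i hi j hj e => ?_) List.nodup_range
    rw [List.mem_range] at hi hj
    exact hp.inj i j (by omega) (by omega) e
  · obtain ⟨i, hi, rfl⟩ := hmem u hu
    obtain ⟨j, hj, rfl⟩ := hmem v hv
    rw [Walk.adj_toSubgraph_iff_mem_edges]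
    rcases (hp.adj i j hi hj).1 e with rfl | rfl
    · exact hedges i (by omega)
    · rw [Sym2.eq_swap]
      exact hedges j (by omega)

theorem ConnectedOn.exists_isInducedPathW (hX : ConnectedOn G X) (hb : b ∈ X)
    (aX : HasNeighborIn G a X) (haX : a ∉ X) :
    ∃ w : G.Walk a b, IsInducedPathW G w ∧ 1 ≤ w.length ∧ (¬G.Adj a b → 2 ≤ w.length) ∧
      ∀ v ∈ w.support, v = a ∨ v ∈ X := by
  obtain ⟨n, p, hp, h0, hn, hA⟩ := (hX.insert aX).exists_isInducedPath (Or.inl rfl) (Or.inr hb)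
  obtain ⟨w, hw, rfl, hs⟩ := hp.exists_isInducedPathW h0 hn
  have hab : a ≠ b := fun h => haX (h ▸ hb)
  refine ⟨w, hw, IsInducedPath.one_le h0 hn hab, hp.two_le h0 hn hab, fun v hv => ?_⟩
  obtain ⟨i, hi, rfl⟩ := hs v hv
  exact hA i hi

theorem false_of_pyramid (hPyr : ¬ContainsPyramid G)
    (h12 : G.Adj b₁ b₂) (h23 : G.Adj b₂ b₃) (h13 : G.Adj b₁ b₃)
    (hX₁ : ConnectedOn G X₁) (hX₂ : ConnectedOn G X₂) (hX₃ : ConnectedOn G X₃)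
    (hb₁ : b₁ ∈ X₁) (hb₂ : b₂ ∈ X₂) (hb₃ : b₃ ∈ X₃)
    (aX₁ : HasNeighborIn G a X₁) (aX₂ : HasNeighborIn G a X₂) (aX₃ : HasNeighborIn G a X₃)
    (ha₁ : a ∉ X₁) (ha₂ : a ∉ X₂) (ha₃ : a ∉ X₃)
    (c12 : OnlyCrossEdge G X₁ X₂ b₁ b₂) (c13 : OnlyCrossEdge G X₁ X₃ b₁ b₃)
    (c23 : OnlyCrossEdge G X₂ X₃ b₂ b₃)
    (hnadj : (¬G.Adj a b₁ ∧ ¬G.Adj a b₂) ∨ (¬G.Adj a b₁ ∧ ¬G.Adj a b₃) ∨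
      (¬G.Adj a b₂ ∧ ¬G.Adj a b₃)) : False := by
  obtain ⟨w₁, i₁, l₁, m₁, s₁⟩ := hX₁.exists_isInducedPathW hb₁ aX₁ ha₁
  obtain ⟨w₂, i₂, l₂, m₂, s₂⟩ := hX₂.exists_isInducedPathW hb₂ aX₂ ha₂
  obtain ⟨w₃, i₃, l₃, m₃, s₃⟩ := hX₃.exists_isInducedPathW hb₃ aX₃ ha₃
  refine hPyr ⟨a, b₁, b₂, b₃, w₁, w₂, w₃, ⟨i₁, i₂, i₃⟩, ⟨l₁, l₂, l₃⟩, ?_, ⟨h12, h23, h13⟩,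
    ?_, fun u w hu hw hua hwa e => ?_, fun u w hu hw hua hwa e => ?_,
    fun u w hu hw hua hwa e => ?_⟩
  · exact hnadj.imp (.imp m₁ m₂) (.imp (.imp m₁ m₃) (.imp m₂ m₃))
  · intro w hw
    by_contra hwa
    rcases hw with ⟨h, h'⟩ | ⟨h, h'⟩ | ⟨h, h'⟩
    · exact (c12 w ((s₁ w h).resolve_left hwa) w ((s₂ w h').resolve_left hwa)).1 rfl
    · exact (c13 w ((s₁ w h).resolve_left hwa) w ((s₃ w h').resolve_left hwa)).1 rfl
    · exact (c23 w ((s₂ w h).resolve_left hwa) w ((s₃ w h').resolve_left hwa)).1 rfl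
  · exact (c12 u ((s₁ u hu).resolve_left hua) w ((s₂ w hw).resolve_left hwa)).2 e
  · exact (c13 u ((s₁ u hu).resolve_left hua) w ((s₃ w hw).resolve_left hwa)).2 e
  · exact (c23 u ((s₂ u hu).resolve_left hua) w ((s₃ w hw).resolve_left hwa)).2 e

/-- `X` and `Y` are disjoint, and `bb'` and `cc'` are the only edges that may join them. -/
def OnlyCrossEdges (G : SimpleGraph W) (X Y : Set W) (b b' c c' : W) : Prop :=
  ∀ u ∈ X, ∀ v ∈ Y, u ≠ v ∧ (G.Adj u v → (u = b ∧ v = b') ∨ (u = c ∧ v = c'))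

theorem odd_add_of_onlyCrossEdges (hEH : ¬ContainsEvenHole G) (hp : IsInducedPath G p n)
    (hq : IsInducedPath G q m) (hpX : ∀ i ≤ n, p i ∈ X) (hqY : ∀ i ≤ m, q i ∈ Y)
    (hstart : G.Adj (p 0) (q 0)) (hend : G.Adj (p n) (q m))
    (hXY : OnlyCrossEdges G X Y (p 0) (q 0) (p n) (q m)) (hnm : 2 ≤ n + m) : Odd (n + m) := by
  refine odd_add_of_joined_paths hEH hp hq
    (fun i hi j hj => (hXY _ (hpX i hi) _ (hqY j hj)).1) (fun i hi j hj => ⟨fun e => ?_, ?_⟩) hnm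
  · refine ((hXY _ (hpX i hi) _ (hqY j hj)).2 e).imp (fun h => ?_) fun h => ?_
    · exact ⟨hp.inj _ _ hi (by omega) h.1, hq.inj _ _ hj (by omega) h.2⟩
    · exact ⟨hp.inj _ _ hi le_rfl h.1, hq.inj _ _ hj le_rfl h.2⟩
  · rintro (⟨rfl, rfl⟩ | ⟨rfl, rfl⟩)
    · exact hstart
    · exact hend

theorem two_le_add_of_nonadj_of_eq (hp : IsInducedPath G p n) (hq : IsInducedPath G q m)
    (hpq : p 0 = p n → q 0 ≠ q m ∧ ¬G.Adj (q 0) (q m))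
    (hqp : q 0 = q m → p 0 ≠ p n ∧ ¬G.Adj (p 0) (p n)) : 2 ≤ n + m := by
  by_cases hpe : p 0 = p n
  · have := hq.two_le rfl rfl (hpq hpe).1 (hpq hpe).2
    omega
  by_cases hqe : q 0 = q m
  · have := hp.two_le rfl rfl (hqp hqe).1 (hqp hqe).2
    omega
  have hn : 1 ≤ n := IsInducedPath.one_le rfl rfl hpe
  have hm : 1 ≤ m := IsInducedPath.one_le rfl rfl hqe
  omega

-- One of the three paths may have length zero, as long as the other two have length at least two.
theorem false_of_prism (hEH : ¬ContainsEvenHole G)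
    (hb12 : G.Adj b₁ b₂) (hb23 : G.Adj b₂ b₃) (hb13 : G.Adj b₁ b₃)
    (hc12 : G.Adj c₁ c₂) (hc23 : G.Adj c₂ c₃) (hc13 : G.Adj c₁ c₃)
    (hX₁ : ConnectedOn G X₁) (hX₂ : ConnectedOn G X₂) (hX₃ : ConnectedOn G X₃)
    (b1X : b₁ ∈ X₁) (b2X : b₂ ∈ X₂) (b3X : b₃ ∈ X₃)
    (c1X : c₁ ∈ X₁) (c2X : c₂ ∈ X₂) (c3X : c₃ ∈ X₃)
    (c12 : OnlyCrossEdges G X₁ X₂ b₁ b₂ c₁ c₂) (c13 : OnlyCrossEdges G X₁ X₃ b₁ b₃ c₁ c₃)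
    (c23 : OnlyCrossEdges G X₂ X₃ b₂ b₃ c₂ c₃)
    (n1 : b₁ = c₁ → (b₂ ≠ c₂ ∧ ¬G.Adj b₂ c₂) ∧ (b₃ ≠ c₃ ∧ ¬G.Adj b₃ c₃))
    (n2 : b₂ = c₂ → (b₁ ≠ c₁ ∧ ¬G.Adj b₁ c₁) ∧ (b₃ ≠ c₃ ∧ ¬G.Adj b₃ c₃))
    (n3 : b₃ = c₃ → (b₁ ≠ c₁ ∧ ¬G.Adj b₁ c₁) ∧ (b₂ ≠ c₂ ∧ ¬G.Adj b₂ c₂)) : False := by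
  obtain ⟨m₁, p₁, hp₁, rfl, rfl, hA₁⟩ := hX₁.exists_isInducedPath b1X c1X
  obtain ⟨m₂, p₂, hp₂, rfl, rfl, hA₂⟩ := hX₂.exists_isInducedPath b2X c2X
  obtain ⟨m₃, p₃, hp₃, rfl, rfl, hA₃⟩ := hX₃.exists_isInducedPath b3X c3X
  have h12 := odd_add_of_onlyCrossEdges hEH hp₁ hp₂ hA₁ hA₂ hb12 hc12 c12
    (two_le_add_of_nonadj_of_eq hp₁ hp₂ (fun h => (n1 h).1) fun h => (n2 h).1)
  have h13 := odd_add_of_onlyCrossEdges hEH hp₁ hp₃ hA₁ hA₃ hb13 hc13 c13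
    (two_le_add_of_nonadj_of_eq hp₁ hp₃ (fun h => (n1 h).2) fun h => (n3 h).1)
  have h23 := odd_add_of_onlyCrossEdges hEH hp₂ hp₃ hA₂ hA₃ hb23 hc23 c23
    (two_le_add_of_nonadj_of_eq hp₂ hp₃ (fun h => (n2 h).2) fun h => (n3 h).2)
  rw [Nat.odd_iff] at *
  omega

end Obstructions

section Connectors

variable {W : Type} {G : SimpleGraph W} {A B X Y Z X' Y' : Set W}
  {x y z d b b' d₁ d₂ d₃ e₁ e₂ e₃ : W}

theorem ConnectedOn.exists_connectedOn_diff_of_mem (hZ : ConnectedOn G Z) (hz : z ∈ Z) (hd : d ∈ Z)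
    (hdz : d ≠ z) : ∃ Z₀ ⊆ Z \ {z}, ConnectedOn G Z₀ ∧ d ∈ Z₀ ∧ HasNeighborIn G z Z₀ := by
  obtain ⟨n, p, hp, rfl, rfl, hA⟩ := hZ.exists_isInducedPath hd hz
  obtain ⟨m, rfl⟩ := Nat.exists_eq_add_of_le' (IsInducedPath.one_le rfl rfl hdz)
  refine ⟨p '' Set.Icc 0 m, ?_, hp.connectedOn_image (by omega) (by omega),
    apply_mem_image_Icc le_rfl (by omega), p m, apply_mem_image_Icc (by omega) le_rfl,
    (hp.adj_succ le_rfl).symm⟩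
  rintro _ ⟨t, ⟨-, ht⟩, rfl⟩
  refine ⟨hA t (by omega), fun e => ?_⟩
  have := hp.inj _ _ (by omega) le_rfl e
  omega

theorem ConnectedOn.exists_connectedOn_diff_of_hasNeighborIn (hZ : ConnectedOn G Z) (hz : z ∈ Z)
    (dZ : HasNeighborIn G d Z) (hdz : ¬G.Adj d z) :
    ∃ Z₀ ⊆ Z \ {z}, ConnectedOn G Z₀ ∧ HasNeighborIn G d Z₀ ∧ HasNeighborIn G z Z₀ := by
  obtain ⟨a, ha, e⟩ := dZ
  obtain ⟨Z₀, hsub, hconn, haZ₀, hzZ₀⟩ :=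
    hZ.exists_connectedOn_diff_of_mem hz ha fun h => hdz (h ▸ e)
  exact ⟨Z₀, hsub, hconn, ⟨a, haZ₀, e⟩, hzZ₀⟩

/-- `X` is a connected set through which `x` reaches into `A`: it contains `x`, and all its other
vertices lie in `A`. -/
structure IsLeg (G : SimpleGraph W) (A : Set W) (x : W) (X : Set W) : Prop where
  connectedOn : ConnectedOn G X
  mem : x ∈ X
  subset : X ⊆ insert x A

/-- The vertex `z` attaches to two anticomplete legs of `x` and `y` in `A`; thus `A` contains the
interior of an induced path from `x` to `y`, once `z` is inserted in it. -/
def IsMiddle (G : SimpleGraph W) (A : Set W) (z x y : W) : Prop :=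
  ∃ X Y, IsLeg G A x X ∧ IsLeg G A y Y ∧ Anticomplete G X Y ∧ HasNeighborIn G z X ∧
    HasNeighborIn G z Y

/-- The vertex `d ∈ A` attaches to three pairwise anticomplete legs of `x`, `y`, `z` in `A`: up to
taking shortest paths, this is a subdivided claw with center `d` and leaves `x`, `y`, `z`. -/
def HasClaw (G : SimpleGraph W) (A : Set W) (d x y z : W) : Prop :=
  d ∈ A ∧ ∃ X Y Z, (IsLeg G A x X ∧ IsLeg G A y Y ∧ IsLeg G A z Z) ∧
    (Anticomplete G X Y ∧ Anticomplete G X Z ∧ Anticomplete G Y Z) ∧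
    (d ∉ X ∧ d ∉ Y ∧ d ∉ Z) ∧ HasNeighborIn G d X ∧ HasNeighborIn G d Y ∧ HasNeighborIn G d Z

/-- The triangle `d₁d₂d₃` is joined to `x`, `y`, `z` by three legs in `A`, with no further edge
between the legs. -/
def HasTriangle (G : SimpleGraph W) (A : Set W) (d₁ d₂ d₃ x y z : W) : Prop :=
  (G.Adj d₁ d₂ ∧ G.Adj d₂ d₃ ∧ G.Adj d₁ d₃) ∧
  ∃ X Y Z, (IsLeg G A x X ∧ IsLeg G A y Y ∧ IsLeg G A z Z) ∧
    (OnlyCrossEdge G X Y d₁ d₂ ∧ OnlyCrossEdge G X Z d₁ d₃ ∧ OnlyCrossEdge G Y Z d₂ d₃) ∧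
    d₁ ∈ X ∧ d₂ ∈ Y ∧ d₃ ∈ Z

/-- The distinct, pairwise nonadjacent vertices `x`, `y`, `z` lie outside the two anticomplete
sides `A` and `B`. -/
structure SeparatedTriple (G : SimpleGraph W) (A B : Set W) (x y z : W) : Prop where
  anti : Anticomplete G A B
  xA : x ∉ A
  yA : y ∉ A
  zA : z ∉ A
  xB : x ∉ B
  yB : y ∉ B
  zB : z ∉ B
  xy : x ≠ y
  xz : x ≠ z
  yz : y ≠ z
  nxy : ¬G.Adj x y
  nxz : ¬G.Adj x z
  nyz : ¬G.Adj y z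

theorem IsMiddle.swap (h : IsMiddle G A z x y) : IsMiddle G A z y x := by
  obtain ⟨X, Y, hX, hY, hXY, zX, zY⟩ := h
  exact ⟨Y, X, hY, hX, hXY.symm, zY, zX⟩

theorem HasClaw.swap12 (h : HasClaw G A d x y z) : HasClaw G A d y x z := by
  obtain ⟨hd, X, Y, Z, ⟨hX, hY, hZ⟩, ⟨hXY, hXZ, hYZ⟩, ⟨hdX, hdY, hdZ⟩, dX, dY, dZ⟩ := h
  exact ⟨hd, Y, X, Z, ⟨hY, hX, hZ⟩, ⟨hXY.symm, hYZ, hXZ⟩, ⟨hdY, hdX, hdZ⟩, dY, dX, dZ⟩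

theorem HasClaw.swap23 (h : HasClaw G A d x y z) : HasClaw G A d x z y := by
  obtain ⟨hd, X, Y, Z, ⟨hX, hY, hZ⟩, ⟨hXY, hXZ, hYZ⟩, ⟨hdX, hdY, hdZ⟩, dX, dY, dZ⟩ := h
  exact ⟨hd, X, Z, Y, ⟨hX, hZ, hY⟩, ⟨hXZ, hXY, hYZ.symm⟩, ⟨hdX, hdZ, hdY⟩, dX, dZ, dY⟩

theorem HasTriangle.swap12 (h : HasTriangle G A d₁ d₂ d₃ x y z) :
    HasTriangle G A d₂ d₁ d₃ y x z := by
  obtain ⟨⟨h12, h23, h13⟩, X, Y, Z, ⟨hX, hY, hZ⟩, ⟨hXY, hXZ, hYZ⟩, h₁, h₂, h₃⟩ := h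
  exact ⟨⟨h12.symm, h13, h23⟩, Y, X, Z, ⟨hY, hX, hZ⟩, ⟨hXY.symm, hYZ, hXZ⟩, h₂, h₁, h₃⟩

theorem HasTriangle.swap23 (h : HasTriangle G A d₁ d₂ d₃ x y z) :
    HasTriangle G A d₁ d₃ d₂ x z y := by
  obtain ⟨⟨h12, h23, h13⟩, X, Y, Z, ⟨hX, hY, hZ⟩, ⟨hXY, hXZ, hYZ⟩, h₁, h₂, h₃⟩ := h
  exact ⟨⟨h13, h23.symm, h12⟩, X, Z, Y, ⟨hX, hZ, hY⟩, ⟨hXZ, hXY, hYZ.symm⟩, h₁, h₃, h₂⟩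

namespace SeparatedTriple

theorem swap12 (h : SeparatedTriple G A B x y z) : SeparatedTriple G A B y x z :=
  ⟨h.anti, h.yA, h.xA, h.zA, h.yB, h.xB, h.zB, h.xy.symm, h.yz, h.xz,
    fun e => h.nxy e.symm, h.nyz, h.nxz⟩

theorem swap23 (h : SeparatedTriple G A B x y z) : SeparatedTriple G A B x z y :=
  ⟨h.anti, h.xA, h.zA, h.yA, h.xB, h.zB, h.yB, h.xz, h.xy, h.yz.symm,
    h.nxz, h.nxy, fun e => h.nyz e.symm⟩

theorem flip (h : SeparatedTriple G A B x y z) : SeparatedTriple G B A x y z :=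
  ⟨h.anti.symm, h.xB, h.yB, h.zB, h.xA, h.yA, h.zA, h.xy, h.xz, h.yz, h.nxy, h.nxz, h.nyz⟩

end SeparatedTriple

namespace IsLeg

theorem union (hX : IsLeg G A x X) (hX' : IsLeg G B x X') : ConnectedOn G (X ∪ X') :=
  hX.connectedOn.union_of_mem hX'.connectedOn hX.mem hX'.mem

theorem notMem (hX : IsLeg G A x X) (hdA : d ∉ A) (hdx : d ≠ x) : d ∉ X :=
  fun h => (hX.subset h).elim hdx hdA

theorem subset_of_subset_diff (hX : IsLeg G A x X) (hY : Y ⊆ X \ {x}) : Y ⊆ A :=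
  fun _ h => (hX.subset (hY h).1).resolve_left (hY h).2

theorem anticomplete_diff (hAB : Anticomplete G A B) (hX : IsLeg G A x X) (hX' : IsLeg G B x X') :
    Anticomplete G (X \ {x}) (X' \ {x}) :=
  hAB.mono (hX.subset_of_subset_diff subset_rfl) (hX'.subset_of_subset_diff subset_rfl)

theorem eq_of_mem_of_mem (hAB : Anticomplete G A B) (hX : IsLeg G A x X) (hX' : IsLeg G B x X')
    (hd : d ∈ X) (hd' : d ∈ X') : d = x := by
  by_contra hdx
  exact (hX.anticomplete_diff hAB hX' d ⟨hd, hdx⟩ d ⟨hd', hdx⟩).1 rfl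

variable {R R' : W → W → Prop}

theorem forall_union_left_of_subset (hAB : Anticomplete G A B) (hX : IsLeg G A x X)
    (hX' : IsLeg G B x X') (hZ : Z ⊆ A) (h : ∀ u ∈ X, ∀ v ∈ Z, u ≠ v ∧ (G.Adj u v → R u v)) :
    ∀ u ∈ X ∪ X', ∀ v ∈ Z, u ≠ v ∧ (G.Adj u v → R u v) := by
  rintro u (hu | hu) v hv
  · exact h u hu v hv
  · rcases hX'.subset hu with rfl | huB
    · exact h u hX.mem v hv
    · have hvu := hAB v (hZ hv) u huB
      exact ⟨hvu.1.symm, fun e => (hvu.2 e.symm).elim⟩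

theorem anticomplete_union_left_of_subset (hAB : Anticomplete G A B) (hX : IsLeg G A x X)
    (hX' : IsLeg G B x X') (hZ : Z ⊆ A) (h : Anticomplete G X Z) : Anticomplete G (X ∪ X') Z :=
  hX.forall_union_left_of_subset (R := fun _ _ => False) hAB hX' hZ h

theorem forall_union_union (hAB : Anticomplete G A B) (hX : IsLeg G A x X) (hX' : IsLeg G B x X')
    (hY : IsLeg G A y Y) (hY' : IsLeg G B y Y')
    (h : ∀ u ∈ X, ∀ v ∈ Y, u ≠ v ∧ (G.Adj u v → R u v))
    (h' : ∀ u ∈ X', ∀ v ∈ Y', u ≠ v ∧ (G.Adj u v → R' u v)) :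
    ∀ u ∈ X ∪ X', ∀ v ∈ Y ∪ Y', u ≠ v ∧ (G.Adj u v → R u v ∨ R' u v) := by
  have hinl : ∀ {u v}, u ≠ v ∧ (G.Adj u v → R u v) → u ≠ v ∧ (G.Adj u v → R u v ∨ R' u v) :=
    fun h => ⟨h.1, fun e => Or.inl (h.2 e)⟩
  have hinr : ∀ {u v}, u ≠ v ∧ (G.Adj u v → R' u v) → u ≠ v ∧ (G.Adj u v → R u v ∨ R' u v) :=
    fun h => ⟨h.1, fun e => Or.inr (h.2 e)⟩
  rintro u (hu | hu) v (hv | hv)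
  · exact hinl (h u hu v hv)
  · rcases hX.subset hu with rfl | huA
    · exact hinr (h' u hX'.mem v hv)
    rcases hY'.subset hv with rfl | hvB
    · exact hinl (h u hu v hY.mem)
    · exact ⟨(hAB u huA v hvB).1, fun e => ((hAB u huA v hvB).2 e).elim⟩
  · rcases hX'.subset hu with rfl | huB
    · exact hinl (h u hX.mem v hv)
    rcases hY.subset hv with rfl | hvA
    · exact hinr (h' u hu v hY'.mem)
    · exact ⟨(hAB v hvA u huB).1.symm, fun e => ((hAB v hvA u huB).2 e.symm).elim⟩
  · exact hinr (h' u hu v hv)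

theorem onlyCrossEdge_union_union (hAB : Anticomplete G A B) (hX : IsLeg G A x X)
    (hX' : IsLeg G B x X') (hY : IsLeg G A y Y) (hY' : IsLeg G B y Y')
    (h : OnlyCrossEdge G X Y b b') (h' : Anticomplete G X' Y') :
    OnlyCrossEdge G (X ∪ X') (Y ∪ Y') b b' := fun u hu v hv =>
  have huv := hX.forall_union_union (R' := fun _ _ => False) hAB hX' hY hY' h h' u hu v hv
  ⟨huv.1, fun e => (huv.2 e).resolve_right id⟩

theorem anticomplete_union_union (hAB : Anticomplete G A B) (hX : IsLeg G A x X)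
    (hX' : IsLeg G B x X') (hY : IsLeg G A y Y) (hY' : IsLeg G B y Y')
    (h : Anticomplete G X Y) (h' : Anticomplete G X' Y') :
    Anticomplete G (X ∪ X') (Y ∪ Y') := fun u hu v hv =>
  have huv := hX.forall_union_union (R := fun _ _ => False) (R' := fun _ _ => False)
    hAB hX' hY hY' h h' u hu v hv
  ⟨huv.1, fun e => (huv.2 e).elim id id⟩

end IsLeg

theorem SeparatedTriple.not_hasClaw_of_hasClaw (c : SeparatedTriple G A B x y z)
    (hEH : ¬ContainsEvenHole G) (h : HasClaw G A d x y z) : ¬HasClaw G B b x y z := by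
  rintro ⟨hb, X', Y', Z', ⟨hX', hY', hZ'⟩, ⟨hXY', hXZ', hYZ'⟩, -, bX, bY, bZ⟩
  obtain ⟨hd, X, Y, Z, ⟨hX, hY, hZ⟩, ⟨hXY, hXZ, hYZ⟩, -, dX, dY, dZ⟩ := h
  exact false_of_theta hEH (c.anti d hd b hb).1 (c.anti d hd b hb).2
    (hX.union hX') (hY.union hY') (hZ.union hZ')
    (hX.anticomplete_union_union c.anti hX' hY hY' hXY hXY')
    (hX.anticomplete_union_union c.anti hX' hZ hZ' hXZ hXZ')
    (hY.anticomplete_union_union c.anti hY' hZ hZ' hYZ hYZ')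
    (dX.mono Set.subset_union_left) (dY.mono Set.subset_union_left)
    (dZ.mono Set.subset_union_left) (bX.mono Set.subset_union_right)
    (bY.mono Set.subset_union_right) (bZ.mono Set.subset_union_right)

theorem SeparatedTriple.not_hasTriangle_of_hasClaw (c : SeparatedTriple G A B x y z)
    (hPyr : ¬ContainsPyramid G) (h : HasClaw G A d x y z) : ¬HasTriangle G B d₁ d₂ d₃ x y z := by
  rintro ⟨⟨h12, h23, h13⟩, X', Y', Z', ⟨hX', hY', hZ'⟩, ⟨hXY', hXZ', hYZ'⟩, h₁, h₂, h₃⟩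
  obtain ⟨hd, X, Y, Z, ⟨hX, hY, hZ⟩, ⟨hXY, hXZ, hYZ⟩, ⟨hdX, hdY, hdZ⟩, dX, dY, dZ⟩ := h
  have hdB : d ∉ B := fun h => (c.anti d hd d h).1 rfl
  have hnadj : ∀ b ∈ B, ¬G.Adj d b := fun b hb => (c.anti d hd b hb).2
  refine false_of_pyramid hPyr h12 h23 h13 (hX'.union hX) (hY'.union hY) (hZ'.union hZ)
    (Or.inl h₁) (Or.inl h₂) (Or.inl h₃) (dX.mono Set.subset_union_right)
    (dY.mono Set.subset_union_right) (dZ.mono Set.subset_union_right)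
    (not_or_intro (hX'.notMem hdB fun e => c.xA (e ▸ hd)) hdX)
    (not_or_intro (hY'.notMem hdB fun e => c.yA (e ▸ hd)) hdY)
    (not_or_intro (hZ'.notMem hdB fun e => c.zA (e ▸ hd)) hdZ)
    (hX'.onlyCrossEdge_union_union c.anti.symm hX hY' hY hXY' hXY)
    (hX'.onlyCrossEdge_union_union c.anti.symm hX hZ' hZ hXZ' hXZ)
    (hY'.onlyCrossEdge_union_union c.anti.symm hY hZ' hZ hYZ' hYZ) ?_
  rcases hX'.subset h₁ with rfl | h₁B <;> rcases hY'.subset h₂ with rfl | h₂B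
  · exact (c.nxy h12).elim
  · rcases hZ'.subset h₃ with rfl | h₃B
    · exact (c.nxz h13).elim
    · exact Or.inr (Or.inr ⟨hnadj _ h₂B, hnadj _ h₃B⟩)
  · rcases hZ'.subset h₃ with rfl | h₃B
    · exact (c.nyz h23).elim
    · exact Or.inr (Or.inl ⟨hnadj _ h₁B, hnadj _ h₃B⟩)
  · exact Or.inl ⟨hnadj _ h₁B, hnadj _ h₂B⟩

theorem SeparatedTriple.not_hasTriangle_of_hasTriangle (c : SeparatedTriple G A B x y z)
    (hEH : ¬ContainsEvenHole G) (h : HasTriangle G A d₁ d₂ d₃ x y z) :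
    ¬HasTriangle G B e₁ e₂ e₃ x y z := by
  rintro ⟨⟨h12', h23', h13'⟩, X', Y', Z', ⟨hX', hY', hZ'⟩, ⟨hXY', hXZ', hYZ'⟩, h₁', h₂', h₃'⟩
  obtain ⟨⟨h12, h23, h13⟩, X, Y, Z, ⟨hX, hY, hZ⟩, ⟨hXY, hXZ, hYZ⟩, h₁, h₂, h₃⟩ := h
  have hne : ∀ {a b a' b' : W}, ¬G.Adj a b → G.Adj a' b' → a' = a → b' ≠ b := by
    rintro a b _ _ hnab e rfl rfl
    exact hnab e
  have hne' : ∀ {a b a' b' : W}, ¬G.Adj a b → G.Adj a' b' → b' = b → a' ≠ a :=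
    fun hnab e hb ha => hne hnab e ha hb
  refine false_of_prism hEH h12 h23 h13 h12' h23' h13' (hX.union hX') (hY.union hY') (hZ.union hZ')
    (Or.inl h₁) (Or.inl h₂) (Or.inl h₃) (Or.inr h₁') (Or.inr h₂') (Or.inr h₃')
    (hX.forall_union_union c.anti hX' hY hY' hXY hXY')
    (hX.forall_union_union c.anti hX' hZ hZ' hXZ hXZ')
    (hY.forall_union_union c.anti hY' hZ hZ' hYZ hYZ') ?_ ?_ ?_
  · rintro rfl
    have hx := hX.eq_of_mem_of_mem c.anti hX' h₁ h₁'
    exact ⟨hY.anticomplete_diff c.anti hY' _ ⟨h₂, hne c.nxy h12 hx⟩ _ ⟨h₂', hne c.nxy h12' hx⟩,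
      hZ.anticomplete_diff c.anti hZ' _ ⟨h₃, hne c.nxz h13 hx⟩ _ ⟨h₃', hne c.nxz h13' hx⟩⟩
  · rintro rfl
    have hy := hY.eq_of_mem_of_mem c.anti hY' h₂ h₂'
    exact ⟨hX.anticomplete_diff c.anti hX' _ ⟨h₁, hne' c.nxy h12 hy⟩ _ ⟨h₁', hne' c.nxy h12' hy⟩,
      hZ.anticomplete_diff c.anti hZ' _ ⟨h₃, hne c.nyz h23 hy⟩ _ ⟨h₃', hne c.nyz h23' hy⟩⟩
  · rintro rfl
    have hz := hZ.eq_of_mem_of_mem c.anti hZ' h₃ h₃'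
    exact ⟨hX.anticomplete_diff c.anti hX' _ ⟨h₁, hne' c.nxz h13 hz⟩ _ ⟨h₁', hne' c.nxz h13' hz⟩,
      hY.anticomplete_diff c.anti hY' _ ⟨h₂, hne' c.nyz h23 hz⟩ _ ⟨h₂', hne' c.nyz h23' hz⟩⟩

theorem SeparatedTriple.adj_of_hasClaw_of_isMiddle (c : SeparatedTriple G A B x y z)
    (hEH : ¬ContainsEvenHole G) (h : HasClaw G A d x y z) (h' : IsMiddle G B z x y) :
    G.Adj d z := by
  by_contra hdz
  obtain ⟨hd, X, Y, Z, ⟨hX, hY, hZ⟩, ⟨hXY, hXZ, hYZ⟩, -, dX, dY, dZ⟩ := h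
  obtain ⟨X', Y', hX', hY', hXY', zX, zY⟩ := h'
  obtain ⟨Z₀, hZ₀, hconn, dZ₀, zZ₀⟩ :=
    hZ.connectedOn.exists_connectedOn_diff_of_hasNeighborIn hZ.mem dZ hdz
  have hZ₀A := hZ.subset_of_subset_diff hZ₀
  have hZ₀Z := hZ₀.trans Set.sdiff_subset
  exact false_of_theta hEH (fun e : d = z => c.zA (e ▸ hd)) hdz (hX.union hX') (hY.union hY') hconn
    (hX.anticomplete_union_union c.anti hX' hY hY' hXY hXY')
    (hX.anticomplete_union_left_of_subset c.anti hX' hZ₀A (hXZ.mono subset_rfl hZ₀Z))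
    (hY.anticomplete_union_left_of_subset c.anti hY' hZ₀A (hYZ.mono subset_rfl hZ₀Z))
    (dX.mono Set.subset_union_left) (dY.mono Set.subset_union_left) dZ₀
    (zX.mono Set.subset_union_right) (zY.mono Set.subset_union_right) zZ₀

theorem SeparatedTriple.eq_of_hasTriangle_of_isMiddle (c : SeparatedTriple G A B x y z)
    (hPyr : ¬ContainsPyramid G) (h : HasTriangle G A d₁ d₂ d₃ x y z) (h' : IsMiddle G B z x y) :
    d₃ = z := by
  by_contra hdz
  obtain ⟨⟨h12, h23, h13⟩, X, Y, Z, ⟨hX, hY, hZ⟩, ⟨hXY, hXZ, hYZ⟩, h₁, h₂, h₃⟩ := h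
  obtain ⟨X', Y', hX', hY', hXY', zX, zY⟩ := h'
  obtain ⟨Z₀, hZ₀, hconn, hd₃, zZ₀⟩ := hZ.connectedOn.exists_connectedOn_diff_of_mem hZ.mem h₃ hdz
  have hZ₀A := hZ.subset_of_subset_diff hZ₀
  refine false_of_pyramid hPyr h12 h23 h13 (hX.union hX') (hY.union hY') hconn
    (Or.inl h₁) (Or.inl h₂) hd₃ (zX.mono Set.subset_union_right) (zY.mono Set.subset_union_right)
    zZ₀ (not_or_intro (hX.notMem c.zA c.xz.symm) (hX'.notMem c.zB c.xz.symm))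
    (not_or_intro (hY.notMem c.zA c.yz.symm) (hY'.notMem c.zB c.yz.symm)) (fun h => (hZ₀ h).2 rfl)
    (hX.onlyCrossEdge_union_union c.anti hX' hY hY' hXY hXY')
    (hX.forall_union_left_of_subset c.anti hX' hZ₀A fun u hu v hv => hXZ u hu v (hZ₀ hv).1)
    (hY.forall_union_left_of_subset c.anti hY' hZ₀A fun u hu v hv => hYZ u hu v (hZ₀ hv).1)
    (Or.inl ⟨fun e => hdz ?_, fun e => hdz ?_⟩)
  · exact ((hXZ d₁ h₁ z hZ.mem).2 e.symm).2.symm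
  · exact ((hYZ d₂ h₂ z hZ.mem).2 e.symm).2.symm

theorem SeparatedTriple.not_isMiddle_of_isMiddle (c : SeparatedTriple G A B x y z)
    (hEH : ¬ContainsEvenHole G) (h : IsMiddle G A z x y) : ¬IsMiddle G B x y z := by
  rintro ⟨Y', Z', hY', hZ', hYZ', xY, xZ⟩
  obtain ⟨X, Y, hX, hY, hXY, zX, zY⟩ := h
  obtain ⟨X₀, hX₀, hX₀conn, zX₀, xX₀⟩ :=
    hX.connectedOn.exists_connectedOn_diff_of_hasNeighborIn hX.mem zX fun e => c.nxz e.symm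
  obtain ⟨Z₀, hZ₀, hZ₀conn, xZ₀, zZ₀⟩ :=
    hZ'.connectedOn.exists_connectedOn_diff_of_hasNeighborIn hZ'.mem xZ c.nxz
  have hX₀A := hX.subset_of_subset_diff hX₀
  have hZ₀B := hZ'.subset_of_subset_diff hZ₀
  have hYX₀ : Anticomplete G (Y ∪ Y') X₀ := hY.anticomplete_union_left_of_subset c.anti hY' hX₀A
    (hXY.symm.mono subset_rfl (hX₀.trans Set.sdiff_subset))
  have hYZ₀ : Anticomplete G (Y' ∪ Y) Z₀ :=
    hY'.anticomplete_union_left_of_subset c.anti.symm hY hZ₀B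
      (hYZ'.mono subset_rfl (hZ₀.trans Set.sdiff_subset))
  rw [Set.union_comm] at hYZ₀
  exact false_of_theta hEH c.xz c.nxz (hY.union hY') hX₀conn hZ₀conn hYX₀ hYZ₀
    (c.anti.mono hX₀A hZ₀B) (xY.mono Set.subset_union_right) xX₀ xZ₀
    (zY.mono Set.subset_union_left) zX₀ zZ₀

end Connectors

section Trichotomy

variable {W : Type} {G : SimpleGraph W} {A B : Set W} {p r : ℕ → W} {n s f l : ℕ}
  {x y z w d d₁ d₂ d₃ : W}

/-- The induced path `r` meets the induced path `p` only through edges at its last vertex `r s`,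
whose first and last neighbors on `p` are `p f` and `p l`. The interior of `p` and all of `r` but
its first vertex lie in `A`. -/
structure IsPathContact (G : SimpleGraph W) (A : Set W) (p : ℕ → W) (n : ℕ) (r : ℕ → W)
    (s f l : ℕ) : Prop where
  path : IsInducedPath G p n
  arm : IsInducedPath G r s
  path_mem : ∀ i, 0 < i → i < n → p i ∈ A
  arm_mem : ∀ i, 0 < i → i ≤ s → r i ∈ A
  ne : ∀ i ≤ n, ∀ j ≤ s, p i ≠ r j
  not_adj : ∀ j < s, ∀ i ≤ n, ¬G.Adj (r j) (p i)
  le_last : f ≤ l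
  last_le : l ≤ n
  adj_first : G.Adj (r s) (p f)
  adj_last : G.Adj (r s) (p l)
  bounds : ∀ i ≤ n, G.Adj (r s) (p i) → f ≤ i ∧ i ≤ l

namespace IsPathContact

variable {i j k : ℕ}

theorem isLeg_initial (h : IsPathContact G A p n r s f l) (hj : j < n) :
    IsLeg G A (p 0) (p '' Set.Icc 0 j) where
  connectedOn := h.path.connectedOn_image (by omega) (by omega)
  mem := apply_mem_image_Icc le_rfl (by omega)
  subset := by
    rintro _ ⟨t, ⟨-, htj⟩, rfl⟩
    rcases Nat.eq_zero_or_pos t with rfl | ht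
    · exact Or.inl rfl
    · exact Or.inr (h.path_mem t ht (by omega))

theorem isLeg_final (h : IsPathContact G A p n r s f l) (hj : 0 < j) (hjn : j ≤ n) :
    IsLeg G A (p n) (p '' Set.Icc j n) where
  connectedOn := h.path.connectedOn_image hjn le_rfl
  mem := apply_mem_image_Icc hjn le_rfl
  subset := by
    rintro _ ⟨t, ⟨hjt, htn⟩, rfl⟩
    rcases htn.eq_or_lt with rfl | ht
    · exact Or.inl rfl
    · exact Or.inr (h.path_mem t (by omega) ht)

theorem isLeg_arm (h : IsPathContact G A p n r s f l) (hj : j ≤ s) :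
    IsLeg G A (r 0) (r '' Set.Icc 0 j) where
  connectedOn := h.arm.connectedOn_image (by omega) hj
  mem := apply_mem_image_Icc le_rfl (by omega)
  subset := by
    rintro _ ⟨t, ⟨-, htj⟩, rfl⟩
    rcases Nat.eq_zero_or_pos t with rfl | ht
    · exact Or.inl rfl
    · exact Or.inr (h.arm_mem t ht (by omega))

theorem anticomplete_arm (h : IsPathContact G A p n r s f l) (hj : j ≤ n) (hij : j < f ∨ l < i) :
    Anticomplete G (p '' Set.Icc i j) (r '' Set.Icc 0 s) := by
  rintro _ ⟨t, ⟨hit, htj⟩, rfl⟩ _ ⟨u, ⟨-, hus⟩, rfl⟩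
  refine ⟨h.ne t (by omega) u hus, fun e => ?_⟩
  rcases hus.eq_or_lt with rfl | hu
  · have := h.bounds t (by omega) e.symm
    omega
  · exact h.not_adj u hu t (by omega) e.symm

theorem anticomplete_arm_of_lt (h : IsPathContact G A p n r s f l) (hj : j ≤ n) (hk : k < s) :
    Anticomplete G (p '' Set.Icc i j) (r '' Set.Icc 0 k) := by
  rintro _ ⟨t, ⟨-, htj⟩, rfl⟩ _ ⟨u, ⟨-, hus⟩, rfl⟩
  exact ⟨h.ne t (by omega) u (by omega), fun e => h.not_adj u (by omega) t (by omega) e.symm⟩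

theorem onlyCrossEdge_arm (h : IsPathContact G A p n r s f l) (hj : j ≤ n)
    (hk : ∀ t, i ≤ t → t ≤ j → f ≤ t → t ≤ l → t = k) :
    OnlyCrossEdge G (p '' Set.Icc i j) (r '' Set.Icc 0 s) (p k) (r s) := by
  rintro _ ⟨t, ⟨hit, htj⟩, rfl⟩ _ ⟨u, ⟨-, hus⟩, rfl⟩
  refine ⟨h.ne t (by omega) u hus, fun e => ?_⟩
  rcases hus.eq_or_lt with rfl | hu
  · have ht := h.bounds t (by omega) e.symm
    rw [hk t hit htj ht.1 ht.2]
    exact ⟨rfl, rfl⟩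
  · exact (h.not_adj u hu t (by omega) e.symm).elim

theorem notMem_arm (h : IsPathContact G A p n r s f l) (hi : i ≤ n) :
    p i ∉ r '' Set.Icc 0 s := by
  rintro ⟨t, ⟨-, ht⟩, e⟩
  exact h.ne i hi t ht e.symm

theorem arm_notMem (h : IsPathContact G A p n r s f l) (hj : j ≤ n) : r s ∉ p '' Set.Icc i j := by
  rintro ⟨t, ⟨-, ht⟩, e⟩
  exact h.ne t (by omega) s le_rfl e

theorem isMiddle_initial (h : IsPathContact G A p n r s 0 0) (hn : 0 < n) :
    IsMiddle G A (p 0) (p n) (r 0) :=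
  ⟨_, _, h.isLeg_final one_pos hn, h.isLeg_arm le_rfl, h.anticomplete_arm le_rfl (by omega),
    ⟨p 1, apply_mem_image_Icc le_rfl hn, h.path.adj_succ hn⟩,
    ⟨r s, apply_mem_image_Icc (by omega) le_rfl, h.adj_first.symm⟩⟩

theorem isMiddle_final (h : IsPathContact G A p (n + 1) r s (n + 1) (n + 1)) :
    IsMiddle G A (p (n + 1)) (p 0) (r 0) :=
  ⟨_, _, h.isLeg_initial n.lt_succ_self, h.isLeg_arm le_rfl,
    h.anticomplete_arm (by omega) (by omega),
    ⟨p n, apply_mem_image_Icc (by omega) le_rfl, (h.path.adj_succ le_rfl).symm⟩,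
    ⟨r s, apply_mem_image_Icc (by omega) le_rfl, h.adj_first.symm⟩⟩

theorem hasClaw_of_eq (h : IsPathContact G A p n r s f f) (hf : 0 < f) (hfn : f < n) :
    HasClaw G A (p f) (p 0) (p n) (r 0) := by
  have hpred : G.Adj (p f) (p (f - 1)) := (h.path.adj _ _ (by omega) (by omega)).2 (by omega)
  exact ⟨h.path_mem f hf hfn, p '' Set.Icc 0 (f - 1), p '' Set.Icc (f + 1) n, r '' Set.Icc 0 s,
    ⟨h.isLeg_initial (by omega), h.isLeg_final (by omega) hfn, h.isLeg_arm le_rfl⟩,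
    ⟨h.path.anticomplete_image (by omega) le_rfl, h.anticomplete_arm (by omega) (by omega),
      h.anticomplete_arm le_rfl (by omega)⟩,
    ⟨h.path.notMem_image (by omega) (by omega) (by omega),
      h.path.notMem_image le_rfl (by omega) (by omega), h.notMem_arm hfn.le⟩,
    ⟨p (f - 1), apply_mem_image_Icc (by omega) le_rfl, hpred⟩,
    ⟨p (f + 1), apply_mem_image_Icc le_rfl hfn, h.path.adj_succ hfn⟩,
    ⟨r s, apply_mem_image_Icc (by omega) le_rfl, h.adj_first.symm⟩⟩

theorem hasTriangle_of_succ (h : IsPathContact G A p n r s f (f + 1)) :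
    HasTriangle G A (p f) (p (f + 1)) (r s) (p 0) (p n) (r 0) :=
  have hfn := h.last_le
  ⟨⟨h.path.adj_succ hfn, h.adj_last.symm, h.adj_first.symm⟩,
    p '' Set.Icc 0 f, p '' Set.Icc (f + 1) n, r '' Set.Icc 0 s,
    ⟨h.isLeg_initial hfn, h.isLeg_final (by omega) hfn, h.isLeg_arm le_rfl⟩,
    ⟨h.path.onlyCrossEdge_image le_rfl, h.onlyCrossEdge_arm (by omega) (by omega),
      h.onlyCrossEdge_arm le_rfl (by omega)⟩,
    apply_mem_image_Icc (by omega) le_rfl, apply_mem_image_Icc le_rfl hfn,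
    apply_mem_image_Icc (by omega) le_rfl⟩

theorem isMiddle_of_add_two_le (h : IsPathContact G A p n r 0 f l) (hfl : f + 2 ≤ l) :
    IsMiddle G A (r 0) (p 0) (p n) :=
  have hln := h.last_le
  ⟨p '' Set.Icc 0 f, p '' Set.Icc l n, h.isLeg_initial (by omega), h.isLeg_final (by omega) hln,
    h.path.anticomplete_image hfl le_rfl, ⟨p f, apply_mem_image_Icc (by omega) le_rfl, h.adj_first⟩,
    ⟨p l, apply_mem_image_Icc le_rfl hln, h.adj_last⟩⟩

theorem hasClaw_of_add_two_le (h : IsPathContact G A p n r s f l) (hfl : f + 2 ≤ l) (hs : 0 < s) :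
    HasClaw G A (r s) (p 0) (p n) (r 0) := by
  have hln := h.last_le
  have hpred : G.Adj (r s) (r (s - 1)) := (h.arm.adj _ _ (by omega) (by omega)).2 (by omega)
  exact ⟨h.arm_mem s hs le_rfl, p '' Set.Icc 0 f, p '' Set.Icc l n, r '' Set.Icc 0 (s - 1),
    ⟨h.isLeg_initial (by omega), h.isLeg_final (by omega) hln, h.isLeg_arm (by omega)⟩,
    ⟨h.path.anticomplete_image hfl le_rfl, h.anticomplete_arm_of_lt (by omega) (by omega),
      h.anticomplete_arm_of_lt le_rfl (by omega)⟩,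
    ⟨h.arm_notMem (by omega), h.arm_notMem le_rfl, h.arm.notMem_image (by omega) le_rfl (by omega)⟩,
    ⟨p f, apply_mem_image_Icc (by omega) le_rfl, h.adj_first⟩,
    ⟨p l, apply_mem_image_Icc le_rfl hln, h.adj_last⟩,
    ⟨r (s - 1), apply_mem_image_Icc (by omega) le_rfl, hpred⟩⟩

end IsPathContact

/-- The vertex `w` is one of `x`, `y`, `z` and is a middle vertex for the other two. -/
def IsMiddleAmong (G : SimpleGraph W) (B : Set W) (x y z w : W) : Prop :=
  (w = x ∧ IsMiddle G B x y z) ∨ (w = y ∧ IsMiddle G B y x z) ∨ (w = z ∧ IsMiddle G B z x y)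

theorem IsMiddleAmong.eq_or_eq_or_eq (h : IsMiddleAmong G B x y z w) : w = x ∨ w = y ∨ w = z :=
  h.imp And.left (.imp And.left And.left)

theorem IsPathContact.trichotomy (h : IsPathContact G B p n r s f l) (hn : 0 < n) :
    (∃ d, HasClaw G B d (p 0) (p n) (r 0)) ∨
      (∃ d₁ d₂ d₃, HasTriangle G B d₁ d₂ d₃ (p 0) (p n) (r 0)) ∨
      ∃ w, IsMiddleAmong G B (p 0) (p n) (r 0) w := by
  have hfl := h.le_last
  rcases lt_trichotomy l (f + 1) with hl | rfl | hl
  · obtain rfl : f = l := by omega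
    rcases Nat.eq_zero_or_pos f with rfl | hf
    · exact Or.inr (Or.inr ⟨_, Or.inl ⟨rfl, h.isMiddle_initial hn⟩⟩)
    rcases h.last_le.eq_or_lt with rfl | hfn
    · obtain ⟨n, rfl⟩ := Nat.exists_eq_add_of_le' hn
      exact Or.inr (Or.inr ⟨_, Or.inr (Or.inl ⟨rfl, h.isMiddle_final⟩)⟩)
    · exact Or.inl ⟨_, h.hasClaw_of_eq hf hfn⟩
  · exact Or.inr (Or.inl ⟨_, _, _, h.hasTriangle_of_succ⟩)
  · rcases Nat.eq_zero_or_pos s with rfl | hs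
    · exact Or.inr (Or.inr ⟨_, Or.inr (Or.inr ⟨rfl, h.isMiddle_of_add_two_le hl⟩)⟩)
    · exact Or.inl ⟨_, h.hasClaw_of_add_two_le hl hs⟩

/-- A separated triple all of whose vertices attach to the connected side `B`. -/
structure AttachedTriple (G : SimpleGraph W) (A B : Set W) (x y z : W) : Prop
    extends SeparatedTriple G A B x y z where
  connB : ConnectedOn G B
  atx : HasNeighborIn G x B
  aty : HasNeighborIn G y B
  atz : HasNeighborIn G z B

theorem AttachedTriple.swap12 (c : AttachedTriple G A B x y z) : AttachedTriple G A B y x z :=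
  ⟨c.toSeparatedTriple.swap12, c.connB, c.aty, c.atx, c.atz⟩

theorem AttachedTriple.trichotomy (c : AttachedTriple G A B x y z) :
    (∃ d, HasClaw G B d x y z) ∨ (∃ d₁ d₂ d₃, HasTriangle G B d₁ d₂ d₃ x y z) ∨
      ∃ w, IsMiddleAmong G B x y z w := by
  obtain ⟨n, p, hn, hp, p0, pn, pB⟩ :=
    c.connB.exists_isInducedPath_through c.atx c.aty c.xy c.nxy
  have hzP : z ∉ p '' Set.Icc 0 n := by
    rintro ⟨i, ⟨-, hi⟩, e⟩
    rcases Nat.eq_zero_or_pos i with rfl | hi0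
    · exact c.xz (p0.symm.trans e)
    rcases hi.eq_or_lt with rfl | hin
    · exact c.yz (pn.symm.trans e)
    · exact c.zB (e ▸ pB i hi0 hin)
  obtain ⟨s, r, hr, r0, hrB, ⟨_, ⟨t, ⟨-, ht⟩, rfl⟩, ha⟩, hlast⟩ :=
    (c.connB.insert c.atz).exists_first_contact (Or.inl rfl) hzP
      ⟨p 1, Or.inr (pB 1 (by omega) (by omega)), apply_mem_image_Icc (by omega) (by omega)⟩
  obtain ⟨f, l, hfl, hln, hf, hl, hout⟩ :=
    exists_first_last (Q := fun i => G.Adj (r s) (p i)) ⟨t, ht, ha⟩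
  have hcontact : IsPathContact G B p n r s f l :=
    ⟨hp, hr, pB, fun i hi his => (hrB i his).1.resolve_left fun e => by
        have := hr.inj i 0 his (by omega) (e.trans r0.symm)
        omega,
      fun i hi j hj e => (hrB j hj).2 (e ▸ apply_mem_image_Icc (by omega) hi),
      fun j hj i hi e => hlast j hj ⟨p i, apply_mem_image_Icc (by omega) hi, e⟩,
      hfl, hln, hf, hl, hout⟩
  rw [← p0, ← pn, ← r0]
  exact hcontact.trichotomy (by omega)

theorem AttachedTriple.exists_isMiddleAmong_of_hasClaw (c : AttachedTriple G A B x y z)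
    (hEH : ¬ContainsEvenHole G) (hPyr : ¬ContainsPyramid G) (h : HasClaw G A d x y z) :
    ∃ w, IsMiddleAmong G B x y z w := by
  rcases c.trichotomy with ⟨d', h'⟩ | ⟨e₁, e₂, e₃, h'⟩ | hw
  · exact (c.not_hasClaw_of_hasClaw hEH h h').elim
  · exact (c.not_hasTriangle_of_hasClaw hPyr h h').elim
  · exact hw

theorem AttachedTriple.exists_isMiddleAmong_of_hasTriangle (c : AttachedTriple G A B x y z)
    (hEH : ¬ContainsEvenHole G) (hPyr : ¬ContainsPyramid G) (h : HasTriangle G A d₁ d₂ d₃ x y z) :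
    ∃ w, IsMiddleAmong G B x y z w := by
  rcases c.trichotomy with ⟨d', h'⟩ | ⟨e₁, e₂, e₃, h'⟩ | hw
  · exact (c.flip.not_hasTriangle_of_hasClaw hPyr h' h).elim
  · exact (c.not_hasTriangle_of_hasTriangle hEH h h').elim
  · exact hw

namespace SeparatedTriple

theorem adj_of_hasClaw_of_isMiddleAmong (c : SeparatedTriple G A B x y z)
    (hEH : ¬ContainsEvenHole G) (h : HasClaw G A d x y z) (hw : IsMiddleAmong G B x y z w) :
    G.Adj d w := by
  rcases hw with ⟨rfl, h'⟩ | ⟨rfl, h'⟩ | ⟨rfl, h'⟩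
  · exact c.swap12.swap23.adj_of_hasClaw_of_isMiddle hEH h.swap12.swap23 h'
  · exact c.swap23.adj_of_hasClaw_of_isMiddle hEH h.swap23 h'
  · exact c.adj_of_hasClaw_of_isMiddle hEH h h'

theorem eq_of_hasTriangle_of_isMiddleAmong (c : SeparatedTriple G A B x y z)
    (hPyr : ¬ContainsPyramid G) (h : HasTriangle G A d₁ d₂ d₃ x y z)
    (hw : IsMiddleAmong G B x y z w) : (w = x ∧ d₁ = x) ∨ (w = y ∧ d₂ = y) ∨ (w = z ∧ d₃ = z) := by
  rcases hw with ⟨rfl, h'⟩ | ⟨rfl, h'⟩ | ⟨rfl, h'⟩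
  · exact Or.inl
      ⟨rfl, c.swap12.swap23.eq_of_hasTriangle_of_isMiddle hPyr h.swap12.swap23 h'⟩
  · exact Or.inr (Or.inl ⟨rfl, c.swap23.eq_of_hasTriangle_of_isMiddle hPyr h.swap23 h'⟩)
  · exact Or.inr (Or.inr ⟨rfl, c.eq_of_hasTriangle_of_isMiddle hPyr h h'⟩)

theorem eq_of_isMiddle_of_isMiddleAmong (c : SeparatedTriple G A B x y z)
    (hEH : ¬ContainsEvenHole G) (h : IsMiddle G A z x y) (hw : IsMiddleAmong G B x y z w) :
    w = z := by
  rcases hw with ⟨rfl, h'⟩ | ⟨rfl, h'⟩ | ⟨rfl, -⟩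
  · exact (c.not_isMiddle_of_isMiddle hEH h h').elim
  · exact (c.swap12.not_isMiddle_of_isMiddle hEH h.swap h').elim
  · rfl

end SeparatedTriple

/-- The vertex `z` has two distinct nonadjacent neighbors in `A`. -/
def HasNonadjNeighbors (G : SimpleGraph W) (A : Set W) (z : W) : Prop :=
  ∃ a ∈ A, ∃ b ∈ A, G.Adj z a ∧ G.Adj z b ∧ a ≠ b ∧ ¬G.Adj a b

theorem IsMiddle.hasNonadjNeighbors (h : IsMiddle G A z x y) (hx : ¬G.Adj z x)
    (hy : ¬G.Adj z y) : HasNonadjNeighbors G A z := by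
  obtain ⟨X, Y, hX, hY, hXY, ⟨a, ha, ea⟩, ⟨b, hb, eb⟩⟩ := h
  exact ⟨a, (hX.subset ha).resolve_left fun e => hx (e ▸ ea),
    b, (hY.subset hb).resolve_left fun e => hy (e ▸ eb), ea, eb, hXY a ha b hb⟩

/-- An induced path in `A` on which `x` has only the first vertex as a neighbor, and `y` only the
last one. -/
structure IsLinkingPath (G : SimpleGraph W) (A : Set W) (p : ℕ → W) (n : ℕ) (x y : W) : Prop where
  path : IsInducedPath G p n
  mem : ∀ i ≤ n, p i ∈ A
  adj_left : ∀ i ≤ n, (G.Adj x (p i) ↔ i = 0)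
  adj_right : ∀ i ≤ n, (G.Adj y (p i) ↔ i = n)

namespace IsLinkingPath

theorem rev (hp : IsLinkingPath G A p n x y) : IsLinkingPath G A (fun t => p (n - t)) n y x where
  path := hp.path.rev n le_rfl
  mem i _ := hp.mem _ (by omega)
  adj_left i _ := by
    rw [hp.adj_right _ (by omega)]
    omega
  adj_right i _ := by
    rw [hp.adj_left _ (by omega)]
    omega

theorem exists_isPathContact (hp : IsLinkingPath G A p n x y) (hxA : x ∉ A) (hyA : y ∉ A)
    (hxy : x ≠ y) (hnxy : ¬G.Adj x y) (hr : IsInducedPath G r s)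
    (hrA : ∀ i, 0 < i → i ≤ s → r i ∈ A) (hrx : ∀ j ≤ s, x ≠ r j ∧ ¬G.Adj (r j) x)
    (hry : ∀ j ≤ s, y ≠ r j ∧ ¬G.Adj (r j) y) (hne : ∀ i ≤ n, ∀ j ≤ s, p i ≠ r j)
    (hnadj : ∀ j < s, ∀ i ≤ n, ¬G.Adj (r j) (p i)) (hfl : f ≤ l) (hln : l ≤ n)
    (hf : G.Adj (r s) (p f)) (hl : G.Adj (r s) (p l))
    (hout : ∀ i ≤ n, G.Adj (r s) (p i) → f ≤ i ∧ i ≤ l) :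
    ∃ q, IsPathContact G A q (n + 2) r s (f + 1) (l + 1) ∧ q 0 = x ∧
      (∀ i ≤ n, q (i + 1) = p i) ∧ q (n + 2) = y := by
  obtain ⟨q, hq, q0, hqp, qlast⟩ := hp.path.exists_extend (x := x) (y := y)
    (fun i hi e => hxA (e ▸ hp.mem i hi)) (fun i hi e => hyA (e ▸ hp.mem i hi)) hxy hnxy
    hp.adj_left hp.adj_right
  have hcases : ∀ i ≤ n + 2, i = 0 ∨ (∃ k ≤ n, i = k + 1) ∨ i = n + 2 := fun i hi => by
    rcases i with - | i
    · exact Or.inl rfl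
    rcases Nat.lt_or_ge n i with h | h
    · omega
    · exact Or.inr (Or.inl ⟨i, h, rfl⟩)
  refine ⟨q, ⟨hq, hr, fun i hi hin => ?_, hrA, fun i hi j hj => ?_, fun j hj i hi => ?_, by omega,
    by omega, by rwa [hqp f (by omega)], by rwa [hqp l hln], fun i hi e => ?_⟩, q0, hqp, qlast⟩
  · obtain ⟨k, rfl⟩ := Nat.exists_eq_add_of_le' hi
    exact hqp k (by omega) ▸ hp.mem k (by omega)
  · rcases hcases i hi with rfl | ⟨k, hk, rfl⟩ | rfl
    · exact q0 ▸ (hrx j hj).1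
    · exact hqp k hk ▸ hne k hk j hj
    · exact qlast ▸ (hry j hj).1
  · rcases hcases i hi with rfl | ⟨k, hk, rfl⟩ | rfl
    · exact q0 ▸ (hrx j hj.le).2
    · exact hqp k hk ▸ hnadj j hj k hk
    · exact qlast ▸ (hry j hj.le).2
  · rcases hcases i hi with rfl | ⟨k, hk, rfl⟩ | rfl
    · exact ((hrx s le_rfl).2 (q0 ▸ e)).elim
    · have := hout k hk (hqp k hk ▸ e)
      omega
    · exact ((hry s le_rfl).2 (qlast ▸ e)).elim

theorem trichotomy (hp : IsLinkingPath G A p n x y) (c : SeparatedTriple G A B x y z)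
    (hfl : f ≤ l) (hln : l ≤ n) (hf : G.Adj z (p f)) (hl : G.Adj z (p l))
    (hout : ∀ i ≤ n, G.Adj z (p i) → f ≤ i ∧ i ≤ l) :
    (f = l ∧ HasClaw G A (p f) x y z) ∨ (l = f + 1 ∧ HasTriangle G A (p f) (p l) z x y z) ∨
      (f + 2 ≤ l ∧ IsMiddle G A z x y) := by
  obtain ⟨q, hq, q0, hqp, qlast⟩ := hp.exists_isPathContact c.xA c.yA c.xy c.nxy
    (IsInducedPath.refl z) (fun _ _ _ => by omega) (fun _ _ => ⟨c.xz, fun e => c.nxz e.symm⟩)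
    (fun _ _ => ⟨c.yz, fun e => c.nyz e.symm⟩) (fun i hi _ _ e => c.zA (e ▸ hp.mem i hi))
    (fun _ _ => by omega) hfl hln hf hl hout
  rcases lt_trichotomy l (f + 1) with h | rfl | h
  · obtain rfl : f = l := by omega
    have hclaw := hq.hasClaw_of_eq (by omega) (by omega)
    rw [q0, hqp f hln, qlast] at hclaw
    exact Or.inl ⟨rfl, hclaw⟩
  · have htri := hq.hasTriangle_of_succ
    rw [q0, hqp f (by omega), hqp (f + 1) hln, qlast] at htri
    exact Or.inr (Or.inl ⟨rfl, htri⟩)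
  · have hmid := hq.isMiddle_of_add_two_le (by omega)
    rw [q0, qlast] at hmid
    exact Or.inr (Or.inr ⟨h, hmid⟩)

theorem eq_zero_of_adj (hp : IsLinkingPath G A p n x y) (c : AttachedTriple G A B x y z)
    (hEH : ¬ContainsEvenHole G) (hPyr : ¬ContainsPyramid G) (hM : IsMiddle G B x y z)
    {i : ℕ} (hi : i ≤ n) (hz : G.Adj z (p i)) : i = 0 := by
  obtain ⟨f, l, hfl, hln, hf, hl, hout⟩ :=
    exists_first_last (Q := fun i => G.Adj z (p i)) ⟨i, hi, hz⟩
  have hx : IsMiddleAmong G B x y z x := Or.inl ⟨rfl, hM⟩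
  rcases hp.trichotomy c.toSeparatedTriple hfl hln hf hl hout with
    ⟨rfl, hclaw⟩ | ⟨rfl, htri⟩ | ⟨-, hmid⟩
  · have hadj := c.adj_of_hasClaw_of_isMiddleAmong hEH hclaw hx
    rw [G.adj_comm, hp.adj_left f hln] at hadj
    have := hout i hi hz
    omega
  · rcases c.eq_of_hasTriangle_of_isMiddleAmong hPyr htri hx with h | h | h
    · exact (c.xA (h.2 ▸ hp.mem f (by omega))).elim
    · exact (c.xy h.1).elim
    · exact (c.xz h.1).elim
  · exact (c.xz (c.eq_of_isMiddle_of_isMiddleAmong hEH hmid hx)).elim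

theorem eq_last_of_adj (hp : IsLinkingPath G A p n x y) (c : AttachedTriple G A B x y z)
    (hEH : ¬ContainsEvenHole G) (hPyr : ¬ContainsPyramid G) (hM : IsMiddle G B y x z)
    {i : ℕ} (hi : i ≤ n) (hz : G.Adj z (p i)) : i = n := by
  have := hp.rev.eq_zero_of_adj c.swap12 hEH hPyr hM (i := n - i) (by omega)
    (by rwa [Nat.sub_sub_self hi])
  omega

theorem exists_isMiddleAmong (hp : IsLinkingPath G A p n x y) (c : AttachedTriple G A B x y z)
    (hEH : ¬ContainsEvenHole G) (hPyr : ¬ContainsPyramid G) (hz : ∃ i ≤ n, G.Adj z (p i))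
    (hno : ∀ i j, i ≤ n → j ≤ n → i + 2 ≤ j → ¬(G.Adj z (p i) ∧ G.Adj z (p j))) :
    ∃ w, IsMiddleAmong G B x y z w := by
  obtain ⟨f, l, hfl, hln, hf, hl, hout⟩ := exists_first_last (Q := fun i => G.Adj z (p i)) hz
  rcases hp.trichotomy c.toSeparatedTriple hfl hln hf hl hout with
    ⟨-, hclaw⟩ | ⟨-, htri⟩ | ⟨h, -⟩
  · exact c.exists_isMiddleAmong_of_hasClaw hEH hPyr hclaw
  · exact c.exists_isMiddleAmong_of_hasTriangle hEH hPyr htri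
  · exact (hno f l (by omega) hln h ⟨hf, hl⟩).elim

end IsLinkingPath

end Trichotomy

section PrivatePaths

variable {W : Type} {G : SimpleGraph W} {A B I J : Set W} {p r : ℕ → W} {n s f l k : ℕ}
  {a x y z w : W}

/-- `A` and `B` are anticomplete connected sets, and `I` is an independent set all of whose
vertices attach to both, hence lie outside both. -/
structure IndepBetween (G : SimpleGraph W) (A B I : Set W) : Prop where
  connA : ConnectedOn G A
  connB : ConnectedOn G B
  anti : Anticomplete G A B
  indep : ∀ x ∈ I, ∀ y ∈ I, ¬G.Adj x y
  attachA : ∀ x ∈ I, HasNeighborIn G x A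
  attachB : ∀ x ∈ I, HasNeighborIn G x B

/-- The vertex `a` is the only neighbor in `A` of the vertex `x` of `I`. -/
def IsPrivateNeighbor (G : SimpleGraph W) (A I : Set W) (a x : W) : Prop :=
  x ∈ I ∧ ∀ b ∈ A, (G.Adj x b ↔ b = a)

/-- An induced path in `A` both of whose ends are private neighbors of vertices of `I`. -/
structure IsPrivatePath (G : SimpleGraph W) (A I : Set W) (p : ℕ → W) (n : ℕ) : Prop where
  path : IsInducedPath G p n
  mem : ∀ i ≤ n, p i ∈ A
  left : ∃ x, IsPrivateNeighbor G A I (p 0) x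
  right : ∃ x, IsPrivateNeighbor G A I (p n) x

namespace IndepBetween

theorem notMemA (h : IndepBetween G A B I) (x : W) (hx : x ∈ I) : x ∉ A :=
  fun hA => h.anti.not_hasNeighborIn hA (h.attachB x hx)

theorem notMemB (h : IndepBetween G A B I) (x : W) (hx : x ∈ I) : x ∉ B :=
  fun hB => h.anti.symm.not_hasNeighborIn hB (h.attachA x hx)

theorem attachedTriple (h : IndepBetween G A B I) (hx : x ∈ I) (hy : y ∈ I) (hz : z ∈ I)
    (hxy : x ≠ y) (hxz : x ≠ z) (hyz : y ≠ z) : AttachedTriple G A B x y z :=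
  { anti := h.anti, xA := h.notMemA x hx, yA := h.notMemA y hy, zA := h.notMemA z hz
    xB := h.notMemB x hx, yB := h.notMemB y hy, zB := h.notMemB z hz
    xy := hxy, xz := hxz, yz := hyz
    nxy := h.indep x hx y hy, nxz := h.indep x hx z hz, nyz := h.indep y hy z hz
    connB := h.connB, atx := h.attachB x hx, aty := h.attachB y hy, atz := h.attachB z hz }

theorem flip (h : IndepBetween G A B I) : IndepBetween G B A I :=
  ⟨h.connB, h.connA, h.anti.symm, h.indep, h.attachB, h.attachA⟩

theorem mono (h : IndepBetween G A B I) (hJ : J ⊆ I) : IndepBetween G A B J :=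
  ⟨h.connA, h.connB, h.anti, fun x hx y hy => h.indep x (hJ hx) y (hJ hy),
    fun x hx => h.attachA x (hJ hx), fun x hx => h.attachB x (hJ hx)⟩

theorem isPrivateNeighbor (h : IndepBetween G A B I) (hx : x ∈ I)
    (hxa : ¬HasNeighborIn G x (A \ {a})) : IsPrivateNeighbor G A I a x := by
  have heq : ∀ b ∈ A, G.Adj x b → b = a := fun b hb e => by
    by_contra hba
    exact hxa ⟨b, ⟨hb, hba⟩, e⟩
  obtain ⟨b, hb, e⟩ := h.attachA x hx
  obtain rfl := heq b hb e
  exact ⟨hx, fun c hc => ⟨heq c hc, fun hcb => hcb ▸ e⟩⟩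

end IndepBetween

namespace IsPrivateNeighbor

theorem eq_of_eq (hx : IsPrivateNeighbor G A I a x) {b : W} (hy : IsPrivateNeighbor G A I b y)
    (ha : a ∈ A) (hxy : x = y) : a = b :=
  (hy.2 a ha).1 (hxy ▸ (hx.2 a ha).2 rfl)

theorem adj_iff_eq (hx : IsPrivateNeighbor G A I (p k) x) (hp : IsInducedPath G p n)
    (hpA : ∀ i ≤ n, p i ∈ A) (hk : k ≤ n) : ∀ i ≤ n, (G.Adj x (p i) ↔ i = k) := fun i hi => by
  rw [hx.2 _ (hpA i hi)]
  exact ⟨hp.inj i k hi hk, congrArg p⟩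

theorem isLinkingPath (hx : IsPrivateNeighbor G A I (p 0) x)
    (hy : IsPrivateNeighbor G A I (p n) y) (hp : IsInducedPath G p n) (hpA : ∀ i ≤ n, p i ∈ A) :
    IsLinkingPath G A p n x y :=
  ⟨hp, hpA, hx.adj_iff_eq hp hpA (by omega), hy.adj_iff_eq hp hpA le_rfl⟩

end IsPrivateNeighbor

theorem IsPrivatePath.rev (hp : IsPrivatePath G A I p n) :
    IsPrivatePath G A I (fun t => p (n - t)) n :=
  ⟨hp.path.rev n le_rfl, fun i _ => hp.mem _ (by omega), hp.right, by
    rw [Nat.sub_self]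
    exact hp.left⟩

theorem IsLinkingPath.hasClaw (hp : IsLinkingPath G A p n x y) (c : SeparatedTriple G A B x y z)
    (hk : k ≤ n) (hz : ∀ i ≤ n, (G.Adj z (p i) ↔ i = k)) : HasClaw G A (p k) x y z := by
  have hadj := (hz k hk).2 rfl
  rcases hp.trichotomy c le_rfl hk hadj hadj
    (fun i hi e => by rw [(hz i hi).1 e]; exact ⟨le_rfl, le_rfl⟩) with h | h | h
  · exact h.2
  all_goals omega

theorem IsPathContact.rev (h : IsPathContact G A p n r s f l) :
    IsPathContact G A (fun t => p (n - t)) n r s (n - l) (n - f) where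
  path := h.path.rev n le_rfl
  arm := h.arm
  path_mem i hi hin := h.path_mem _ (by omega) (by omega)
  arm_mem := h.arm_mem
  ne i _ := h.ne _ (by omega)
  not_adj j hj i _ := h.not_adj j hj _ (by omega)
  le_last := by have := h.le_last; omega
  last_le := by omega
  adj_first := by simpa only [Nat.sub_sub_self h.last_le] using h.adj_last
  adj_last := by simpa only [Nat.sub_sub_self (h.le_last.trans h.last_le)] using h.adj_first
  bounds i _ e := by have := h.bounds _ (by omega) e; omega

theorem IsPathContact.exists_isPrivatePath (h : IsPathContact G A p n r s 0 0)
    (hp : IsPrivatePath G A I p n) (hr : ∀ i ≤ s, r i ∈ A)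
    (hx : IsPrivateNeighbor G A I (r 0) x) : ∃ q, IsPrivatePath G A I q (s + n + 1) := by
  refine ⟨_, h.arm.concat h.path (fun i hi j hj => (h.ne j hj i hi).symm) fun i hi j hj => ?_,
    fun i hi => ?_, ⟨x, by rwa [if_pos (Nat.zero_le s)]⟩, ?_⟩
  · refine ⟨fun e => ?_, ?_⟩
    · rcases hi.eq_or_lt with rfl | his
      · exact ⟨rfl, by have := h.bounds j hj e; omega⟩
      · exact (h.not_adj i his j hj e).elim
    · rintro ⟨rfl, rfl⟩
      exact h.adj_first
  · split_ifs with his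
    · exact hr i his
    · exact hp.mem _ (by omega)
  · rw [if_neg (by omega), show s + n + 1 - s - 1 = n by omega]
    exact hp.right

theorem IsPathContact.exists_extend (h : IsPathContact G A p n r s f l)
    (c : SeparatedTriple G A B x y z) (hpA : ∀ i ≤ n, p i ∈ A) (hrA : ∀ i ≤ s, r i ∈ A)
    (hx : IsPrivateNeighbor G A I (p 0) x) (hy : IsPrivateNeighbor G A I (p n) y)
    (hz : IsPrivateNeighbor G A I (r 0) z) :
    ∃ q r', IsPathContact G A q (n + 2) r' (s + 1) (f + 1) (l + 1) ∧ q 0 = x ∧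
      (∀ i ≤ n, q (i + 1) = p i) ∧ q (n + 2) = y ∧ r' 0 = z ∧ r' (s + 1) = r s := by
  obtain ⟨r', hr', r'0, hr'r⟩ := h.arm.exists_cons (x := z) (fun i hi e => c.zA (e ▸ hrA i hi))
    (hz.adj_iff_eq h.arm hrA (by omega))
  have hrx : ∀ j ≤ s, ¬G.Adj x (r j) := fun j hj e =>
    h.ne 0 (by omega) j hj ((hx.2 _ (hrA j hj)).1 e).symm
  have hry : ∀ j ≤ s, ¬G.Adj y (r j) := fun j hj e =>
    h.ne n le_rfl j hj ((hy.2 _ (hrA j hj)).1 e).symm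
  have hzp : ∀ i ≤ n, ¬G.Adj z (p i) := fun i hi e =>
    h.ne i hi 0 (by omega) ((hz.2 _ (hpA i hi)).1 e)
  obtain ⟨q, hq, q0, hqp, qlast⟩ := (hx.isLinkingPath hy h.path hpA).exists_isPathContact c.xA c.yA
    c.xy c.nxy hr' (f := f) (l := l)
    (fun | i + 1, _, hi => hr'r i ▸ hrA i (by omega))
    (fun
      | 0, _ => ⟨r'0 ▸ c.xz, r'0 ▸ fun e => c.nxz e.symm⟩
      | j + 1, hj => ⟨hr'r j ▸ fun e => c.xA (e ▸ hrA j (by omega)),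
          hr'r j ▸ fun e => hrx j (by omega) e.symm⟩)
    (fun
      | 0, _ => ⟨r'0 ▸ c.yz, r'0 ▸ fun e => c.nyz e.symm⟩
      | j + 1, hj => ⟨hr'r j ▸ fun e => c.yA (e ▸ hrA j (by omega)),
          hr'r j ▸ fun e => hry j (by omega) e.symm⟩)
    (fun
      | i, hi, 0, _ => r'0 ▸ fun e => c.zA (e ▸ hpA i hi)
      | i, hi, j + 1, hj => hr'r j ▸ h.ne i hi j (by omega))
    (fun
      | 0, _, i, hi => r'0 ▸ hzp i hi
      | j + 1, hj, i, hi => hr'r j ▸ h.not_adj j (by omega) i hi)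
    h.le_last h.last_le (hr'r s ▸ h.adj_first) (hr'r s ▸ h.adj_last) (hr'r s ▸ h.bounds)
  exact ⟨q, r', hq, q0, hqp, qlast, r'0, hr'r s⟩

theorem AttachedTriple.adj_of_hasClaw (c : AttachedTriple G A B x y z) {d : W}
    (hEH : ¬ContainsEvenHole G) (hPyr : ¬ContainsPyramid G)
    (hclaw : HasClaw G A d x y z) : G.Adj x d ∨ G.Adj y d ∨ G.Adj z d := by
  obtain ⟨w, hw⟩ := c.exists_isMiddleAmong_of_hasClaw hEH hPyr hclaw
  have hadj := (c.adj_of_hasClaw_of_isMiddleAmong hEH hclaw hw).symm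
  rcases hw.eq_or_eq_or_eq with rfl | rfl | rfl
  · exact Or.inl hadj
  · exact Or.inr (Or.inl hadj)
  · exact Or.inr (Or.inr hadj)

namespace IndepBetween

theorem contact_cases (h : IndepBetween G A B I) (hEH : ¬ContainsEvenHole G)
    (hPyr : ¬ContainsPyramid G) (hcontact : IsPathContact G A p n r s f l)
    (hp : IsPrivatePath G A I p n) (hn : 0 < n) (hrA : ∀ i ≤ s, r i ∈ A)
    (hr : ∃ z, IsPrivateNeighbor G A I (r 0) z) :
    (f = 0 ∧ l = 0) ∨ (f = n ∧ l = n) ∨ (f + 2 ≤ l ∧ s = 0) := by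
  obtain ⟨x, hx⟩ := hp.left
  obtain ⟨y, hy⟩ := hp.right
  obtain ⟨z, hz⟩ := hr
  have hpA := hp.mem
  have hfl := hcontact.le_last
  have hln := hcontact.last_le
  have c : AttachedTriple G A B x y z := h.attachedTriple hx.1 hy.1 hz.1
    (fun e => hn.ne (hp.path.inj _ _ hn.le le_rfl (hx.eq_of_eq hy (hpA 0 hn.le) e)))
    (fun e => hcontact.ne 0 hn.le 0 (by omega) (hx.eq_of_eq hz (hpA 0 hn.le) e))
    (fun e => hcontact.ne n le_rfl 0 (by omega) (hy.eq_of_eq hz (hpA n le_rfl) e))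
  obtain ⟨q, r', hq, q0, hqp, qlast, r'0, r'last⟩ :=
    hcontact.exists_extend c.toSeparatedTriple hpA hrA hx hy hz
  rcases lt_trichotomy l (f + 1) with hl | rfl | hl
  · obtain rfl : f = l := by omega
    have hclaw := hq.hasClaw_of_eq (by omega) (by omega)
    rw [q0, hqp f hln, qlast, r'0] at hclaw
    rcases c.adj_of_hasClaw hEH hPyr hclaw with e | e | e
    · have := (hx.adj_iff_eq hp.path hpA hn.le f hln).1 e
      omega
    · have := (hy.adj_iff_eq hp.path hpA le_rfl f hln).1 e
      omega
    · exact (hcontact.ne f hln 0 (by omega) ((hz.2 _ (hpA f hln)).1 e)).elim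
  · have htri := hq.hasTriangle_of_succ
    rw [q0, hqp f (by omega), hqp (f + 1) hln, qlast, r'0, r'last] at htri
    obtain ⟨w, hw⟩ := c.exists_isMiddleAmong_of_hasTriangle hEH hPyr htri
    rcases c.eq_of_hasTriangle_of_isMiddleAmong hPyr htri hw with e | e | e
    · exact (c.xA (e.2 ▸ hpA f (by omega))).elim
    · exact (c.yA (e.2 ▸ hpA (f + 1) hln)).elim
    · exact (c.zA (e.2 ▸ hrA s le_rfl)).elim
  · have hclaw := hq.hasClaw_of_add_two_le (by omega) (by omega)
    rw [q0, qlast, r'0, r'last] at hclaw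
    rcases c.adj_of_hasClaw hEH hPyr hclaw with e | e | e
    · exact (hcontact.ne 0 hn.le s le_rfl ((hx.2 _ (hrA s le_rfl)).1 e).symm).elim
    · exact (hcontact.ne n le_rfl s le_rfl ((hy.2 _ (hrA s le_rfl)).1 e).symm).elim
    · have := (hz.adj_iff_eq hcontact.arm hrA (Nat.zero_le s) s le_rfl).1 e
      omega

theorem exists_neighbors_of_longest (h : IndepBetween G A B I) (hEH : ¬ContainsEvenHole G)
    (hPyr : ¬ContainsPyramid G) (hp : IsPrivatePath G A I p n) (hn : 0 < n)
    (hlongest : ∀ m q, IsPrivatePath G A I q m → m ≤ n) (hw : w ∈ A)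
    (hwp : w ∉ p '' Set.Icc 0 n) (hx : IsPrivateNeighbor G A I w x) :
    ∃ f l, f + 2 ≤ l ∧ IsPathContact G A p n (fun _ => w) 0 f l := by
  obtain ⟨s, r, hr, rfl, hrA, ⟨_, ⟨t, ⟨-, ht⟩, rfl⟩, e⟩, hfirst⟩ :=
    h.connA.exists_first_contact hw hwp
      ⟨p 0, hp.mem 0 (by omega), apply_mem_image_Icc le_rfl (by omega)⟩
  obtain ⟨f, l, hfl, hln, hf, hl, hout⟩ :=
    exists_first_last (Q := fun i => G.Adj (r s) (p i)) ⟨t, ht, e⟩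
  have hcontact : IsPathContact G A p n r s f l :=
    ⟨hp.path, hr, fun i _ hi => hp.mem i hi.le, fun i _ hi => (hrA i hi).1,
      fun i hi j hj e => (hrA j hj).2 (e ▸ apply_mem_image_Icc (by omega) hi),
      fun j hj i hi e => hfirst j hj ⟨p i, apply_mem_image_Icc (by omega) hi, e⟩,
      hfl, hln, hf, hl, hout⟩
  have hrA' : ∀ i ≤ s, r i ∈ A := fun i hi => (hrA i hi).1
  rcases h.contact_cases hEH hPyr hcontact hp hn hrA' ⟨x, hx⟩ with
    ⟨rfl, rfl⟩ | ⟨rfl, rfl⟩ | ⟨hfl2, rfl⟩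
  · obtain ⟨q, hq⟩ := hcontact.exists_isPrivatePath hp hrA' hx
    have := hlongest _ q hq
    omega
  · obtain ⟨q, hq⟩ := (Nat.sub_self l ▸ hcontact.rev).exists_isPrivatePath hp.rev hrA' hx
    have := hlongest _ q hq
    omega
  · exact ⟨f, l, hfl2, hcontact.path, IsInducedPath.refl _, hcontact.path_mem,
      fun _ _ _ => by omega, fun i hi j _ => hcontact.ne i hi 0 le_rfl,
      fun _ hj => by omega, hfl, hln, hf, hl, hout⟩

theorem eq_zero_of_contact (h : IndepBetween G A B I) (hEH : ¬ContainsEvenHole G)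
    (hPyr : ¬ContainsPyramid G) (hcontact : IsPathContact G A p n (fun _ => w) 0 f l)
    (hpA : ∀ i ≤ n, p i ∈ A) (hw : w ∈ A) (hfl : f + 2 ≤ l)
    (hp0 : ∃ x, IsPrivateNeighbor G A I (p 0) x) (hpw : ∃ x, IsPrivateNeighbor G A I w x)
    (hpf : ∃ x, IsPrivateNeighbor G A I (p (f + 1)) x) : f = 0 ∧ ¬G.Adj w (p 1) := by
  have hln := hcontact.last_le
  have htrunc : ∀ m, f ≤ m → G.Adj w (p m) → m ≤ f + 1 → (G.Adj w (p (f + 1)) → m = f + 1) →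
      IsPathContact G A p (f + 1) (fun _ => w) 0 f m := fun m hfm hm hmf hlast =>
    ⟨hcontact.path.mono (by omega), hcontact.arm, fun i _ hi => hpA i (by omega),
      hcontact.arm_mem, fun i hi => hcontact.ne i (by omega), fun _ hj => by omega, hfm, hmf,
      hcontact.adj_first, hm, fun i hi e => ⟨(hcontact.bounds i (by omega) e).1, by
        rcases hi.eq_or_lt with rfl | hi
        · exact (hlast e).ge
        · omega⟩⟩
  have hprivate : IsPrivatePath G A I p (f + 1) :=
    ⟨hcontact.path.mono (by omega), fun i hi => hpA i (by omega), hp0, hpf⟩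
  have hnadj : ¬G.Adj w (p (f + 1)) := fun e => by
    have := h.contact_cases hEH hPyr (htrunc (f + 1) (by omega) e le_rfl fun _ => rfl) hprivate
      (by omega) (fun _ _ => hw) hpw
    omega
  obtain rfl : f = 0 := by
    have := h.contact_cases hEH hPyr
      (htrunc f le_rfl hcontact.adj_first (by omega) fun e => (hnadj e).elim) hprivate
      (by omega) (fun _ _ => hw) hpw
    omega
  exact ⟨rfl, hnadj⟩

theorem false_of_private_cycle (h : IndepBetween G A B I) (hEH : ¬ContainsEvenHole G)
    (hPyr : ¬ContainsPyramid G) (hp : IsInducedPath G p n) (hpA : ∀ i ≤ n, p i ∈ A) (hw : w ∈ A)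
    (hwp : ∀ i ≤ n, w ≠ p i) (hn : 3 ≤ n) (hadj : ∀ i ≤ n, (G.Adj w (p i) ↔ i = 0 ∨ i = n))
    (hpw : IsPrivateNeighbor G A I w z) (hp1 : IsPrivateNeighbor G A I (p 1) x)
    (hp2 : IsPrivateNeighbor G A I (p 2) y) : False := by
  have hp12 : p 1 ≠ p 2 := fun e => by
    have := hp.inj 1 2 (by omega) (by omega) e
    omega
  have c : AttachedTriple G A B x z y := h.attachedTriple hp1.1 hpw.1 hp2.1
    (fun e => hwp 1 (by omega) (hp1.eq_of_eq hpw (hpA 1 (by omega)) e).symm)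
    (fun e => hp12 (hp1.eq_of_eq hp2 (hpA 1 (by omega)) e))
    (fun e => hwp 2 (by omega) (hpw.eq_of_eq hp2 hw e))
  obtain ⟨q, hq, q0, hqp⟩ := (hp.mono (m := 2) (by omega)).exists_cons (x := w)
    (fun i hi => hwp i (by omega)) (fun i hi => by rw [hadj i (by omega)]; omega)
  obtain ⟨r, hr, rlast, hrp⟩ := (hp.shift 1 (n - 1) (by omega)).exists_snoc (y := w)
    (fun i hi => hwp _ (by omega)) (fun i hi => by rw [hadj _ (by omega)]; omega)
  have hqA : ∀ i ≤ 3, q i ∈ A := fun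
    | 0, _ => q0 ▸ hw
    | i + 1, hi => hqp i ▸ hpA i (by omega)
  have hrA : ∀ i ≤ n - 1 + 1, r i ∈ A := fun i hi => by
    rcases hi.eq_or_lt with rfl | hi
    · exact rlast ▸ hw
    · exact hrp i (by omega) ▸ hpA _ (by omega)
  have hq2 : q 2 = p 1 := hqp 1
  have hr1 : r 1 = p 2 := hrp 1 (by omega)
  rw [← hq2] at hp1
  rw [← hr1] at hp2
  have hclaw₁ : HasClaw G A (q 2) x z y :=
    ((q0.symm ▸ hpw).isLinkingPath (hqp 2 ▸ hr1 ▸ hp2) hq hqA).hasClaw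
      c.toSeparatedTriple.swap12.swap23 (by omega) (hp1.adj_iff_eq hq hqA (by omega))
      |>.swap23.swap12
  have hclaw₂ : HasClaw G A (r 1) x z y :=
    ((hrp 0 (by omega) ▸ hq2 ▸ hp1).isLinkingPath (rlast.symm ▸ hpw) hr hrA).hasClaw
      c.toSeparatedTriple (by omega) (hp2.adj_iff_eq hr hrA (by omega))
  obtain ⟨v, hv⟩ := c.exists_isMiddleAmong_of_hasClaw hEH hPyr hclaw₁
  have hv₁ := (c.adj_of_hasClaw_of_isMiddleAmong hEH hclaw₁ hv).symm
  have hv₂ := (c.adj_of_hasClaw_of_isMiddleAmong hEH hclaw₂ hv).symm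
  have hne : ∀ a, ¬IsPrivateNeighbor G A I a v := fun a ha => hp12 <| by
    rw [← hq2, ← hr1, (ha.2 _ (hqA 2 (by omega))).1 hv₁, (ha.2 _ (hrA 1 (by omega))).1 hv₂]
  rcases hv.eq_or_eq_or_eq with rfl | rfl | rfl
  exacts [hne _ hp1, hne _ hpw, hne _ hp2]

theorem false_of_contact (h : IndepBetween G A B I) (hEH : ¬ContainsEvenHole G)
    (hPyr : ¬ContainsPyramid G) (hcontact : IsPathContact G A p n (fun _ => w) 0 f l)
    (hpA : ∀ i ≤ n, p i ∈ A) (hw : w ∈ A) (hfl : f + 2 ≤ l)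
    (hp0 : ∃ x, IsPrivateNeighbor G A I (p 0) x) (hpw : ∃ x, IsPrivateNeighbor G A I w x)
    (hpi : ∀ i, f < i → i < l → ∃ x, IsPrivateNeighbor G A I (p i) x) : False := by
  obtain ⟨rfl, hw1⟩ := h.eq_zero_of_contact hEH hPyr hcontact hpA hw hfl hp0 hpw
    (hpi (f + 1) (by omega) (by omega))
  have hp := hcontact.path
  have hln := hcontact.last_le
  obtain ⟨g, _, -, -, ⟨hg0, hg⟩, -, hmin⟩ := exists_first_last
    (Q := fun i => 0 < i ∧ G.Adj w (p i)) ⟨l, hln, by omega, hcontact.adj_last⟩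
  have hgl := (hmin l hln ⟨by omega, hcontact.adj_last⟩).1
  rcases lt_trichotomy g 2 with hg2 | rfl | hg2
  · obtain rfl : g = 1 := by omega
    exact hw1 hg
  · refine false_of_square hEH (u := p 0) (v := p 2) (a := p 1) (b := w) (fun e => ?_) (fun e => ?_)
      (hcontact.ne 1 (by omega) 0 le_rfl) (fun e => hw1 e.symm) (hp.adj_succ (by omega))
      hcontact.adj_first.symm (hp.adj_succ (by omega)).symm hg.symm
    · have := hp.inj 0 2 (by omega) (by omega) e
      omega
    · have := (hp.adj 0 2 (by omega) (by omega)).1 e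
      omega
  · obtain ⟨x, hx⟩ := hpi 1 (by omega) (by omega)
    obtain ⟨y, hy⟩ := hpi 2 (by omega) (by omega)
    obtain ⟨z, hz⟩ := hpw
    refine h.false_of_private_cycle hEH hPyr (hp.mono (hgl.trans hln))
      (fun i hi => hpA i (by omega)) hw (fun i hi => (hcontact.ne i (by omega) 0 le_rfl).symm) hg2
      (fun i hi => ⟨fun e => ?_, ?_⟩) hz hx hy
    · rcases Nat.eq_zero_or_pos i with rfl | hi0
      · exact Or.inl rfl
      · exact Or.inr (hi.antisymm (hmin i (by omega) ⟨hi0, e⟩).1)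
    · rintro (rfl | rfl)
      exacts [hcontact.adj_first, hg]

end IndepBetween

theorem IsPathContact.exists_component [Finite W]
    (hcontact : IsPathContact G A p n (fun _ => w) 0 f l) (hpA : ∀ i ≤ n, p i ∈ A) (hw : w ∈ A)
    {i : ℕ} (hfi : f < i) (hil : i < l) :
    ∃ C, (∀ j ≤ n, j ≠ i → p j ∈ C) ∧ C ⊆ A \ {p i} ∧ ConnectedOn G C ∧
      ∀ c ∈ C, ∀ x ∈ A \ {p i}, G.Adj c x → x ∈ C := by
  have hln := hcontact.last_le
  have hdetour : ConnectedOn G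
      (insert w (p '' Set.Icc 0 (i - 1)) ∪ insert w (p '' Set.Icc (i + 1) n)) :=
    .union_of_mem (x := w)
      ((hcontact.path.connectedOn_image (by omega) (by omega)).insert
        ⟨p f, apply_mem_image_Icc (by omega) (by omega), hcontact.adj_first⟩)
      ((hcontact.path.connectedOn_image (by omega) le_rfl).insert
        ⟨p l, apply_mem_image_Icc (by omega) (by omega), hcontact.adj_last⟩)
      (Or.inl rfl) (Or.inl rfl)
  have hwi : w ∈ A \ {p i} := ⟨hw, (hcontact.ne i (by omega) 0 le_rfl).symm⟩
  have hpi : ∀ j ≤ n, j ≠ i → p j ∈ A \ {p i} := fun j hj hji =>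
    ⟨hpA j hj, fun e => hji (hcontact.path.inj j i hj (by omega) e)⟩
  obtain ⟨C, hsub, hC⟩ := hdetour.exists_component_superset (X := A \ {p i}) (by
    rintro _ ((rfl | ⟨t, ⟨ht, ht'⟩, rfl⟩) | (rfl | ⟨t, ⟨ht, ht'⟩, rfl⟩))
    exacts [hwi, hpi t (by omega) (by omega), hwi, hpi t (by omega) (by omega)])
  refine ⟨C, fun j hj hji => hsub ?_, hC⟩
  rcases hji.lt_or_gt with hlt | hgt
  · exact Or.inl (Or.inr (apply_mem_image_Icc (by omega) (by omega)))
  · exact Or.inr (Or.inr (apply_mem_image_Icc hgt hj))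

/-- The side `A` cannot be shrunk to a smaller connected set to which all of `I` still attaches. -/
structure IsMinimalSide (G : SimpleGraph W) (A B I : Set W) : Prop extends
    IndepBetween G A B I where
  minimal : ∀ A' ⊂ A, ConnectedOn G A' → ∃ x ∈ I, ¬HasNeighborIn G x A'

theorem IndepBetween.exists_isMinimalSide [Finite W] (h : IndepBetween G A B I) :
    ∃ A' ⊆ A, IsMinimalSide G A' B I := by
  obtain ⟨A', hA', hmin⟩ := (Set.toFinite {A' | A' ⊆ A ∧ IndepBetween G A' B I}).exists_minimal
    ⟨A, subset_rfl, h⟩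
  refine ⟨A', hA'.1, hA'.2, fun C hC hconn => ?_⟩
  by_contra! hall
  exact hC.2 (hmin ⟨hC.1.trans hA'.1, hconn, h.connB, hA'.2.anti.mono hC.1 subset_rfl, h.indep,
    hall, h.attachB⟩ hC.1)

namespace IsMinimalSide

theorem exists_isPrivateNeighbor (h : IsMinimalSide G A B I) (ha : a ∈ A)
    (hconn : ConnectedOn G (A \ {a})) : ∃ x, IsPrivateNeighbor G A I a x := by
  obtain ⟨x, hx, hxa⟩ := h.minimal _ (Set.sdiff_singleton_ssubset.2 ha) hconn
  exact ⟨x, h.isPrivateNeighbor hx hxa⟩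

theorem exists_mem_isPrivateNeighbor [Finite W] (h : IsMinimalSide G A B I) (hI : I.Nonempty) :
    ∃ a ∈ A, ∃ x, IsPrivateNeighbor G A I a x := by
  obtain ⟨a, ha⟩ := h.connA.nonempty
  rcases (Set.singleton_subset_iff.2 ha).eq_or_ssubset with rfl | hss
  · obtain ⟨x, hx⟩ := hI
    exact ⟨a, rfl, x, h.isPrivateNeighbor hx fun ⟨b, hb, _⟩ => hb.2 hb.1⟩
  · obtain ⟨b, hb, -, hconn⟩ :=
      h.connA.exists_notMem_diff_singleton (connectedOn_singleton a) hss
    exact ⟨b, hb, h.exists_isPrivateNeighbor hb hconn⟩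

theorem exists_longest_isPrivatePath [Finite W] (h : IsMinimalSide G A B I) (hI : I.Nonempty) :
    ∃ n p, IsPrivatePath G A I p n ∧ ∀ m q, IsPrivatePath G A I q m → m ≤ n := by
  obtain ⟨a, ha, hx⟩ := h.exists_mem_isPrivateNeighbor hI
  have hfin : {m | ∃ q, IsPrivatePath G A I q m}.Finite :=
    (Set.finite_Iic (Nat.card W)).subset fun m ⟨q, hq⟩ => hq.path.le_card
  obtain ⟨n, ⟨p, hp⟩, hmax⟩ := hfin.exists_maximal
    ⟨0, fun _ => a, IsInducedPath.refl a, fun _ _ => ha, hx, hx⟩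
  exact ⟨n, p, hp, fun m q hq => (le_total m n).elim id fun hnm => hmax ⟨q, hq⟩ hnm⟩

theorem connectedOn_diff_of_contact [Finite W] (h : IsMinimalSide G A B I)
    (hEH : ¬ContainsEvenHole G) (hPyr : ¬ContainsPyramid G) (hp : IsPrivatePath G A I p n)
    (hlongest : ∀ m q, IsPrivatePath G A I q m → m ≤ n)
    (hcontact : IsPathContact G A p n (fun _ => w) 0 f l) (hw : w ∈ A) {i : ℕ} (hfi : f < i)
    (hil : i < l) : ConnectedOn G (A \ {p i}) := by
  have hln := hcontact.last_le
  obtain ⟨C, hC, hCA, hCconn, hclosed⟩ := hcontact.exists_component hp.mem hw hfi hil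
  have hinsert : ConnectedOn G (insert (p i) C) := hCconn.insert
    ⟨p (i + 1), hC (i + 1) (by omega) (by omega), hp.path.adj_succ (by omega)⟩
  have hsub : insert (p i) C ⊆ A :=
    Set.insert_subset (hp.mem i (by omega)) (hCA.trans Set.sdiff_subset)
  rcases hsub.eq_or_ssubset with hA | hss
  · rwa [← hA, Set.insert_sdiff_self_of_notMem fun hi => (hCA hi).2 rfl]
  -- A non-cut vertex `v` off `p i` and its component would have two far apart neighbors on `p`, so
  -- one in the component.
  obtain ⟨v, hv, hvC, hconn⟩ := h.connA.exists_notMem_diff_singleton hinsert hss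
  obtain ⟨x, hx⟩ := h.exists_isPrivateNeighbor hv hconn
  have hvp : v ∉ p '' Set.Icc 0 n := by
    rintro ⟨j, ⟨-, hj⟩, rfl⟩
    rcases eq_or_ne j i with rfl | hji
    · exact hvC (Or.inl rfl)
    · exact hvC (Or.inr (hC j hj hji))
  obtain ⟨f', l', hfl', hcontact'⟩ :=
    h.exists_neighbors_of_longest hEH hPyr hp (by omega) hlongest hv hvp hx
  have hl'n := hcontact'.last_le
  obtain ⟨j, hj, hji, hadj⟩ : ∃ j ≤ n, j ≠ i ∧ G.Adj v (p j) := by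
    rcases eq_or_ne f' i with rfl | hf'
    · exact ⟨l', hl'n, by omega, hcontact'.adj_last⟩
    · exact ⟨f', by omega, hf', hcontact'.adj_first⟩
  exact (hvC (Or.inr (hclosed _ (hC j hj hji) v ⟨hv, fun e => hvC (Or.inl e)⟩ hadj.symm))).elim

theorem image_eq_of_longest [Finite W] (h : IsMinimalSide G A B I)
    (hEH : ¬ContainsEvenHole G) (hPyr : ¬ContainsPyramid G) (hp : IsPrivatePath G A I p n)
    (hlongest : ∀ m q, IsPrivatePath G A I q m → m ≤ n) : p '' Set.Icc 0 n = A := by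
  have hsub : p '' Set.Icc 0 n ⊆ A := by
    rintro _ ⟨i, ⟨-, hi⟩, rfl⟩
    exact hp.mem i hi
  by_contra hne
  obtain ⟨w, hw, hwp, hconn⟩ := h.connA.exists_notMem_diff_singleton
    (hp.path.connectedOn_image (Nat.zero_le n) le_rfl) (hsub.ssubset_of_ne hne)
  obtain ⟨x, hx⟩ := h.exists_isPrivateNeighbor hw hconn
  have hn : 0 < n := by
    obtain ⟨m, q, hq, q0, rfl, hqA⟩ := h.connA.exists_isInducedPath (hp.mem 0 (by omega)) hw
    have hm := hlongest m q ⟨hq, hqA, q0 ▸ hp.left, x, hx⟩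
    refine Nat.pos_of_ne_zero fun hn0 => hwp ?_
    obtain rfl : m = 0 := by omega
    exact q0 ▸ apply_mem_image_Icc le_rfl (Nat.zero_le n)
  obtain ⟨f, l, hfl, hcontact⟩ :=
    h.exists_neighbors_of_longest hEH hPyr hp hn hlongest hw hwp hx
  have hln := hcontact.last_le
  exact h.false_of_contact hEH hPyr hcontact hp.mem hw hfl hp.left ⟨x, hx⟩ fun i hfi hil =>
    h.exists_isPrivateNeighbor (hp.mem i (by omega))
      (h.connectedOn_diff_of_contact hEH hPyr hp hlongest hcontact hw hfi hil)

end IsMinimalSide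

end PrivatePaths

section Spines

variable {W : Type} {G : SimpleGraph W} {A B I J : Set W} {a p : ℕ → W}
  {m n i j c f g k l fu lu fv lv : ℕ} {u v w y y' : W}

/-- The numbers `f` and `l` are the first and the last position of a neighbor of `u` on `p`. -/
structure IsContactRange (G : SimpleGraph W) (p : ℕ → W) (n : ℕ) (u : W) (f l : ℕ) : Prop where
  le_last : f ≤ l
  last_le : l ≤ n
  adj_first : G.Adj u (p f)
  adj_last : G.Adj u (p l)
  bounds : ∀ i ≤ n, G.Adj u (p i) → f ≤ i ∧ i ≤ l

theorem HasNeighborIn.exists_isContactRange (h : HasNeighborIn G u (p '' Set.Icc 0 n)) :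
    ∃ f l, IsContactRange G p n u f l := by
  obtain ⟨_, ⟨i, ⟨-, hi⟩, rfl⟩, hadj⟩ := h
  obtain ⟨f, l, hfl, hln, hf, hl, hout⟩ :=
    exists_first_last (Q := fun i => G.Adj u (p i)) ⟨i, hi, hadj⟩
  exact ⟨f, l, hfl, hln, hf, hl, hout⟩

theorem HasNonadjNeighbors.exists_isContactRange (h : HasNonadjNeighbors G (p '' Set.Icc 0 n) u)
    (hp : IsInducedPath G p n) : ∃ f l, IsContactRange G p n u f l ∧ f + 2 ≤ l := by
  obtain ⟨_, ⟨i, ⟨-, hi⟩, rfl⟩, _, ⟨j, ⟨-, hj⟩, rfl⟩, hui, huj, hne, hnadj⟩ := h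
  obtain ⟨f, l, hr⟩ :=
    HasNeighborIn.exists_isContactRange ⟨p i, apply_mem_image_Icc (Nat.zero_le i) hi, hui⟩
  have hfi := hr.bounds i hi hui
  have hfj := hr.bounds j hj huj
  have hij : i ≠ j := fun e => hne (congrArg p e)
  rw [hp.adj i j hi hj] at hnadj
  exact ⟨f, l, hr, by omega⟩

namespace IsContactRange

theorem first_le (h : IsContactRange G p n u f l) : f ≤ n :=
  h.le_last.trans h.last_le

theorem adj_iff_eq_first (h : IsContactRange G p n u f l) (hi : i ≤ f) :
    G.Adj u (p i) ↔ i = f :=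
  ⟨fun e => hi.antisymm (h.bounds i (hi.trans h.first_le) e).1, fun e => e ▸ h.adj_first⟩

theorem adj_iff_eq_last (h : IsContactRange G p n u f l) (hi : l ≤ i) (hin : i ≤ n) :
    G.Adj u (p i) ↔ i = l :=
  ⟨fun e => (h.bounds i hin e).2.antisymm hi, fun e => e ▸ h.adj_last⟩

theorem not_adj_of_lt (h : IsContactRange G p n u f l) (hi : i < f) : ¬G.Adj u (p i) := fun e =>
  hi.ne ((h.adj_iff_eq_first hi.le).1 e)

theorem rev (h : IsContactRange G p n u f l) :
    IsContactRange G (fun t => p (n - t)) n u (n - l) (n - f) where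
  le_last := Nat.sub_le_sub_left h.le_last n
  last_le := Nat.sub_le n f
  adj_first := by simpa only [Nat.sub_sub_self h.last_le] using h.adj_last
  adj_last := by simpa only [Nat.sub_sub_self h.first_le] using h.adj_first
  bounds i _ e := by have := h.bounds _ (by omega) e; omega

end IsContactRange

theorem IsInducedPath.isLinkingPath_shift (hp : IsInducedPath G p n) (hpA : ∀ i ≤ n, p i ∈ A)
    (hij : i ≤ j) (hj : j ≤ n) (hu : ∀ t, i ≤ t → t ≤ j → (G.Adj u (p t) ↔ t = i))
    (hv : ∀ t, i ≤ t → t ≤ j → (G.Adj v (p t) ↔ t = j)) :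
    IsLinkingPath G A (fun t => p (i + t)) (j - i) u v where
  path := hp.shift i (j - i) (by omega)
  mem t _ := hpA _ (by omega)
  adj_left t _ := by
    rw [hu _ (by omega) (by omega)]
    omega
  adj_right t _ := by
    rw [hv _ (by omega) (by omega)]
    omega

theorem IndepBetween.odd_add_of_isLinkingPath (h : IndepBetween G A B I)
    (hEH : ¬ContainsEvenHole G) (hu : u ∈ I) (hv : v ∈ I) (huv : u ≠ v)
    (ha : IsLinkingPath G A a m u v) (hp : IsLinkingPath G B p n u v) : Odd (m + n) := by
  obtain ⟨q, hq, q0, hqa, qlast⟩ := ha.path.exists_extend (x := u) (y := v)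
    (fun i hi e => h.notMemA u hu (e ▸ ha.mem i hi))
    (fun i hi e => h.notMemA v hv (e ▸ ha.mem i hi)) huv (h.indep u hu v hv) ha.adj_left
    ha.adj_right
  obtain ⟨r, hr, r0, hrp, rlast⟩ := hp.path.exists_extend (x := u) (y := v)
    (fun i hi e => h.notMemB u hu (e ▸ hp.mem i hi))
    (fun i hi e => h.notMemB v hv (e ▸ hp.mem i hi)) huv (h.indep u hu v hv) hp.adj_left
    hp.adj_right
  have hodd := odd_add_of_common_ends hEH hq hr (by omega) (by omega) (q0.trans r0.symm)
    (qlast.trans rlast.symm) fun i hi0 hi j hj0 hj => by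
      obtain ⟨i, rfl⟩ := Nat.exists_eq_add_of_lt hi0
      obtain ⟨j, rfl⟩ := Nat.exists_eq_add_of_lt hj0
      rw [zero_add, zero_add, hqa i (by omega), hrp j (by omega)]
      exact h.anti _ (ha.mem i (by omega)) _ (hp.mem j (by omega))
  rw [Nat.odd_iff] at hodd ⊢
  omega

/-- The independent set `I` attaches to `A` and to the induced path `p`, whose first and last
vertices are the only neighbors on `p` of the vertices `y` and `y'` of `I`, respectively. -/
structure IsSpine (G : SimpleGraph W) (A I : Set W) (p : ℕ → W) (n : ℕ) (y y' : W) : Prop where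
  side : IndepBetween G A (p '' Set.Icc 0 n) I
  link : IsLinkingPath G (p '' Set.Icc 0 n) p n y y'
  left_mem : y ∈ I
  right_mem : y' ∈ I

theorem IndepBetween.exists_isSpine [Finite W] (h : IndepBetween G A B I)
    (hEH : ¬ContainsEvenHole G) (hPyr : ¬ContainsPyramid G) (hI : I.Nonempty) :
    ∃ n p y y', p '' Set.Icc 0 n ⊆ A ∧ IsSpine G B I p n y y' := by
  obtain ⟨A', hA', hmin⟩ := h.exists_isMinimalSide
  obtain ⟨n, p, hp, hlongest⟩ := hmin.exists_longest_isPrivatePath hI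
  obtain rfl := hmin.image_eq_of_longest hEH hPyr hp hlongest
  obtain ⟨y, hy⟩ := hp.left
  obtain ⟨y', hy'⟩ := hp.right
  exact ⟨n, p, y, y', hA', hmin.flip, hy.isLinkingPath hy' hp.path hp.mem, hy.1, hy'.1⟩

theorem image_sub_Icc_zero (p : ℕ → W) (n : ℕ) :
    (fun t => p (n - t)) '' Set.Icc 0 n = p '' Set.Icc 0 n := by
  ext x
  constructor <;> rintro ⟨t, ⟨-, ht⟩, rfl⟩
  · exact apply_mem_image_Icc (Nat.zero_le _) (Nat.sub_le n t)
  · exact ⟨n - t, ⟨Nat.zero_le _, Nat.sub_le n t⟩, congrArg p (Nat.sub_sub_self ht)⟩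

namespace IsSpine

theorem path (h : IsSpine G A I p n y y') : IsInducedPath G p n :=
  h.link.path

theorem rev (h : IsSpine G A I p n y y') : IsSpine G A I (fun t => p (n - t)) n y' y := by
  refine ⟨?_, ?_, h.right_mem, h.left_mem⟩ <;> rw [image_sub_Icc_zero]
  exacts [h.side, h.link.rev]

theorem ne_apply (h : IsSpine G A I p n y y') (hu : u ∈ I) (hi : i ≤ n) : u ≠ p i := fun e =>
  h.side.notMemB u hu (e ▸ h.link.mem i hi)

theorem notMem_image (h : IsSpine G A I p n y y') (hu : u ∈ I) (hj : j ≤ n) :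
    u ∉ p '' Set.Icc i j := fun hmem =>
  h.side.notMemB u hu (Set.image_mono (Set.Icc_subset_Icc (Nat.zero_le i) hj) hmem)

theorem anticomplete_image (h : IsSpine G A I p n y y') (hj : j ≤ n) :
    Anticomplete G (p '' Set.Icc i j) A :=
  h.side.anti.symm.mono (Set.image_mono (Set.Icc_subset_Icc (Nat.zero_le i) hj)) subset_rfl

theorem onlyCrossEdge_insert (h : IsSpine G A I p n y y') (hv : v ∈ I) (hj : j ≤ n)
    (hadj : ∀ t, i ≤ t → t ≤ j → G.Adj v (p t) → t = c) :
    OnlyCrossEdge G (p '' Set.Icc i j) (insert v A) (p c) v := by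
  rintro _ ⟨t, ⟨hit, htj⟩, rfl⟩ w (rfl | hw)
  · exact ⟨(h.ne_apply hv (htj.trans hj)).symm,
      fun e => ⟨congrArg p (hadj t hit htj e.symm), rfl⟩⟩
  · have hanti := h.anticomplete_image hj _ (apply_mem_image_Icc hit htj) w hw
    exact ⟨hanti.1, fun e => (hanti.2 e).elim⟩

theorem anticomplete_insert (h : IsSpine G A I p n y y') (hv : v ∈ I) (hj : j ≤ n)
    (hadj : ∀ t, i ≤ t → t ≤ j → ¬G.Adj v (p t)) :
    Anticomplete G (p '' Set.Icc i j) (insert v A) := by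
  rintro _ ⟨t, ⟨hit, htj⟩, rfl⟩ w (rfl | hw)
  · exact ⟨(h.ne_apply hv (htj.trans hj)).symm, fun e => hadj t hit htj e.symm⟩
  · exact h.anticomplete_image hj _ (apply_mem_image_Icc hit htj) w hw

theorem left_ne_right (h : IsSpine G A I p n y y') (hn : 0 < n) : y ≠ y' := by
  rintro rfl
  exact hn.ne ((h.link.adj_right 0 hn.le).1 ((h.link.adj_left 0 hn.le).2 rfl))

theorem ne_left (h : IsSpine G A I p n y y') (hr : IsContactRange G p n u f l) (hfl : f < l) :
    u ≠ y := by
  rintro rfl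
  have hf := (h.link.adj_left f hr.first_le).1 hr.adj_first
  have hl := (h.link.adj_left l hr.last_le).1 hr.adj_last
  omega

theorem ne_right (h : IsSpine G A I p n y y') (hr : IsContactRange G p n u f l) (hfl : f < l) :
    u ≠ y' :=
  h.rev.ne_left hr.rev (by have := hr.last_le; omega)

theorem exists_isContactRange (h : IsSpine G A I p n y y') (hu : u ∈ I) :
    ∃ f l, IsContactRange G p n u f l :=
  (h.side.attachB u hu).exists_isContactRange

theorem isMiddle (h : IsSpine G A I p n y y') (hv : v ∈ I) (hvy : v ≠ y) (huf : G.Adj u (p f))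
    (hul : G.Adj u (p l)) (hfl : f + 2 ≤ l) (hlj : l ≤ j) (hj : j ≤ n) (hvj : G.Adj v (p j))
    (hvf : ∀ i ≤ f, ¬G.Adj v (p i)) : IsMiddle G (p '' Set.Icc 0 n) u y v := by
  refine ⟨insert y (p '' Set.Icc 0 f), insert v (p '' Set.Icc l j), ⟨?_, Or.inl rfl, ?_⟩,
    ⟨?_, Or.inl rfl, ?_⟩, ?_, ⟨_, Or.inr (apply_mem_image_Icc (Nat.zero_le f) le_rfl), huf⟩,
    ⟨_, Or.inr (apply_mem_image_Icc le_rfl hlj), hul⟩⟩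
  · exact (h.path.connectedOn_image (by omega) (by omega)).insert
      ⟨p 0, apply_mem_image_Icc le_rfl (by omega), (h.link.adj_left 0 (by omega)).2 rfl⟩
  · exact Set.insert_subset_insert (Set.image_mono (Set.Icc_subset_Icc le_rfl (by omega)))
  · exact (h.path.connectedOn_image hlj hj).insert ⟨p j, apply_mem_image_Icc hlj le_rfl, hvj⟩
  · exact Set.insert_subset_insert (Set.image_mono (Set.Icc_subset_Icc (by omega) hj))
  rintro _ (rfl | ⟨s, ⟨-, hs⟩, rfl⟩) _ (rfl | ⟨t, ⟨hlt, htj⟩, rfl⟩)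
  · exact ⟨hvy.symm, h.side.indep _ h.left_mem _ hv⟩
  · refine ⟨h.ne_apply h.left_mem (by omega), fun e => ?_⟩
    have := (h.link.adj_left t (by omega)).1 e
    omega
  · exact ⟨(h.ne_apply hv (by omega)).symm, fun e => hvf s hs e.symm⟩
  · exact h.path.anticomplete_image hfl hj _ (apply_mem_image_Icc (Nat.zero_le s) hs) _
      (apply_mem_image_Icc hlt htj)

theorem isMiddle_ends (h : IsSpine G A I p n y y') (hr : IsContactRange G p n u f l)
    (hfl : f + 2 ≤ l) : IsMiddle G (p '' Set.Icc 0 n) u y y' := by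
  have hln := hr.last_le
  refine h.isMiddle h.right_mem (h.left_ne_right (by omega)).symm hr.adj_first hr.adj_last hfl hln
    le_rfl ((h.link.adj_right n le_rfl).2 rfl) fun i hi e => ?_
  have := (h.link.adj_right i (by omega)).1 e
  omega

theorem last_le_first_add_one (h : IsSpine G A I p n y y') (hEH : ¬ContainsEvenHole G)
    (hu : u ∈ I) (hv : v ∈ I) (huv : u ≠ v) (hru : IsContactRange G p n u fu lu)
    (hrv : IsContactRange G p n v fv lv) (hwide : fv + 2 ≤ lv) (hf : fu ≤ fv) : lu ≤ fv + 1 := by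
  by_contra! hlt
  have hlu := hru.last_le
  have hlv := hrv.last_le
  exact false_of_theta hEH huv (h.side.indep u hu v hv)
    (h.path.connectedOn_image (Nat.zero_le fv) (by omega))
    (h.path.connectedOn_image (show fv + 2 ≤ n by omega) le_rfl) h.side.connA
    (h.path.anticomplete_image le_rfl le_rfl) (h.anticomplete_image (by omega))
    (h.anticomplete_image (by omega))
    ⟨_, apply_mem_image_Icc (by omega) hf, hru.adj_first⟩
    ⟨_, apply_mem_image_Icc (by omega) hlu, hru.adj_last⟩ (h.side.attachA u hu)
    ⟨_, apply_mem_image_Icc (by omega) le_rfl, hrv.adj_first⟩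
    ⟨_, apply_mem_image_Icc hwide hlv, hrv.adj_last⟩ (h.side.attachA v hv)

-- Otherwise `A ∪ {v}` and the two parts of `p` around `p c` form a pyramid with apex `u`, or a
-- theta with ends `u` and `p c`.
theorem adj_of_adj_succ (h : IsSpine G A I p n y y') (hEH : ¬ContainsEvenHole G)
    (hPyr : ¬ContainsPyramid G) (hu : u ∈ I) (hv : v ∈ I) (huv : u ≠ v)
    (hrv : IsContactRange G p n v c l) (hc : c + 1 ≤ n) (huc : G.Adj u (p (c + 1)))
    (hprev : ∃ i < c, G.Adj u (p i)) : G.Adj u (p c) := by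
  by_contra hnadj
  obtain ⟨i, hi, hui⟩ := hprev
  have hconn : ConnectedOn G (insert v A) := h.side.connA.insert (h.side.attachA v hv)
  have huA : HasNeighborIn G u (insert v A) := (h.side.attachA u hu).mono (Set.subset_insert _ _)
  by_cases hvc : G.Adj v (p (c + 1))
  · refine false_of_pyramid hPyr (h.path.adj_succ hc) hvc.symm hrv.adj_first.symm
      (h.path.connectedOn_image hi.le (by omega))
      (h.path.connectedOn_image (le_refl (c + 1)) hc) hconn
      (apply_mem_image_Icc hi.le le_rfl) (apply_mem_image_Icc le_rfl le_rfl) (Or.inl rfl)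
      ⟨_, apply_mem_image_Icc le_rfl hi.le, hui⟩ ⟨_, apply_mem_image_Icc le_rfl le_rfl, huc⟩ huA
      (h.notMem_image hu (by omega)) (h.notMem_image hu hc) ?_ (h.path.onlyCrossEdge_image hc)
      (h.onlyCrossEdge_insert hv (by omega) fun t _ ht e => (hrv.adj_iff_eq_first ht).1 e)
      (h.onlyCrossEdge_insert hv hc fun t ht ht' _ => by omega)
      (Or.inr (Or.inl ⟨hnadj, h.side.indep u hu v hv⟩))
    rintro (rfl | huA)
    exacts [huv rfl, h.side.notMemA u hu huA]
  · refine false_of_theta hEH (h.ne_apply hu (by omega)) hnadj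
      (h.path.connectedOn_image (Nat.le_sub_one_of_lt hi) (by omega))
      (h.path.connectedOn_image (le_refl (c + 1)) hc) hconn
      (h.path.anticomplete_image (by omega) hc)
      (h.anticomplete_insert hv (by omega) fun t _ ht => hrv.not_adj_of_lt (by omega))
      (h.anticomplete_insert hv hc fun t ht ht' => ht.antisymm ht' ▸ hvc)
      ⟨_, apply_mem_image_Icc le_rfl (by omega), hui⟩ ⟨_, apply_mem_image_Icc le_rfl le_rfl, huc⟩
      huA ⟨p (c - 1), apply_mem_image_Icc (by omega) le_rfl, ?_⟩
      ⟨_, apply_mem_image_Icc le_rfl le_rfl, h.path.adj_succ hc⟩ ⟨v, Or.inl rfl, hrv.adj_first.symm⟩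
    exact (h.path.adj _ _ (by omega) (by omega)).2 (by omega)

theorem isLinkingPath_left (h : IsSpine G A I p n y y') (hr : IsContactRange G p n u f l) :
    IsLinkingPath G (p '' Set.Icc 0 n) p f y u where
  path := h.path.mono hr.first_le
  mem i hi := h.link.mem i (hi.trans hr.first_le)
  adj_left i hi := h.link.adj_left i (hi.trans hr.first_le)
  adj_right _ := hr.adj_iff_eq_first

theorem isLinkingPath_right (h : IsSpine G A I p n y y') (hr : IsContactRange G p n u f l) :
    IsLinkingPath G (p '' Set.Icc 0 n) (fun t => p (l + t)) (n - l) u y' :=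
  h.path.isLinkingPath_shift h.link.mem hr.last_le le_rfl (fun _ => hr.adj_iff_eq_last)
    fun t _ ht => h.link.adj_right t ht

theorem first_lt_first (h : IsSpine G A I p n y y') (hEH : ¬ContainsEvenHole G)
    (hPyr : ¬ContainsPyramid G) (hu : u ∈ I) (hv : v ∈ I) (huv : u ≠ v) (huy : u ≠ y) (hvy : v ≠ y)
    (hru : IsContactRange G p n u fu lu) (hrv : IsContactRange G p n v fv lv)
    (hM : IsMiddle G A u y v) (hcommon : ∀ i ≤ n, G.Adj u (p i) → ¬G.Adj v (p i)) : fu < fv := by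
  by_contra! hle
  have := (h.isLinkingPath_left hru).eq_last_of_adj
    (h.side.flip.attachedTriple h.left_mem hu hv huy.symm hvy.symm huv) hEH hPyr hM hle
    hrv.adj_first
  exact hcommon fu hru.first_le hru.adj_first (this ▸ hrv.adj_first)

theorem last_lt_first (h : IsSpine G A I p n y y') (hEH : ¬ContainsEvenHole G)
    (hPyr : ¬ContainsPyramid G) (hu : u ∈ I) (hv : v ∈ I) (huv : u ≠ v)
    (hy : u ≠ y ∧ v ≠ y) (hy' : u ≠ y' ∧ v ≠ y') (hru : IsContactRange G p n u fu lu)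
    (hrv : IsContactRange G p n v fv lv) (hMu : IsMiddle G A u y v) (hMv : IsMiddle G A v y' u)
    (hcommon : ∀ i ≤ n, G.Adj u (p i) → ¬G.Adj v (p i)) : lu < fv := by
  have hfirst := h.first_lt_first hEH hPyr hu hv huv hy.1 hy.2 hru hrv hMu hcommon
  have hlast := h.rev.first_lt_first hEH hPyr hv hu huv.symm hy'.2 hy'.1 hrv.rev hru.rev hMv
    fun i _ e e' => hcommon _ (by omega) e' e
  have hlu := hru.last_le
  by_contra! hle
  rcases hle.eq_or_lt with rfl | hlt
  · exact hcommon _ hlu hru.adj_last hrv.adj_first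
  rcases Nat.lt_or_ge (fv + 1) lu with hlt' | hle'
  · have := h.last_le_first_add_one hEH hu hv huv hru hrv (by omega) hfirst.le
    omega
  · obtain rfl : lu = fv + 1 := by omega
    exact hcommon fv hrv.first_le (h.adj_of_adj_succ hEH hPyr hu hv huv hrv hlu hru.adj_last
      ⟨fu, hfirst, hru.adj_first⟩) hrv.adj_first

theorem replace_left (h : IsSpine G A I p n y y') (hEH : ¬ContainsEvenHole G)
    (hPyr : ¬ContainsPyramid G) (hw : w ∈ I) (hn : 0 < n) (hwy : w ≠ y) (hwy' : w ≠ y')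
    (hM : IsMiddle G A y y' w) : IsSpine G A I p n w y' := by
  have hzero : ∀ i ≤ n, G.Adj w (p i) → i = 0 := fun i hi => h.link.eq_zero_of_adj
    (h.side.flip.attachedTriple h.left_mem h.right_mem hw (h.left_ne_right hn) hwy.symm hwy'.symm)
    hEH hPyr hM hi
  obtain ⟨f, l, hr⟩ := h.exists_isContactRange hw
  obtain rfl := hzero f hr.first_le hr.adj_first
  exact ⟨h.side, ⟨h.path, h.link.mem, fun i hi => ⟨hzero i hi, fun e => e ▸ hr.adj_first⟩,
    h.link.adj_right⟩, hw, h.right_mem⟩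

end IsSpine

/-- The side `A` consists of the vertices of a spine of positive length with ends attached to `y`
and `y'`. -/
def HasSpine (G : SimpleGraph W) (A B I : Set W) (y y' : W) : Prop :=
  ∃ n p, 0 < n ∧ p '' Set.Icc 0 n = A ∧ IsSpine G B I p n y y'

namespace HasSpine

theorem symm (h : HasSpine G A B I y y') : HasSpine G A B I y' y := by
  obtain ⟨n, p, hn, hp, hspine⟩ := h
  exact ⟨n, _, hn, (image_sub_Icc_zero p n).trans hp, hspine.rev⟩

theorem ne (h : HasSpine G A B I y y') : y ≠ y' := by
  obtain ⟨n, p, hn, -, hspine⟩ := h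
  exact hspine.left_ne_right hn

theorem replace_left (h : HasSpine G A B I y y') (hEH : ¬ContainsEvenHole G)
    (hPyr : ¬ContainsPyramid G) (hw : w ∈ I) (hwy : w ≠ y) (hwy' : w ≠ y')
    (hM : IsMiddle G B y y' w) : HasSpine G A B I w y' := by
  obtain ⟨n, p, hn, hp, hspine⟩ := h
  exact ⟨n, p, hn, hp, hspine.replace_left hEH hPyr hw hn hwy hwy' hM⟩

end HasSpine

/-- The vertices `u` and `v` both have two nonadjacent neighbors on the spine `p`, and their contact
ranges overlap exactly in the edge from `p c` to `p (c + 1)`. -/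
structure IsTightPair (G : SimpleGraph W) (A I : Set W) (p : ℕ → W) (n : ℕ) (y y' u v : W)
    (f c l : ℕ) : Prop where
  spine : IsSpine G A I p n y y'
  left_mem : u ∈ I
  right_mem : v ∈ I
  ne : u ≠ v
  left_range : IsContactRange G p n u f (c + 1)
  right_range : IsContactRange G p n v c l
  left_wide : f + 1 ≤ c
  right_wide : c + 2 ≤ l

namespace IsTightPair

theorem rev (h : IsTightPair G A I p n y y' u v f c l) :
    IsTightPair G A I (fun t => p (n - t)) n y' y v u (n - l) (n - (c + 1)) (n - f) := by
  have hc := h.left_range.last_le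
  have hl := h.right_range.last_le
  have hf := h.left_wide
  have hcl := h.right_wide
  refine ⟨h.spine.rev, h.right_mem, h.left_mem, h.ne.symm, ?_, h.left_range.rev, by omega,
    by omega⟩
  rw [show n - (c + 1) + 1 = n - c by omega]
  exact h.right_range.rev

theorem left_ne_ends (h : IsTightPair G A I p n y y' u v f c l) : u ≠ y ∧ u ≠ y' := by
  have hf := h.left_wide
  exact ⟨h.spine.ne_left h.left_range (by omega), h.spine.ne_right h.left_range (by omega)⟩

theorem right_ne_ends (h : IsTightPair G A I p n y y' u v f c l) : v ≠ y ∧ v ≠ y' :=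
  h.rev.left_ne_ends.symm

theorem adj_left (h : IsTightPair G A I p n y y' u v f c l) (hEH : ¬ContainsEvenHole G)
    (hPyr : ¬ContainsPyramid G) : G.Adj u (p c) :=
  h.spine.adj_of_adj_succ hEH hPyr h.left_mem h.right_mem h.ne h.right_range h.left_range.last_le
    h.left_range.adj_last ⟨f, h.left_wide, h.left_range.adj_first⟩

theorem adj_right (h : IsTightPair G A I p n y y' u v f c l) (hEH : ¬ContainsEvenHole G)
    (hPyr : ¬ContainsPyramid G) : G.Adj v (p (c + 1)) := by
  simpa only [Nat.sub_sub_self h.left_range.last_le] using h.rev.adj_left hEH hPyr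

theorem isMiddle_left (h : IsTightPair G A I p n y y' u v f c l) (hEH : ¬ContainsEvenHole G)
    (hPyr : ¬ContainsPyramid G) : IsMiddle G (p '' Set.Icc 0 n) u y v :=
  have hf := h.left_wide
  h.spine.isMiddle h.right_mem h.right_ne_ends.1 h.left_range.adj_first h.left_range.adj_last
    (by omega) le_rfl h.left_range.last_le (h.adj_right hEH hPyr) fun _ hi =>
      h.right_range.not_adj_of_lt (by omega)

theorem isMiddle_right (h : IsTightPair G A I p n y y' u v f c l) (hEH : ¬ContainsEvenHole G)
    (hPyr : ¬ContainsPyramid G) : IsMiddle G (p '' Set.Icc 0 n) v y' u :=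
  image_sub_Icc_zero p n ▸ h.rev.isMiddle_left hEH hPyr

theorem not_adj_right_of_adj_left (h : IsTightPair G A I p n y y' u v f c l)
    (hEH : ¬ContainsEvenHole G) (hPyr : ¬ContainsPyramid G) (hw : w ∈ A) (huw : G.Adj u w) :
    ¬G.Adj v w := fun hvw => by
  have hanti := h.spine.side.anti w hw _ (h.spine.link.mem c h.right_range.first_le)
  exact false_of_square hEH h.ne (h.spine.side.indep _ h.left_mem _ h.right_mem) hanti.1 hanti.2 huw
    (h.adj_left hEH hPyr) hvw h.right_range.adj_first

-- The holes through `y, y'`, through `u, y'`, through `y, v` and through `u, v` cannot all be odd.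
theorem false_of_isSpine (h : IsTightPair G (a '' Set.Icc 0 m) I p n y y' u v f c l)
    (hEH : ¬ContainsEvenHole G) (hPyr : ¬ContainsPyramid G)
    (ha : IsSpine G (p '' Set.Icc 0 n) I a m y y') : False := by
  have hside := h.spine.side
  have hc := h.left_range.last_le
  obtain ⟨fu, lu, hru⟩ := ha.exists_isContactRange h.left_mem
  obtain ⟨fv, lv, hrv⟩ := ha.exists_isContactRange h.right_mem
  have hlt := ha.last_lt_first hEH hPyr h.left_mem h.right_mem h.ne
    ⟨h.left_ne_ends.1, h.right_ne_ends.1⟩ ⟨h.left_ne_ends.2, h.right_ne_ends.2⟩ hru hrv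
    (h.isMiddle_left hEH hPyr) (h.isMiddle_right hEH hPyr) fun i hi =>
      h.not_adj_right_of_adj_left hEH hPyr (ha.link.mem i hi)
  have hlum := hru.last_le
  have hends := hside.odd_add_of_isLinkingPath hEH ha.left_mem ha.right_mem
    (h.spine.left_ne_right (by omega)) ha.link h.spine.link
  have hright := hside.odd_add_of_isLinkingPath hEH h.left_mem ha.right_mem h.left_ne_ends.2
    (ha.isLinkingPath_right hru) (h.spine.isLinkingPath_right h.left_range)
  have hleft := hside.odd_add_of_isLinkingPath hEH ha.left_mem h.right_mem h.right_ne_ends.1.symm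
    (ha.isLinkingPath_left hrv) (h.spine.isLinkingPath_left h.right_range)
  have hmiddle := hside.odd_add_of_isLinkingPath hEH h.left_mem h.right_mem h.ne
    (ha.path.isLinkingPath_shift ha.link.mem hlt.le hrv.first_le
      (fun t ht ht' => hru.adj_iff_eq_last ht (ht'.trans hrv.first_le))
      fun t _ ht => hrv.adj_iff_eq_first ht)
    (h.spine.path.isLinkingPath_shift h.spine.link.mem (le_refl c) h.right_range.first_le
      (fun t ht ht' => ht'.antisymm ht ▸ iff_of_true (ht.antisymm ht' ▸ h.adj_left hEH hPyr) rfl)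
      fun t _ ht => h.right_range.adj_iff_eq_first ht)
  rw [Nat.odd_iff] at hends hright hleft hmiddle
  omega

theorem not_hasSpine_ends (h : IsTightPair G A I p n y y' u v f c l) (hEH : ¬ContainsEvenHole G)
    (hPyr : ¬ContainsPyramid G) : ¬HasSpine G A (p '' Set.Icc 0 n) I y y' := by
  rintro ⟨m, a, -, rfl, ha⟩
  exact h.false_of_isSpine hEH hPyr ha

theorem not_hasSpine_left (h : IsTightPair G A I p n y y' u v f c l) (hEH : ¬ContainsEvenHole G)
    (hPyr : ¬ContainsPyramid G) : ¬HasSpine G A (p '' Set.Icc 0 n) I u y := by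
  rintro ⟨m, a, hm, rfl, ha⟩
  have hv := ha.replace_left hEH hPyr h.right_mem hm h.ne.symm h.right_ne_ends.1
    (h.isMiddle_left hEH hPyr)
  exact h.not_adj_right_of_adj_left hEH hPyr (ha.link.mem 0 hm.le)
    ((ha.link.adj_left 0 hm.le).2 rfl) ((hv.link.adj_left 0 hm.le).2 rfl)

theorem not_hasSpine_right (h : IsTightPair G A I p n y y' u v f c l) (hEH : ¬ContainsEvenHole G)
    (hPyr : ¬ContainsPyramid G) : ¬HasSpine G A (p '' Set.Icc 0 n) I v y' :=
  image_sub_Icc_zero p n ▸ h.rev.not_hasSpine_left hEH hPyr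

theorem not_hasSpine (h : IsTightPair G A I p n y y' u v f c l) (hEH : ¬ContainsEvenHole G)
    (hPyr : ¬ContainsPyramid G) {s t : W} (hs : s ∈ ({y, u, v, y'} : Set W))
    (ht : t ∈ ({y, u, v, y'} : Set W)) : ¬HasSpine G A (p '' Set.Icc 0 n) I s t := by
  obtain ⟨huy, huy'⟩ := h.left_ne_ends
  obtain ⟨hvy, hvy'⟩ := h.right_ne_ends
  have hf := h.left_wide
  have hc := h.left_range.last_le
  have hne := h.spine.left_ne_right (by omega)
  have hends := h.not_hasSpine_ends hEH hPyr
  have hleft := h.not_hasSpine_left hEH hPyr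
  have hright := h.not_hasSpine_right hEH hPyr
  have hMu := h.spine.isMiddle_ends h.left_range (by omega)
  have hMv := h.spine.isMiddle_ends h.right_range h.right_wide
  have not_vy : ¬HasSpine G A (p '' Set.Icc 0 n) I v y := fun hS =>
    hends (hS.replace_left hEH hPyr h.spine.right_mem hvy'.symm hne.symm hMv).symm
  have not_uy' : ¬HasSpine G A (p '' Set.Icc 0 n) I u y' := fun hS =>
    hends (hS.replace_left hEH hPyr h.spine.left_mem huy.symm hne hMu.swap)
  have not_uv : ¬HasSpine G A (p '' Set.Icc 0 n) I u v := fun hS =>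
    not_vy (hS.replace_left hEH hPyr h.spine.left_mem huy.symm hvy.symm
      (h.isMiddle_left hEH hPyr).swap).symm
  intro hS
  rcases hs with rfl | rfl | rfl | rfl <;> rcases ht with rfl | rfl | rfl | rfl
  exacts [hS.ne rfl, hleft hS.symm, not_vy hS.symm, hends hS, hleft hS, hS.ne rfl, not_uv hS,
    not_uy' hS, not_vy hS, not_uv hS.symm, hS.ne rfl, hright hS, hends hS.symm, not_uy' hS.symm,
    hright hS.symm, hS.ne rfl]

theorem mono (h : IsTightPair G A I p n y y' u v f c l)
    (hside : IndepBetween G B (p '' Set.Icc 0 n) J) (hJ : {y, u, v, y'} ⊆ J) :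
    IsTightPair G B J p n y y' u v f c l where
  spine := ⟨hside, h.spine.link, hJ (by simp), hJ (by simp)⟩
  left_mem := hJ (by simp)
  right_mem := hJ (by simp)
  ne := h.ne
  left_range := h.left_range
  right_range := h.right_range
  left_wide := h.left_wide
  right_wide := h.right_wide

theorem not_isTightPair [Finite W] (hEH : ¬ContainsEvenHole G) (hPyr : ¬ContainsPyramid G) :
    ¬IsTightPair G A I p n y y' u v f c l := fun h => by
  have hJ : {y, u, v, y'} ⊆ I := by
    rintro w (rfl | rfl | rfl | rfl)
    exacts [h.spine.left_mem, h.left_mem, h.right_mem, h.spine.right_mem]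
  obtain ⟨m, a, s, t, -, ha⟩ := (h.spine.side.mono hJ).exists_isSpine hEH hPyr ⟨y, Or.inl rfl⟩
  have h' := h.mono ha.side.flip subset_rfl
  refine h'.not_hasSpine hEH hPyr ha.left_mem ha.right_mem
    ⟨m, a, Nat.pos_of_ne_zero fun hm => ?_, rfl, ha⟩
  subst hm
  obtain ⟨fu, lu, hru⟩ := ha.exists_isContactRange h'.left_mem
  obtain ⟨fv, lv, hrv⟩ := ha.exists_isContactRange h'.right_mem
  have hfu := hru.first_le
  have hfv := hrv.first_le
  obtain rfl : fu = fv := by omega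
  exact h'.not_adj_right_of_adj_left hEH hPyr (ha.link.mem fu hfu) hru.adj_first hrv.adj_first

end IsTightPair

theorem IsSpine.last_le_first [Finite W] (h : IsSpine G A I p n y y') (hEH : ¬ContainsEvenHole G)
    (hPyr : ¬ContainsPyramid G) (hu : u ∈ I) (hv : v ∈ I) (huv : u ≠ v)
    (hru : IsContactRange G p n u fu lu) (hrv : IsContactRange G p n v fv lv)
    (hu_wide : fu + 2 ≤ lu) (hv_wide : fv + 2 ≤ lv) (hf : fu ≤ fv) : lu ≤ fv := by
  have hle := h.last_le_first_add_one hEH hu hv huv hru hrv hv_wide hf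
  by_contra! hlt
  obtain rfl : lu = fv + 1 := by omega
  exact IsTightPair.not_isTightPair hEH hPyr
    ⟨h, hu, hv, huv, hru, hrv, by omega, hv_wide⟩

theorem IsSpine.exists_isLinkingPath_ne (h : IsSpine G A I p n y y') (hI : 1 < I.encard) :
    ∃ s ∈ I, ∃ t ∈ I, s ≠ t ∧ IsLinkingPath G (p '' Set.Icc 0 n) p n s t := by
  rcases Nat.eq_zero_or_pos n with rfl | hn
  · obtain ⟨t, ht, hty⟩ := Set.exists_ne_of_one_lt_encard hI y
    obtain ⟨f, l, hr⟩ := h.exists_isContactRange ht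
    obtain rfl : f = 0 := Nat.le_zero.1 hr.first_le
    exact ⟨y, h.left_mem, t, ht, hty.symm, h.path, h.link.mem, h.link.adj_left,
      fun i hi => hr.adj_iff_eq_first hi⟩
  · exact ⟨y, h.left_mem, y', h.right_mem, h.left_ne_right hn, h.link⟩

theorem IndepBetween.exists_hasNonadjNeighbors [Finite W] (h : IndepBetween G A B I)
    (hEH : ¬ContainsEvenHole G) (hPyr : ¬ContainsPyramid G) (hI : 2 < I.encard) :
    ∃ w ∈ I, HasNonadjNeighbors G A w ∨ HasNonadjNeighbors G B w := by
  have hI1 : 1 < I.encard := lt_trans (by norm_num) hI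
  obtain ⟨n, p, y, y', hpA, hspine⟩ :=
    h.exists_isSpine hEH hPyr (Set.encard_pos.1 (zero_lt_one.trans hI1))
  obtain ⟨s, hs, t, ht, hst, hlink⟩ := hspine.exists_isLinkingPath_ne hI1
  obtain ⟨w, hw, hwst⟩ : ∃ w ∈ I, w ∉ ({s, t} : Set W) := by
    by_contra! hsub
    exact hI.not_ge ((Set.encard_le_encard hsub).trans (Set.encard_pair hst).le)
  simp only [Set.mem_insert_iff, Set.mem_singleton_iff, not_or] at hwst
  have c := hspine.side.flip.attachedTriple hs ht hw hst (Ne.symm hwst.1) (Ne.symm hwst.2)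
  obtain ⟨f, l, hr⟩ := hspine.exists_isContactRange hw
  have hln := hr.last_le
  rcases Nat.lt_or_ge l (f + 2) with hnarrow | hwide
  · obtain ⟨v, hv⟩ := hlink.exists_isMiddleAmong c hEH hPyr ⟨f, hr.first_le, hr.adj_first⟩
      fun i j hi hj hij ⟨hwi, hwj⟩ => by
        have := hr.bounds i hi hwi
        have := hr.bounds j hj hwj
        omega
    rcases hv with ⟨rfl, hM⟩ | ⟨rfl, hM⟩ | ⟨rfl, hM⟩
    · exact ⟨v, hs, Or.inr (hM.hasNonadjNeighbors c.nxy c.nxz)⟩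
    · exact ⟨v, ht, Or.inr (hM.hasNonadjNeighbors (mt G.adj_symm c.nxy) c.nyz)⟩
    · exact ⟨v, hw, Or.inr (hM.hasNonadjNeighbors (mt G.adj_symm c.nxz) (mt G.adj_symm c.nyz))⟩
  · have hanti := hspine.path.anticomplete_image (i := f) hwide hln
      _ (apply_mem_image_Icc le_rfl le_rfl) _ (apply_mem_image_Icc le_rfl le_rfl)
    exact ⟨w, hw, Or.inl ⟨p f, hpA (hlink.mem f hr.first_le), p l, hpA (hlink.mem l hln),
      hr.adj_first, hr.adj_last, hanti.1, hanti.2⟩⟩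

end Spines

section Spiders

variable {W : Type} {G : SimpleGraph W} {A B I : Set W} {p : ℕ → W} {n k m f l : ℕ} {x y y' : W}

theorem containsSpider_of_isInducedPath (q : Fin 3 → ℕ → W) (hq : ∀ j, IsInducedPath G (q j) k)
    (hroot : ∀ j, q j 0 = x)
    (hanti : ∀ i j, i < j → Anticomplete G (q i '' Set.Icc 1 k) (q j '' Set.Icc 1 k)) :
    ContainsSpider G k := by
  have hlegs (i j : Fin 3) (hij : i ≠ j) (a b : Fin k) :
      q i (a + 1) ≠ q j (b + 1) ∧ ¬G.Adj (q i (a + 1)) (q j (b + 1)) := by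
    have hanti' : Anticomplete G (q i '' Set.Icc 1 k) (q j '' Set.Icc 1 k) :=
      hij.lt_or_gt.elim (hanti i j) fun hji => (hanti j i hji).symm
    exact hanti' _ (apply_mem_image_Icc (by omega) (by omega))
      _ (apply_mem_image_Icc (by omega) (by omega))
  refine ⟨x, fun j a => q j (a + 1), fun j a e => ?_, fun i a j b e => ?_, fun j a => ?_,
    fun i a j b => ?_⟩
  · have := (hq j).inj _ _ (by omega) (by omega) (e.trans (hroot j).symm)
    omega
  · by_cases hij : i = j
    · subst hij
      have := (hq i).inj _ _ (by omega) (by omega) e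
      exact ⟨rfl, Fin.ext (by omega)⟩
    · exact ((hlegs i j hij a b).1 e).elim
  · rw [← hroot j, (hq j).adj _ _ (by omega) (by omega)]
    omega
  · by_cases hij : i = j
    · subst hij
      rw [(hq i).adj _ _ (by omega) (by omega)]
      simp only [true_and]
      omega
    · exact iff_of_false (hlegs i j hij a b).2 fun e => hij e.1

namespace IsSpine

theorem exists_isInducedPath_to_left (h : IsSpine G A I p n y y') (hx : x ∈ I) (hxy : x ≠ y)
    (hm : m ≤ n + 1) (hpx : ∀ i < m, ¬G.Adj x (p i)) :
    ∃ q, IsInducedPath G q (m + 2) ∧ q 0 = x ∧ ∀ i, 0 < i → i ≤ m + 2 →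
      q i ∈ A ∨ (2 ≤ i ∧ q i = y) ∨ ∃ j, j + 3 ≤ i ∧ j ≤ n ∧ q i = p j := by
  obtain ⟨s, q, hs, hq, hq0, hqs, hqA⟩ := h.side.connA.exists_isInducedPath_through
    (h.side.attachA x hx) (h.side.attachA y h.left_mem) hxy (h.side.indep x hx y h.left_mem)
  have hq_cases (i : ℕ) (hi : 0 < i) (his : i ≤ s) : q i ∈ A ∨ (2 ≤ i ∧ q i = y) :=
    his.lt_or_eq.imp (hqA i hi) fun (e : i = s) => ⟨e ▸ hs, e ▸ hqs⟩
  rcases m with _ | m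
  · exact ⟨q, hq.mono hs, hq0, fun i hi hi2 => by
      simpa only [or_assoc] using Or.inl (hq_cases i hi (hi2.trans hs))⟩
  have hne (i : ℕ) (hi : i ≤ s) (j : ℕ) (hj : j ≤ m) : q i ≠ p j := by
    rcases Nat.eq_zero_or_pos i with rfl | hi0
    · exact hq0 ▸ h.ne_apply hx (by omega)
    · rcases hq_cases i hi0 hi with hA | ⟨-, hy⟩
      · exact (h.side.anti _ hA _ (apply_mem_image_Icc (Nat.zero_le j) (by omega))).1
      · exact hy ▸ h.ne_apply h.left_mem (by omega)
  have hadj (i : ℕ) (hi : i ≤ s) (j : ℕ) (hj : j ≤ m) : G.Adj (q i) (p j) ↔ i = s ∧ j = 0 := by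
    rcases hi.lt_or_eq with his | rfl
    · refine iff_of_false ?_ fun e => his.ne e.1
      rcases Nat.eq_zero_or_pos i with rfl | hi0
      · exact hq0 ▸ hpx j (by omega)
      · exact (h.side.anti _ (hqA i hi0 his) _
          (apply_mem_image_Icc (Nat.zero_le j) (by omega))).2
    · rw [hqs, h.link.adj_left j (by omega), and_iff_right rfl]
  refine ⟨_, (hq.concat (h.path.mono (by omega)) hne hadj).mono (by omega), by simpa using hq0,
    fun i hi hi2 => ?_⟩
  split_ifs with his
  · simpa only [or_assoc] using Or.inl (hq_cases i hi his)
  · exact Or.inr (Or.inr ⟨i - s - 1, by omega, by omega, rfl⟩)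

theorem exists_leg (h : IsSpine G A I p n y y') (hx : x ∈ I) (hxy : x ≠ y) (hm : m ≤ n + 1)
    (hpx : ∀ i < m, ¬G.Adj x (p i)) :
    ∃ q, IsInducedPath G q (m + 2) ∧ q 0 = x ∧ ∀ i, 0 < i → i ≤ m + 2 → ∀ t ≤ n, i ≤ t + 1 →
      p t ≠ q i ∧ ¬G.Adj (p t) (q i) := by
  obtain ⟨q, hq, hq0, hcases⟩ := h.exists_isInducedPath_to_left hx hxy hm hpx
  refine ⟨q, hq, hq0, fun i hi hi2 t htn hit => ?_⟩
  rcases hcases i hi hi2 with hA | ⟨h2, hy⟩ | ⟨j, hji, hjn, hj⟩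
  · exact h.side.anti.symm _ (apply_mem_image_Icc (Nat.zero_le t) htn) _ hA
  · rw [hy]
    refine ⟨(h.ne_apply h.left_mem htn).symm, fun e => ?_⟩
    have := (h.link.adj_left t htn).1 e.symm
    omega
  · rw [hj]
    refine ⟨fun e => ?_, fun e => ?_⟩
    · have := h.path.inj t j htn hjn e
      omega
    · have := (h.path.adj t j htn hjn).1 e
      omega

theorem containsSpider_of_isContactRange (h : IsSpine G A I p n y y') (hx : x ∈ I)
    (hr : IsContactRange G p n x f l) (hwide : f + 2 ≤ l) (hf : 2 * k ≤ f) (hl : l + k ≤ n) :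
    ContainsSpider G (k + 1) := by
  obtain ⟨q₁, hq₁, hq₁0, hq₁p⟩ := ((h.path.rev f hr.first_le).mono (by omega : k ≤ f)).exists_cons
    (x := x) (fun i _ => h.ne_apply hx (by omega))
    (fun i _ => (hr.adj_iff_eq_first (by omega)).trans (by omega))
  obtain ⟨q₂, hq₂, hq₂0, hq₂p⟩ := (h.path.shift l k hl).exists_cons (x := x)
    (fun i _ => h.ne_apply hx (by omega))
    (fun i _ => (hr.adj_iff_eq_last (by omega) (by omega)).trans (by omega))
  obtain ⟨q₃, hq₃, hq₃0, hq₃p⟩ := h.exists_leg (m := k - 1) hx (h.ne_left hr (by omega))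
    (by omega) fun i _ => hr.not_adj_of_lt (by omega)
  have hleft : q₁ '' Set.Icc 1 (k + 1) ⊆ p '' Set.Icc (f - k) f := by
    rintro _ ⟨_ | i, ⟨hi, hik⟩, rfl⟩
    · omega
    · exact hq₁p i ▸ apply_mem_image_Icc (by omega) (by omega)
  have hright : q₂ '' Set.Icc 1 (k + 1) ⊆ p '' Set.Icc l (l + k) := by
    rintro _ ⟨_ | i, ⟨hi, hik⟩, rfl⟩
    · omega
    · exact hq₂p i ▸ apply_mem_image_Icc (by omega) (by omega)
  have hspine_leg : Anticomplete G (p '' Set.Icc k n) (q₃ '' Set.Icc 1 (k + 1)) := by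
    rintro _ ⟨t, ⟨hkt, htn⟩, rfl⟩ _ ⟨i, ⟨hi, hik⟩, rfl⟩
    exact hq₃p i hi (by omega) t htn (by omega)
  refine containsSpider_of_isInducedPath ![q₁, q₂, q₃]
    (Fin.forall_fin_succ.2 ⟨hq₁, Fin.forall_fin_two.2 ⟨hq₂, hq₃.mono (by omega)⟩⟩)
    (Fin.forall_fin_succ.2 ⟨hq₁0, Fin.forall_fin_two.2 ⟨hq₂0, hq₃0⟩⟩) fun i j hij => ?_
  obtain ⟨rfl, rfl⟩ | ⟨rfl, rfl⟩ | ⟨rfl, rfl⟩ :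
      i = 0 ∧ j = 1 ∨ i = 0 ∧ j = 2 ∨ i = 1 ∧ j = 2 := by omega
  · exact (h.path.anticomplete_image hwide hl).mono hleft hright
  · exact hspine_leg.mono (hleft.trans (Set.image_mono
      (Set.Icc_subset_Icc (by omega) hr.first_le))) subset_rfl
  · exact hspine_leg.mono (hright.trans (Set.image_mono
      (Set.Icc_subset_Icc (by omega) hl))) subset_rfl

end IsSpine

theorem exists_central_interval {α : Type*} {first last : α → ℕ} {a b : ℕ} (k : ℕ) (Z : Finset α)
    (hZ : 2 * k < Z.card) (hwide : ∀ z ∈ Z, first z + 2 ≤ last z) (ha : ∀ z ∈ Z, a ≤ first z)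
    (hb : ∀ z ∈ Z, last z ≤ b)
    (hsep : ∀ u ∈ Z, ∀ v ∈ Z, u ≠ v → first u ≤ first v → last u ≤ first v) :
    ∃ z ∈ Z, a + 2 * k ≤ first z ∧ last z + 2 * k ≤ b := by
  classical
  induction k generalizing Z a b with
  | zero =>
    obtain ⟨z, hz⟩ := Finset.card_pos.1 hZ
    exact ⟨z, hz, ha z hz, hb z hz⟩
  | succ k ih =>
    have hne : Z.Nonempty := Finset.card_pos.1 (by omega)
    obtain ⟨u, hu, hmin⟩ := Z.exists_min_image first hne
    obtain ⟨v, hv, hmax⟩ := Z.exists_max_image first hne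
    have hcard : Z.card ≤ ((Z.erase u).erase v).card + 2 := by
      have := (Z.erase u).pred_card_le_card_erase (a := v)
      have := Z.pred_card_le_card_erase (a := u)
      omega
    have hmem {z : α} (hz : z ∈ (Z.erase u).erase v) : z ≠ v ∧ z ≠ u ∧ z ∈ Z := by
      simpa only [Finset.mem_erase] using hz
    obtain ⟨z, hz, hza, hzb⟩ := ih (a := a + 2) (b := b - 2) ((Z.erase u).erase v) (by omega)
      (fun z hz => hwide z (hmem hz).2.2)
      (fun z hz => by
        have := hsep u hu z (hmem hz).2.2 (hmem hz).2.1.symm (hmin z (hmem hz).2.2)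
        have := hwide u hu
        have := ha u hu
        omega)
      (fun z hz => by
        have := hsep z (hmem hz).2.2 v hv (hmem hz).1 (hmax z (hmem hz).2.2)
        have := hwide v hv
        have := hb v hv
        omega)
      fun z hz w hw => hsep z (hmem hz).2.2 w (hmem hw).2.2
    have := hwide z (hmem hz).2.2
    exact ⟨z, (hmem hz).2.2, by omega, by omega⟩

theorem IsSpine.containsSpider [Finite W] (h : IsSpine G A I p n y y') (hEH : ¬ContainsEvenHole G)
    (hPyr : ¬ContainsPyramid G) (Z : Finset W) (hZI : ∀ z ∈ Z, z ∈ I)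
    (hZ : ∀ z ∈ Z, HasNonadjNeighbors G (p '' Set.Icc 0 n) z) (hcard : 2 * k < Z.card) :
    ContainsSpider G (k + 1) := by
  have hrange (z : W) : ∃ f l, z ∈ Z → IsContactRange G p n z f l ∧ f + 2 ≤ l := by
    by_cases hz : z ∈ Z
    · obtain ⟨f, l, hfl⟩ := (hZ z hz).exists_isContactRange h.path
      exact ⟨f, l, fun _ => hfl⟩
    · exact ⟨0, 0, fun hz' => (hz hz').elim⟩
  choose f l hfl using hrange
  obtain ⟨z, hz, hfz, hlz⟩ := exists_central_interval (a := 0) (b := n) k Z hcard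
    (fun z hz => (hfl z hz).2) (fun _ _ => Nat.zero_le _) (fun z hz => (hfl z hz).1.last_le)
    fun u hu v hv huv hle => h.last_le_first hEH hPyr (hZI u hu) (hZI v hv) huv (hfl u hu).1
      (hfl v hv).1 (hfl u hu).2 (hfl v hv).2 hle
  exact h.containsSpider_of_isContactRange (hZI z hz) (hfl z hz).1 (hfl z hz).2 (by omega)
    (by omega)

theorem IndepBetween.containsSpider [Finite W] {S : Finset W} (h : IndepBetween G A B S)
    (hEH : ¬ContainsEvenHole G) (hPyr : ¬ContainsPyramid G) (hS : 4 * k + 2 < S.card) :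
    ContainsSpider G (k + 1) := by
  classical
  have hne : (S : Set W).Nonempty := Finset.coe_nonempty.2 (Finset.card_pos.1 (by omega))
  obtain ⟨m, a, u, u', -, ha⟩ := h.exists_isSpine hEH hPyr hne
  obtain ⟨n, p, y, y', -, hp⟩ := ha.side.exists_isSpine hEH hPyr hne
  have ha' : IsSpine G (p '' Set.Icc 0 n) S a m u u' :=
    ⟨hp.side.flip, ha.link, ha.left_mem, ha.right_mem⟩
  set ZA := {z ∈ S | HasNonadjNeighbors G (a '' Set.Icc 0 m) z} with hZA
  set ZB := {z ∈ S | HasNonadjNeighbors G (p '' Set.Icc 0 n) z} with hZB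
  have hfew : (S \ (ZA ∪ ZB)).card ≤ 2 := by
    by_contra! hlt
    have hsub : ((S \ (ZA ∪ ZB) : Finset W) : Set W) ⊆ S := Finset.coe_subset.2 Finset.sdiff_subset
    obtain ⟨w, hw, hwide⟩ := (hp.side.mono hsub).exists_hasNonadjNeighbors hEH hPyr
      (by rw [Set.encard_coe_eq_coe_finsetCard]; exact_mod_cast hlt)
    simp only [hZA, hZB, Finset.mem_coe, Finset.mem_sdiff, Finset.mem_union, Finset.mem_filter]
      at hw
    tauto
  have hcover := Finset.card_le_card_sdiff_add_card (s := S) (t := ZA ∪ ZB)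
  have hunion := Finset.card_union_le ZA ZB
  rcases (by omega : 2 * k < ZA.card ∨ 2 * k < ZB.card) with hc | hc
  · exact ha'.containsSpider hEH hPyr ZA (fun z hz => (Finset.mem_filter.1 hz).1)
      (fun z hz => (Finset.mem_filter.1 hz).2) hc
  · exact hp.containsSpider hEH hPyr ZB (fun z hz => (Finset.mem_filter.1 hz).1)
      (fun z hz => (Finset.mem_filter.1 hz).2) hc

end Spiders

section Ramsey

theorem exists_isNClique_or_compl_isNClique (t k : ℕ) :
    ∃ n, ∀ (W : Type) (H : SimpleGraph W) (S : Finset W), n ≤ S.card →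
      (∃ T ⊆ S, H.IsNClique t T) ∨ ∃ T ⊆ S, Hᶜ.IsNClique k T := by
  classical
  induction t generalizing k with
  | zero => exact ⟨0, fun W H S _ => Or.inl ⟨∅, by simp, by simp⟩⟩
  | succ t iht =>
    induction k with
    | zero => exact ⟨0, fun W H S _ => Or.inr ⟨∅, by simp, by simp⟩⟩
    | succ k ihk =>
      obtain ⟨a, ha⟩ := iht (k + 1)
      obtain ⟨b, hb⟩ := ihk
      refine ⟨a + b + 1, fun W H S hS => ?_⟩
      obtain ⟨v, hv⟩ : S.Nonempty := Finset.card_pos.1 (by omega)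
      set N := (S.erase v).filter (H.Adj v)
      set M := (S.erase v).filter (¬H.Adj v ·)
      have hcard : N.card + M.card = S.card - 1 := by
        rw [← Finset.card_erase_of_mem hv]
        exact Finset.card_filter_add_card_filter_not _
      have hNS : N ⊆ S := (Finset.filter_subset _ _).trans (Finset.erase_subset _ _)
      have hMS : M ⊆ S := (Finset.filter_subset _ _).trans (Finset.erase_subset _ _)
      rcases le_or_gt a N.card with hN | hN
      · obtain ⟨T, hT, hclique⟩ | ⟨T, hT, hindep⟩ := ha W H N hN
        · exact Or.inl ⟨insert v T, Finset.insert_subset hv (hT.trans hNS),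
            hclique.insert fun w hw => (Finset.mem_filter.1 (hT hw)).2⟩
        · exact Or.inr ⟨T, hT.trans hNS, hindep⟩
      · obtain ⟨T, hT, hclique⟩ | ⟨T, hT, hindep⟩ := hb W H M (by omega)
        · exact Or.inl ⟨T, hT.trans hMS, hclique⟩
        · refine Or.inr ⟨insert v T, Finset.insert_subset hv (hT.trans hMS),
            hindep.insert fun w hw => ?_⟩
          obtain ⟨hwv, hadj⟩ := Finset.mem_filter.1 (hT hw)
          exact ⟨(Finset.ne_of_mem_erase hwv).symm, hadj⟩

theorem ramseyProp_ramseyNumber (t k : ℕ) : RamseyProp (ramseyNumber t k) t k := by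
  refine Nat.sInf_mem (s := {n | RamseyProp n t k}) ?_
  obtain ⟨n, hn⟩ := exists_isNClique_or_compl_isNClique t k
  exact ⟨n, fun H => (hn (Fin n) H Finset.univ (by simp)).imp
    (fun ⟨T, _, h⟩ => ⟨T, h⟩) fun ⟨T, _, h⟩ => ⟨T, h⟩⟩

theorem ramseyNumber_pos {t k : ℕ} (ht : 1 ≤ t) (hk : 1 ≤ k) : 0 < ramseyNumber t k := by
  by_contra! h
  obtain ⟨T, hT⟩ | ⟨T, hT⟩ := ramseyProp_ramseyNumber t k ⊥ <;>
  · have hcard := hT.card_eq ▸ T.card_le_univ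
    rw [Fintype.card_fin] at hcard
    omega

theorem ramseyNumber_one_le (k : ℕ) : ramseyNumber 1 k ≤ 1 :=
  Nat.sInf_le fun _ => Or.inl ⟨{0}, by simp⟩

theorem max_le_sub_one_mul_ramseyNumber_pow {t k : ℕ} (ht : 1 ≤ t) (hk : 1 ≤ k) :
    max (t - 1) (ramseyNumber t k * (ramseyNumber t k - 1)) ≤ (t - 1) * ramseyNumber t k ^ 3 := by
  have hR := ramseyNumber_pos ht hk
  refine max_le (Nat.le_mul_of_pos_right _ (pow_pos hR 3)) ?_
  obtain rfl | ht := ht.eq_or_lt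
  · simp [Nat.sub_eq_zero_of_le (ramseyNumber_one_le k)]
  · calc ramseyNumber t k * (ramseyNumber t k - 1)
        ≤ ramseyNumber t k * ramseyNumber t k := Nat.mul_le_mul_left _ (Nat.sub_le _ 1)
      _ = 1 * ramseyNumber t k ^ 2 := by ring
      _ ≤ (t - 1) * ramseyNumber t k ^ 3 :=
        Nat.mul_le_mul (by omega) (Nat.pow_le_pow_right hR (by omega))

variable {W : Type} {G : SimpleGraph W} {A B : Set W} {t k : ℕ} {S : Finset W}

theorem exists_isNIndepSet_of_ramseyNumber_le_card (hK : G.CliqueFree t)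
    (hS : ramseyNumber t k ≤ S.card) : ∃ I ⊆ S, G.IsNIndepSet k I := by
  let φ : Fin (ramseyNumber t k) ↪ W :=
    (Fin.castLEEmb hS).trans (S.equivFin.symm.toEmbedding.trans (Function.Embedding.subtype _))
  obtain ⟨T, hT⟩ | ⟨T, hT⟩ := ramseyProp_ramseyNumber t k (G.comap φ)
  · exact (hK (T.map φ) (hT.map.mono (map_comap_le _ _))).elim
  · refine ⟨T.map φ, fun x hx => ?_, ⟨?_, by simpa using hT.card_eq⟩⟩
    · obtain ⟨i, -, rfl⟩ := Finset.mem_map.1 hx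
      exact (S.equivFin.symm (Fin.castLE hS i)).2
    · rw [Finset.coe_map]
      rintro _ ⟨i, hi, rfl⟩ _ ⟨j, hj, rfl⟩ hij
      exact (hT.isClique hi hj (ne_of_apply_ne φ hij)).2

theorem card_lt_ramseyNumber_of_hasNeighborIn [Finite W] (hA : ConnectedOn G A)
    (hB : ConnectedOn G B) (hAB : Anticomplete G A B)
    (hS : ∀ x ∈ S, HasNeighborIn G x A ∧ HasNeighborIn G x B)
    (hEH : ¬ContainsEvenHole G) (hPyr : ¬ContainsPyramid G) (hk : 1 ≤ k) (hK : G.CliqueFree t)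
    (hSp : ¬ContainsSpider G k) : S.card < ramseyNumber t (4 * k - 1) := by
  by_contra! hcard
  obtain ⟨I, hIS, hI⟩ := exists_isNIndepSet_of_ramseyNumber_le_card hK hcard
  have hbetween : IndepBetween G A B I :=
    { connA := hA
      connB := hB
      anti := hAB
      indep := fun x hx y hy e => hI.isIndepSet hx hy e.ne e
      attachA := fun x hx => (hS x (hIS hx)).1
      attachB := fun x hx => (hS x (hIS hx)).2 }
  obtain ⟨k, rfl⟩ := Nat.exists_eq_add_of_le' hk
  exact hSp (hbetween.containsSpider hEH hPyr (by rw [hI.card_eq]; omega))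

end Ramsey

section TreeDecompositions

section Trees

variable {ι κ : Type*} {T : SimpleGraph ι} {T' : SimpleGraph κ} {U A : Set ι} {i j : ι}

theorem ConnectedOn.image (hA : ConnectedOn T A) (f : T →g T') : ConnectedOn T' (f '' A) :=
  hA.map (induceHom f (Set.mapsTo_image f A)) <| by
    rintro ⟨_, a, ha, rfl⟩
    exact ⟨⟨a, ha⟩, rfl⟩

theorem connectedOn_of_walks (hi : i ∈ A)
    (h : ∀ j ∈ A, ∃ p : T.Walk i j, ∀ x ∈ p.support, x ∈ A) : ConnectedOn T A :=
  induce_connected_of_patches i hi fun hj =>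
    let ⟨p, hp⟩ := h _ hj
    ⟨A, subset_rfl, hi, hj, ⟨p.induce A hp⟩⟩

theorem ConnectedOn.exists_isPath (hA : ConnectedOn T A) (hi : i ∈ A) (hj : j ∈ A) :
    ∃ p : T.Walk i j, p.IsPath ∧ ∀ x ∈ p.support, x ∈ A := by
  classical
  obtain ⟨p⟩ := hA.preconnected ⟨i, hi⟩ ⟨j, hj⟩
  let q : T.Walk i j := p.map (Embedding.induce A).toHom
  have hq : ∀ x ∈ q.support, x ∈ A := by
    intro x hx
    obtain ⟨y, -, rfl⟩ := List.mem_map.1 (Walk.support_map _ p ▸ hx)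
    exact y.2
  exact ⟨q.bypass, q.bypass_isPath, fun x hx => hq x (q.support_bypass_subset_support hx)⟩

theorem ConnectedOn.mem_of_mem_support_of_isTree (hA : ConnectedOn T A) (hT : T.IsTree)
    (hi : i ∈ A) (hj : j ∈ A) {p : T.Walk i j} (hp : p.IsPath) {x : ι} (hx : x ∈ p.support) :
    x ∈ A := by
  obtain ⟨q, hq, hqA⟩ := hA.exists_isPath hi hj
  exact hqA x ((hT.existsUnique_path i j).unique hp hq ▸ hx)

theorem ConnectedOn.exists_isPath_inter_eq_endpoint (hU : ConnectedOn T U) (hT : T.IsTree)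
    (i : ι) : ∃ t ∈ U, ∃ p : T.Walk i t, p.IsPath ∧ ∀ x ∈ p.support, x ∈ U → x = t := by
  classical
  obtain ⟨_, ⟨⟨t, htU, rfl⟩, hmin⟩⟩ :=
    exists_minimal_of_wellFoundedLT (· ∈ T.dist i '' U) (hU.nonempty.image _)
  obtain ⟨p, hp, hlen⟩ := hT.connected.exists_path_of_dist i t
  refine ⟨t, htU, p, hp, fun x hx hxU => by_contra fun hne => ?_⟩
  have hshort := Walk.length_takeUntil_lt_length hx hne
  have hdist := dist_le (p.takeUntil x hx)
  have := hmin ⟨x, hxU, rfl⟩ (by omega)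
  omega

theorem ConnectedOn.exists_gate (hU : ConnectedOn T U) (hT : T.IsTree) (i : ι) :
    ∃ t ∈ U, ∀ A, ConnectedOn T A → i ∈ A → (U ∩ A).Nonempty → t ∈ A := by
  obtain ⟨t, htU, p, hp, hpU⟩ := hU.exists_isPath_inter_eq_endpoint hT i
  refine ⟨t, htU, fun A hA hi ⟨j, hjU, hjA⟩ => ?_⟩
  obtain ⟨q, hq, hqU⟩ := hU.exists_isPath htU hjU
  have hpath : (p.append q).IsPath := by
    have hnodup := hq.support_nodup
    rw [← Walk.cons_tail_support, List.nodup_cons] at hnodup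
    rw [Walk.isPath_def, Walk.support_append]
    refine hp.support_nodup.append hnodup.2 fun x hxp hxq => ?_
    exact hnodup.1 (hpU x hxp (hqU x (List.mem_of_mem_tail hxq)) ▸ hxq)
  exact hA.mem_of_mem_support_of_isTree hT hi hjA hpath
    ((Walk.mem_support_append_iff _ _).2 (Or.inl p.end_mem_support))

/-- Two disjoint copies of `T`, joined by an edge between the two copies of the node `i`. -/
def doubleTree (T : SimpleGraph ι) (i : ι) : SimpleGraph (ι ⊕ ι) :=
  (T ⊕g T) ⊔ edge (Sum.inl i) (Sum.inr i)

theorem isTree_doubleTree [Finite ι] (hT : T.IsTree) (i : ι) : (doubleTree T i).IsTree := by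
  rw [isTree_iff_connected_and_card] at hT ⊢
  refine ⟨hT.1.sum_sup_edge hT.1, ?_⟩
  have hsum : Nat.card (T ⊕g T).edgeSet = Nat.card T.edgeSet + Nat.card T.edgeSet := by
    rw [Nat.card_congr edgeSetSumEquiv, Nat.card_sum]
  have hedges : (doubleTree T i).edgeSet
      = insert s(Sum.inl i, Sum.inr i) (T ⊕g T).edgeSet := by
    rw [doubleTree, edgeSet_sup, edgeSet_edge_of_ne (by simp), Set.union_comm, Set.singleton_union]
  have hcard : Nat.card (doubleTree T i).edgeSet = Nat.card (T ⊕g T).edgeSet + 1 := by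
    rw [hedges, Nat.card_coe_set_eq, Nat.card_coe_set_eq, Set.ncard_insert_of_notMem (by simp)]
  rw [hcard, hsum, Nat.card_sum, ← hT.2]
  omega

end Trees

variable {W : Type} {G : SimpleGraph W} {P Q D : Set W}

section Decompositions

variable {ι κ : Type} {T : SimpleGraph ι} {B : ι → Finset W}

theorem isTreeDecomp_iff : IsTreeDecomp G T B ↔ T.IsTree ∧
    (∀ u v, G.Adj u v → ∃ i, u ∈ B i ∧ v ∈ B i) ∧ ∀ v, ConnectedOn T {i | v ∈ B i} := by
  constructor
  · rintro ⟨hT, hcover, hedge, hconvex⟩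
    refine ⟨hT, hedge, fun v => ?_⟩
    obtain ⟨i, hi⟩ := hcover v
    refine connectedOn_of_walks hi fun j hj => ?_
    obtain ⟨p, hp, -⟩ := hT.existsUnique_path i j
    exact ⟨p, hconvex v i j hi hj p hp⟩
  · rintro ⟨hT, hedge, hconn⟩
    exact ⟨hT, fun v => (hconn v).nonempty, hedge, fun v i j hi hj p hp x hx =>
      (hconn v).mem_of_mem_support_of_isTree hT hi hj hp hx⟩

theorem IsTreeDecomp.comap (h : IsTreeDecomp G T B) (e : κ ≃ ι) :
    IsTreeDecomp G (T.comap e) (B ∘ e) := by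
  obtain ⟨hT, hedge, hconn⟩ := isTreeDecomp_iff.1 h
  refine isTreeDecomp_iff.2 ⟨(Iso.comap e T).isTree_iff.2 hT, fun u v huv => ?_, fun v => ?_⟩
  · obtain ⟨i, hi⟩ := hedge u v huv
    exact ⟨e.symm i, by simpa using hi⟩
  · convert (hconn v).image (Iso.comap e T).symm.toHom
    ext i
    exact ⟨fun hi => ⟨e i, hi, e.symm_apply_apply i⟩, by
      rintro ⟨j, hj, rfl⟩
      exact (congrArg (v ∈ B ·) (e.apply_symm_apply j)).mpr hj⟩

theorem isTreeDecomp_univ [Fintype W] (G : SimpleGraph W) :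
    IsTreeDecomp G (⊥ : SimpleGraph (Fin 1)) fun _ => Finset.univ :=
  isTreeDecomp_iff.2 ⟨IsTree.of_subsingleton, fun _ _ _ => ⟨0, by simp⟩, fun v =>
    { preconnected := Preconnected.of_subsingleton, nonempty := ⟨⟨0, by simp⟩⟩ }⟩

theorem IsTreeDecomp.connectedOn_setOf_exists_mem (h : IsTreeDecomp G T B)
    (hD : ConnectedOn G D) : ConnectedOn T {i | ∃ d ∈ D, d ∈ B i} := by
  obtain ⟨-, hedge, hconn⟩ := isTreeDecomp_iff.1 h
  obtain ⟨d, hd⟩ := hD.nonempty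
  obtain ⟨i, hi⟩ := (hconn d).nonempty
  have hreach : ∀ {a j l}, a ∈ D → a ∈ B j → a ∈ B l →
      ∃ p : T.Walk j l, ∀ x ∈ p.support, x ∈ {i | ∃ d ∈ D, d ∈ B i} := fun {a} _ _ ha hj hl =>
    let ⟨p, _, hp⟩ := (hconn a).exists_isPath hj hl
    ⟨p, fun x hx => ⟨a, ha, hp x hx⟩⟩
  have hsub : D ⊆ {e | ∀ j, e ∈ B j →
      ∃ p : T.Walk i j, ∀ x ∈ p.support, x ∈ {i | ∃ d ∈ D, d ∈ B i}} := by
    refine hD.subset_of_closed ⟨d, hd, fun j hj => hreach hd hi hj⟩ fun a ha b hb hab j hj => ?_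
    obtain ⟨l, hal, hbl⟩ := hedge a b hab
    obtain ⟨p, hp⟩ := ha l hal
    obtain ⟨q, hq⟩ := hreach hb hbl hj
    exact ⟨p.append q, fun x hx => ((Walk.mem_support_append_iff _ _).1 hx).elim (hp x) (hq x)⟩
  exact connectedOn_of_walks ⟨d, hd, hi⟩ fun j ⟨e, he, hej⟩ => hsub he j hej

theorem IsTreeDecomp.exists_not_hasNeighborIn (h : IsTreeDecomp G T B) {i : ι}
    (hmax : ∀ j, (B j).card ≤ (B i).card) (hD : ConnectedOn G D) (hDi : ∀ d ∈ D, d ∉ B i) :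
    ∃ x ∈ B i, ¬HasNeighborIn G x D := by
  by_contra! hfull
  obtain ⟨hT, hedge, hconn⟩ := isTreeDecomp_iff.1 h
  obtain ⟨t, ⟨d, hd, hdt⟩, ht⟩ := (h.connectedOn_setOf_exists_mem hD).exists_gate hT i
  have hsub : B i ⊆ B t := fun x hx => by
    obtain ⟨e, he, hxe⟩ := hfull x hx
    obtain ⟨j, hxj, hej⟩ := hedge x e hxe
    exact ht {j | x ∈ B j} (hconn x) hx ⟨j, ⟨e, he, hej⟩, hxj⟩
  have hssub : B i ⊂ B t := (Finset.ssubset_iff_of_subset hsub).2 ⟨d, hdt, hDi d hd⟩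
  exact (hmax t).not_gt (Finset.card_lt_card hssub)

/-- A separation of `G`: two vertex sets that together contain all vertices and all edges. -/
structure IsSeparation (G : SimpleGraph W) (P Q : Set W) : Prop where
  cover : ∀ x, x ∈ P ∨ x ∈ Q
  edge : ∀ x y, G.Adj x y → x ∈ P ∧ y ∈ P ∨ x ∈ Q ∧ y ∈ Q

open Classical in
/-- The bags over `doubleTree` that restrict `B` to `P` on the first copy of the tree and to `Q`
on the second. -/
noncomputable def splitBags (B : ι → Finset W) (P Q : Set W) : ι ⊕ ι → Finset W :=
  Sum.elim (fun i => (B i).filter (· ∈ P)) fun i => (B i).filter (· ∈ Q)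

theorem mem_splitBags_inl {i : ι} {v : W} :
    v ∈ splitBags B P Q (Sum.inl i) ↔ v ∈ B i ∧ v ∈ P := by
  simp [splitBags]

theorem mem_splitBags_inr {i : ι} {v : W} :
    v ∈ splitBags B P Q (Sum.inr i) ↔ v ∈ B i ∧ v ∈ Q := by
  simp [splitBags]

theorem IsTreeDecomp.connectedOn_setOf_mem_splitBags (h : IsTreeDecomp G T B)
    (hPQ : IsSeparation G P Q) {i : ι} (hi : ∀ x ∈ P ∩ Q, x ∈ B i) (v : W) :
    ConnectedOn (doubleTree T i) {j | v ∈ splitBags B P Q j} := by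
  have hconn := (isTreeDecomp_iff.1 h).2.2 v
  have hl : ConnectedOn (doubleTree T i) (Sum.inl '' {j | v ∈ B j}) :=
    hconn.image ((Hom.ofLE le_sup_left).comp Embedding.sumInl.toHom)
  have hr : ConnectedOn (doubleTree T i) (Sum.inr '' {j | v ∈ B j}) :=
    hconn.image ((Hom.ofLE le_sup_left).comp Embedding.sumInr.toHom)
  by_cases hP : v ∈ P <;> by_cases hQ : v ∈ Q
  · have hlr : ConnectedOn (doubleTree T i) (Sum.inl '' {j | v ∈ B j} ∪ Sum.inr '' {j | v ∈ B j}) :=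
      connected_induce_union hl.preconnected hr.preconnected
        (Set.mem_image_of_mem _ (hi v ⟨hP, hQ⟩)) (Set.mem_image_of_mem _ (hi v ⟨hP, hQ⟩))
        (Or.inr (by simp [edge_adj]))
    convert hlr using 1
    ext (j | j) <;> simp [mem_splitBags_inl, mem_splitBags_inr, hP, hQ]
  · convert hl using 1
    ext (j | j) <;> simp [mem_splitBags_inl, mem_splitBags_inr, hP, hQ]
  · convert hr using 1
    ext (j | j) <;> simp [mem_splitBags_inl, mem_splitBags_inr, hP, hQ]
  · exact ((hPQ.cover v).elim hP hQ).elim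

theorem IsTreeDecomp.splitBags [Finite ι] (h : IsTreeDecomp G T B) (hPQ : IsSeparation G P Q)
    {i : ι} (hi : ∀ x ∈ P ∩ Q, x ∈ B i) :
    IsTreeDecomp G (doubleTree T i) (splitBags B P Q) := by
  obtain ⟨hT, hedge, -⟩ := isTreeDecomp_iff.1 h
  refine isTreeDecomp_iff.2 ⟨isTree_doubleTree hT i, fun u v huv => ?_,
    h.connectedOn_setOf_mem_splitBags hPQ hi⟩
  obtain ⟨j, hu, hv⟩ := hedge u v huv
  obtain ⟨huP, hvP⟩ | ⟨huQ, hvQ⟩ := hPQ.edge u v huv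
  · exact ⟨Sum.inl j, mem_splitBags_inl.2 ⟨hu, huP⟩, mem_splitBags_inl.2 ⟨hv, hvP⟩⟩
  · exact ⟨Sum.inr j, mem_splitBags_inr.2 ⟨hu, huQ⟩, mem_splitBags_inr.2 ⟨hv, hvQ⟩⟩

/-- The pairs of vertices that share a bag, that is, the edges and loops of the chordal completion
of `G` defined by a tree decomposition with bags `B`. -/
def bagPairs (B : ι → Finset W) : Set (W × W) := {q | ∃ i, q.1 ∈ B i ∧ q.2 ∈ B i}

theorem bagPairs_comp_equiv (B : ι → Finset W) (e : κ ≃ ι) : bagPairs (B ∘ e) = bagPairs B :=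
  Set.ext fun _ => e.exists_congr_left.trans (by simp [bagPairs])

theorem bagPairs_splitBags_ssubset {u v : W} {i : ι} (hu : u ∈ B i) (hv : v ∈ B i) (huQ : u ∉ Q)
    (hvP : v ∉ P) : bagPairs (splitBags B P Q) ⊂ bagPairs B := by
  refine (Set.ssubset_iff_of_subset ?_).2 ⟨(u, v), ⟨i, hu, hv⟩, ?_⟩
  · rintro q ⟨j | j, h₁, h₂⟩
    · exact ⟨j, (mem_splitBags_inl.1 h₁).1, (mem_splitBags_inl.1 h₂).1⟩
    · exact ⟨j, (mem_splitBags_inr.1 h₁).1, (mem_splitBags_inr.1 h₂).1⟩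
  · rintro ⟨j | j, h₁, h₂⟩
    · exact hvP (mem_splitBags_inl.1 h₂).2
    · exact huQ (mem_splitBags_inr.1 h₁).2

/-- The vertex set `Ω` cannot be split along itself: a separation of `G` whose two sides meet
inside `Ω` has `Ω` on one side. -/
def IsUnsplittable (G : SimpleGraph W) (Ω : Finset W) : Prop :=
  ∀ P Q, IsSeparation G P Q → (∀ x ∈ P ∩ Q, x ∈ Ω) → (∀ x ∈ Ω, x ∈ P) ∨ ∀ x ∈ Ω, x ∈ Q

theorem IsTreeDecomp.exists_bagPairs_ncard_lt [Finite W] {m : ℕ} {T : SimpleGraph (Fin m)}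
    {B : Fin m → Finset W} (h : IsTreeDecomp G T B) {i : Fin m} (hi : ¬IsUnsplittable G (B i)) :
    ∃ (n : ℕ) (T' : SimpleGraph (Fin n)) (B' : Fin n → Finset W),
      IsTreeDecomp G T' B' ∧ (bagPairs B').ncard < (bagPairs B).ncard := by
  rw [IsUnsplittable] at hi
  push Not at hi
  obtain ⟨P, Q, hPQ, hPQi, ⟨v, hv, hvP⟩, u, hu, huQ⟩ := hi
  let e := (Fintype.equivFin (Fin m ⊕ Fin m)).symm
  refine ⟨_, _, _, (h.splitBags hPQ hPQi).comap e, ?_⟩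
  rw [bagPairs_comp_equiv]
  exact Set.ncard_lt_ncard (bagPairs_splitBags_ssubset hu hv huQ hvP)

theorem IsTreeDecomp.exists_isUnsplittable [Finite W] {m : ℕ} {T : SimpleGraph (Fin m)}
    {B : Fin m → Finset W} (h : IsTreeDecomp G T B) :
    ∃ (n : ℕ) (T' : SimpleGraph (Fin n)) (B' : Fin n → Finset W),
      IsTreeDecomp G T' B' ∧ ∀ i, IsUnsplittable G (B' i) := by
  induction hn : (bagPairs B).ncard using Nat.strong_induction_on generalizing m T B with
  | _ n ih =>
    by_cases hB : ∀ i, IsUnsplittable G (B i)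
    · exact ⟨m, T, B, h, hB⟩
    · push Not at hB
      obtain ⟨i, hi⟩ := hB
      obtain ⟨m', T', B', h', hlt⟩ := h.exists_bagPairs_ncard_lt hi
      exact ih _ (hn ▸ hlt) h' rfl

theorem exists_isTreeDecomp_isUnsplittable [Finite W] (G : SimpleGraph W) :
    ∃ (m : ℕ) (T : SimpleGraph (Fin m)) (B : Fin m → Finset W),
      IsTreeDecomp G T B ∧ ∀ i, IsUnsplittable G (B i) :=
  have := Fintype.ofFinite W
  (isTreeDecomp_univ G).exists_isUnsplittable

end Decompositions

end TreeDecompositions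

section Bags

/-- `D` is the vertex set of a connected component of `G ∖ Ω`. -/
structure IsComponentOff {W : Type*} (G : SimpleGraph W) (Ω : Finset W) (D : Set W) : Prop where
  conn : ConnectedOn G D
  notMem : ∀ d ∈ D, d ∉ Ω
  closed : ∀ d ∈ D, ∀ x, x ∉ Ω → G.Adj d x → x ∈ D

/-- The components of `G ∖ Ω` that both `u` and `v` attach to. -/
def commonComponents {W : Type*} (G : SimpleGraph W) (Ω : Finset W) (u v : W) : Set (Set W) :=
  {D | IsComponentOff G Ω D ∧ HasNeighborIn G u D ∧ HasNeighborIn G v D}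

/-- The vertex `x` together with the components of `G ∖ Ω` that it attaches to, except those
in `F`. -/
def componentStar {W : Type*} (G : SimpleGraph W) (Ω : Finset W) (F : Set (Set W)) (x : W) :
    Set W :=
  insert x (⋃₀ {D | D ∉ F ∧ IsComponentOff G Ω D ∧ HasNeighborIn G x D})

/-- The finset `S` hits all components of `G ∖ Ω` that both `u` and `v` attach to, and contains the
vertices of `Ω` that attach to none of them. -/
structure IsHittingSet {W : Type*} (G : SimpleGraph W) (Ω S : Finset W) (u v : W) : Prop where
  hits : ∀ D ∈ commonComponents G Ω u v, ∃ s ∈ S, s ∈ D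
  mem_or : ∀ x ∈ Ω, x ∈ S ∨ ∃ D ∈ commonComponents G Ω u v, HasNeighborIn G x D

section Components

variable {W : Type*} {G : SimpleGraph W} {Ω S : Finset W} {D E A B : Set W} {F : Set (Set W)}
  {u v x y : W}

theorem exists_isComponentOff_mem [Finite W] (hx : x ∉ Ω) :
    ∃ D, IsComponentOff G Ω D ∧ x ∈ D := by
  obtain ⟨D, hxD, hD, hconn, hclosed⟩ :=
    (connectedOn_singleton (G := G) x).exists_component_superset (X := {y | y ∉ Ω})
      (Set.singleton_subset_iff.2 hx)
  exact ⟨D, ⟨hconn, fun d hd => hD hd, hclosed⟩, hxD rfl⟩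

theorem IsComponentOff.subset_of_mem (hD : IsComponentOff G Ω D) (hE : IsComponentOff G Ω E)
    (hxD : x ∈ D) (hxE : x ∈ E) : D ⊆ E :=
  hD.conn.subset_of_closed ⟨x, hxD, hxE⟩ fun a ha b hb => hE.closed a ha b (hD.notMem b hb)

theorem IsComponentOff.eq_of_mem (hD : IsComponentOff G Ω D) (hE : IsComponentOff G Ω E)
    (hxD : x ∈ D) (hxE : x ∈ E) : D = E :=
  (hD.subset_of_mem hE hxD hxE).antisymm (hE.subset_of_mem hD hxE hxD)

theorem IsComponentOff.anticomplete (hD : IsComponentOff G Ω D) (hE : IsComponentOff G Ω E)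
    (hne : D ≠ E) : Anticomplete G D E := by
  refine fun x hx y hy => ⟨?_, fun e => ?_⟩
  · rintro rfl
    exact hne (hD.eq_of_mem hE hx hy)
  · exact hne (hD.eq_of_mem hE (hD.closed x hx y (hE.notMem y hy) e) hy)

theorem mem_componentStar_self : x ∈ componentStar G Ω F x := Set.mem_insert _ _

theorem connectedOn_componentStar : ConnectedOn G (componentStar G Ω F x) :=
  connectedOn_insert_sUnion fun _ hD => ⟨hD.2.1.conn, hD.2.2⟩

theorem IsComponentOff.anticomplete_componentStar (hD : IsComponentOff G Ω D) (hx : x ∈ Ω)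
    (hxD : ¬HasNeighborIn G x D) : Anticomplete G D (componentStar G Ω F x) := by
  rintro d hd y (rfl | ⟨E, ⟨-, hE, hxE⟩, hy⟩)
  · exact ⟨fun e => hD.notMem d hd (e ▸ hx), fun e => hxD ⟨d, hd, e.symm⟩⟩
  · exact hD.anticomplete hE (fun e => hxD (e ▸ hxE)) d hd y hy

theorem anticomplete_componentStar (hu : u ∈ Ω) (hv : v ∈ Ω) (huv : u ≠ v)
    (hadj : ¬G.Adj u v) : Anticomplete G (componentStar G Ω (commonComponents G Ω u v) u)
      (componentStar G Ω (commonComponents G Ω u v) v) := by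
  rintro x (rfl | ⟨D, ⟨hDF, hD, huD⟩, hx⟩) y hy
  · obtain rfl | ⟨E, ⟨hEF, hE, hvE⟩, hy⟩ := hy
    · exact ⟨huv, hadj⟩
    · exact ⟨fun e => hE.notMem y hy (e ▸ hu), fun e => hEF ⟨hE, ⟨y, hy, e⟩, hvE⟩⟩
  · exact hD.anticomplete_componentStar hv (fun hvD => hDF ⟨hD, huD, hvD⟩) x hx y hy

theorem ConnectedOn.exists_maximal_anticomplete [Finite W] (hB : ConnectedOn G B)
    (hAB : Anticomplete G A B) :
    ∃ C, B ⊆ C ∧ ConnectedOn G C ∧ Anticomplete G A C ∧ ∀ X, ConnectedOn G X → (X ∩ C).Nonempty →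
      ¬X ⊆ C → ∃ x ∈ X, x ∉ C ∧ HasNeighborIn G x A ∧ HasNeighborIn G x C := by
  obtain ⟨C, hBC, hCA, hC, hclosed⟩ := hB.exists_component_superset
    (X := {y | ∀ x ∈ A, x ≠ y ∧ ¬G.Adj x y}) fun y hy x hx => hAB x hx y hy
  have hAC : Anticomplete G A C := fun x hx y hy => hCA hy x hx
  refine ⟨C, hBC, hC, hAC, fun X hX hXC hsub => ?_⟩
  obtain ⟨c, -, hc, b, hb, hbC, e⟩ := hX.exists_boundary_adj hXC hsub
  refine ⟨b, hb, hbC, ?_, c, hc, e.symm⟩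
  by_contra hbA
  refine hbC (hclosed c hc b (fun x hx => ⟨?_, fun e' => hbA ⟨x, hx, e'.symm⟩⟩) e)
  rintro rfl
  exact hAC.not_hasNeighborIn hx ⟨c, hc, e.symm⟩

theorem IsHittingSet.card_le {r : ℕ} (h : IsHittingSet G Ω S u v)
    (hr : ∀ D, IsComponentOff G Ω D → ∀ T ⊆ Ω, (∀ y ∈ T, HasNeighborIn G y D) → T.card ≤ r) :
    Ω.card ≤ S.card + S.card * r := by
  classical
  let N (s : W) : Finset W :=
    Ω.filter fun x => ∃ D, IsComponentOff G Ω D ∧ s ∈ D ∧ HasNeighborIn G x D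
  have hN : ∀ s ∈ S, (N s).card ≤ r := by
    intro s _
    obtain hempty | ⟨z, hz⟩ := (N s).eq_empty_or_nonempty
    · simp [hempty]
    obtain ⟨D, hD, hsD, -⟩ := (Finset.mem_filter.1 hz).2
    refine hr D hD _ (Finset.filter_subset _ _) fun y hy => ?_
    obtain ⟨E, hE, hsE, hyE⟩ := (Finset.mem_filter.1 hy).2
    exact hD.eq_of_mem hE hsD hsE ▸ hyE
  have hcover : Ω ⊆ S ∪ S.biUnion N := by
    intro x hx
    refine Finset.mem_union.2 ((h.mem_or x hx).imp_right ?_)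
    rintro ⟨D, hD, hxD⟩
    obtain ⟨s, hs, hsD⟩ := h.hits D hD
    exact Finset.mem_biUnion.2 ⟨s, hs, Finset.mem_filter.2 ⟨hx, D, hD.1, hsD, hxD⟩⟩
  calc Ω.card ≤ (S ∪ S.biUnion N).card := Finset.card_le_card hcover
    _ ≤ S.card + (S.biUnion N).card := Finset.card_union_le _ _
    _ ≤ S.card + S.card * r := by gcongr; exact Finset.card_biUnion_le_card_mul _ _ _ hN

end Components

section Unsplittable

variable {W : Type} [Finite W] {G : SimpleGraph W} {Ω S : Finset W} {D : Set W}
  {F : Set (Set W)} {u v x y : W} {k t : ℕ}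

theorem IsUnsplittable.commonComponents_nonempty (h : IsUnsplittable G Ω) (hu : u ∈ Ω)
    (hv : v ∈ Ω) (huv : u ≠ v) (hadj : ¬G.Adj u v) : (commonComponents G Ω u v).Nonempty := by
  by_contra hempty
  have hno : ∀ D, IsComponentOff G Ω D → HasNeighborIn G v D → ¬HasNeighborIn G u D :=
    fun D hD hvD huD => hempty ⟨D, hD, huD, hvD⟩
  let Z : Set W := componentStar G Ω ∅ v
  have huZ : u ∉ Z := by
    rintro (rfl | ⟨D, ⟨-, hD, -⟩, huD⟩)
    exacts [huv rfl, hD.notMem u huD hu]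
  have hZu : ∀ x ∈ Z, ¬G.Adj x u := by
    rintro x (rfl | ⟨D, ⟨-, hD, hvD⟩, hx⟩) e
    exacts [hadj e.symm, hno D hD hvD ⟨x, hx, e.symm⟩]
  have hclosed : ∀ x ∈ Z, ∀ y, G.Adj x y → y ∈ Ω ∨ y ∈ Z := by
    refine fun x hx y e => or_iff_not_imp_left.2 fun hy => ?_
    obtain ⟨D, hD, hyD⟩ := exists_isComponentOff_mem (G := G) hy
    obtain rfl | ⟨E, hE, hxE⟩ := hx
    · exact Or.inr ⟨D, ⟨by simp, hD, y, hyD, e⟩, hyD⟩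
    · exact Or.inr ⟨E, hE, hE.2.1.closed x hxE y hy e⟩
  have hsep : IsSeparation G Zᶜ {x | x ≠ u ∧ (x ∈ Ω ∨ x ∈ Z)} := by
    have hne : ∀ x ∈ Z, x ≠ u := fun x hx e => huZ (e ▸ hx)
    refine ⟨fun x => ?_, fun x y e => ?_⟩
    · by_cases hx : x ∈ Z
      · exact Or.inr ⟨hne x hx, Or.inr hx⟩
      · exact Or.inl hx
    · by_cases hx : x ∈ Z
      · exact Or.inr ⟨⟨hne x hx, Or.inr hx⟩, fun hy => hZu x hx (hy ▸ e), hclosed x hx y e⟩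
      by_cases hy : y ∈ Z
      · exact Or.inr ⟨⟨fun hx => hZu y hy (hx ▸ e.symm), hclosed y hy x e.symm⟩,
          hne y hy, Or.inr hy⟩
      · exact Or.inl ⟨hx, hy⟩
  obtain hΩ | hΩ := h _ _ hsep fun x ⟨hxZ, hx⟩ => hx.2.resolve_right hxZ
  · exact hΩ v hv mem_componentStar_self
  · exact (hΩ u hu).1 rfl

theorem IsUnsplittable.hasNeighborIn_componentStar (h : IsUnsplittable G Ω) (hx : x ∈ Ω)
    (hy : y ∈ Ω) (hxy : x ≠ y) (hF : ∀ D ∈ F, ¬HasNeighborIn G y D) :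
    HasNeighborIn G y (componentStar G Ω F x) := by
  by_cases hadj : G.Adj x y
  · exact ⟨x, mem_componentStar_self, hadj.symm⟩
  · obtain ⟨D, hD, hxD, hyD⟩ := h.commonComponents_nonempty hx hy hxy hadj
    exact hyD.mono fun d hd => Or.inr ⟨D, ⟨fun hDF => hF D hDF hyD, hD, hxD⟩, hd⟩

theorem IsUnsplittable.card_lt_ramseyNumber (h : IsUnsplittable G Ω)
    (hD : IsComponentOff G Ω D) (hfull : ∃ x ∈ Ω, ¬HasNeighborIn G x D) (hSΩ : S ⊆ Ω)
    (hSD : ∀ y ∈ S, HasNeighborIn G y D) (hEH : ¬ContainsEvenHole G) (hPyr : ¬ContainsPyramid G)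
    (hk : 1 ≤ k) (hK : G.CliqueFree t) (hSp : ¬ContainsSpider G k) :
    S.card < ramseyNumber t (4 * k - 1) := by
  obtain ⟨x, hx, hxD⟩ := hfull
  refine card_lt_ramseyNumber_of_hasNeighborIn hD.conn
    (connectedOn_componentStar (Ω := Ω) (F := ∅) (x := x)) (hD.anticomplete_componentStar hx hxD)
    (fun y hy => ⟨hSD y hy, ?_⟩) hEH hPyr hk hK hSp
  exact h.hasNeighborIn_componentStar hx (hSΩ hy) (fun e => hxD (e ▸ hSD y hy)) (by simp)

theorem IsUnsplittable.exists_isHittingSet (h : IsUnsplittable G Ω) (hu : u ∈ Ω) (hv : v ∈ Ω)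
    (huv : u ≠ v) (hadj : ¬G.Adj u v) (hEH : ¬ContainsEvenHole G) (hPyr : ¬ContainsPyramid G)
    (hk : 1 ≤ k) (hK : G.CliqueFree t) (hSp : ¬ContainsSpider G k) :
    ∃ S, IsHittingSet G Ω S u v ∧ S.card < ramseyNumber t (4 * k - 1) := by
  set F := commonComponents G Ω u v
  set A := componentStar G Ω F u
  have hA : ConnectedOn G A := connectedOn_componentStar
  obtain ⟨C, hBC, hC, hAC, hboundary⟩ := ConnectedOn.exists_maximal_anticomplete
    connectedOn_componentStar (anticomplete_componentStar hu hv huv hadj)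
  have hvC : v ∈ C := hBC mem_componentStar_self
  let S := (Set.toFinite {x | HasNeighborIn G x A ∧ HasNeighborIn G x C}).toFinset
  refine ⟨S, ⟨fun D hD => ?_, fun x hx => or_iff_not_imp_right.2 fun hxF => ?_⟩,
    card_lt_ramseyNumber_of_hasNeighborIn hA hC hAC (by simp [S]) hEH hPyr hk hK hSp⟩
  · obtain ⟨hDΩ, ⟨d, hd, e⟩, hvD⟩ := hD
    have hdC : d ∉ C := fun hdC => (hAC u mem_componentStar_self d hdC).2 e
    obtain ⟨b, hb | hb, hbC, hbAC⟩ := hboundary _ (hDΩ.conn.insert hvD) ⟨v, Or.inl rfl, hvC⟩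
      fun hsub => hdC (hsub (Or.inr hd))
    · exact (hbC (hb ▸ hvC)).elim
    · exact ⟨b, by simpa [S] using hbAC, hb⟩
  · push Not at hxF
    obtain ⟨D, hD⟩ := h.commonComponents_nonempty hu hv huv hadj
    have hxu : u ≠ x := fun e => hxF D hD (e ▸ hD.2.1)
    have hxv : v ≠ x := fun e => hxF D hD (e ▸ hD.2.2)
    simp only [S, Set.Finite.mem_toFinset]
    exact ⟨h.hasNeighborIn_componentStar hu hx hxu hxF,
      (h.hasNeighborIn_componentStar hv hx hxv hxF).mono hBC⟩

theorem IsUnsplittable.card_le (h : IsUnsplittable G Ω)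
    (hfull : ∀ D, IsComponentOff G Ω D → ∃ x ∈ Ω, ¬HasNeighborIn G x D)
    (hEH : ¬ContainsEvenHole G) (hPyr : ¬ContainsPyramid G)
    (hk : 1 ≤ k) (hK : G.CliqueFree t) (hSp : ¬ContainsSpider G k) :
    Ω.card ≤ max (t - 1) (ramseyNumber t (4 * k - 1) * (ramseyNumber t (4 * k - 1) - 1)) := by
  by_cases hclique : G.IsClique Ω
  · refine le_max_of_le_left (Nat.le_sub_one_of_lt ?_)
    by_contra! hle
    exact hK.mono hle Ω ⟨hclique, rfl⟩
  obtain ⟨u, hu, v, hv, huv, hadj⟩ : ∃ u ∈ Ω, ∃ v ∈ Ω, u ≠ v ∧ ¬G.Adj u v := by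
    simpa [isClique_iff, Set.Pairwise] using hclique
  obtain ⟨S, hS, hcard⟩ := h.exists_isHittingSet hu hv huv hadj hEH hPyr hk hK hSp
  have hΩ := hS.card_le (r := ramseyNumber t (4 * k - 1) - 1) fun D hD T hT hTD =>
    Nat.le_sub_one_of_lt (h.card_lt_ramseyNumber hD (hfull D hD) hT hTD hEH hPyr hk hK hSp)
  obtain ⟨r, hr⟩ : ∃ r, ramseyNumber t (4 * k - 1) = r + 1 := Nat.exists_eq_add_of_le' (by omega)
  rw [hr, Nat.add_sub_cancel] at hΩ ⊢
  refine le_max_of_le_right ?_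
  calc Ω.card ≤ S.card + S.card * r := hΩ
    _ ≤ r + r * r := by gcongr <;> omega
    _ = (r + 1) * r := by ring

end Unsplittable

end Bags

theorem statement15_general {W : Type} [Finite W] (G : SimpleGraph W) (k t : ℕ) (hk : 1 ≤ k)
    (hEH : ¬ContainsEvenHole G) (hPyr : ¬ContainsPyramid G)
    (hK : G.CliqueFree t) (hS : ¬ContainsSpider G k) :
    treewidth G ≤
      max (t - 1) (ramseyNumber t (4 * k - 1) * (ramseyNumber t (4 * k - 1) - 1)) - 1 := by
  obtain ⟨m, T, B, hTD, hB⟩ := exists_isTreeDecomp_isUnsplittable G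
  refine Nat.sInf_le ⟨m, T, B, hTD, fun i => ?_⟩
  have : Nonempty (Fin m) := ⟨i⟩
  obtain ⟨i₀, hmax⟩ := Finite.exists_max fun i => (B i).card
  have hcard := (hB i₀).card_le
    (fun D hD => hTD.exists_not_hasNeighborIn hmax hD.conn hD.notMem) hEH hPyr hk hK hS
  have := hmax i
  omega

/-- For `k ≥ 1` and `t ≥ 1`, every (even hole, pyramid, `K_t`,
`S_{k,k,k}`)-free graph has treewidth at most `(t-1)·R(t, 4k-1)³ - 1`. -/
theorem statement15 (G : SimpleGraph V) (k t : ℕ) (hk : 1 ≤ k) (ht : 1 ≤ t)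
    (hEH : ¬ContainsEvenHole G) (hPyr : ¬ContainsPyramid G)
    (hK : G.CliqueFree t) (hS : ¬ContainsSpider G k) :
    treewidth G ≤ (t - 1) * (ramseyNumber t (4 * k - 1)) ^ 3 - 1 :=
  (statement15_general G k t hk hEH hPyr hK hS).trans
    (Nat.sub_le_sub_right (max_le_sub_one_mul_ramseyNumber_pow ht (by omega)) 1)
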